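/- Let k ∈ ℤ with k ≠ 1 and k ≠ −1, and let f = x² − 2kx + k ∈ ℤ[x]. Then for every a₀ ∈ ℤ, the natural density of the set P(f, a₀) of prime divisors of the orbit of a₀ under f exists and equals 0. -/

import Mathlib

open Polynomial Filter

/-- The `n`-th iterate of a polynomial, with `f^0 = X`. -/
noncomputable def polyIter (f : Polynomial ℤ) : ℕ → Polynomial ℤ
  | 0 => X
  | n + 1 => f.comp (polyIter f n)

open scoped Classical in
/-- The number of elements of `S` that are at most `x`. -/
noncomputable def primeCount (S : Set ℕ) (x : ℕ) : ℕ :=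
  ((Finset.range (x + 1)).filter (fun p => p ∈ S)).card

/-- A set `S` of primes has natural density zero:
`lim_{x → ∞} #{p ∈ S : p ≤ x} / #{p prime : p ≤ x}` exists and equals `0`. -/
def HasPrimeDensityZero (S : Set ℕ) : Prop :=
  Tendsto (fun x : ℕ => (primeCount S x : ℝ) / (primeCount {p | p.Prime} x : ℝ))
    atTop (nhds 0)

/-- `P(f, a₀)`: the set of primes dividing some nonzero term of the orbit of `a₀` under `f`. -/
def orbitPrimes (f : Polynomial ℤ) (a₀ : ℤ) : Set ℕ :=
  {p | p.Prime ∧ ∃ n : ℕ, (fun x => Polynomial.eval x f)^[n] a₀ ≠ 0 ∧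
    (p : ℤ) ∣ (fun x => Polynomial.eval x f)^[n] a₀}



open Finset in
/-- Abstract Selberg sieve in orthogonal form. -/
theorem selberg_identity {ι : Type*} [DecidableEq ι] (N : ι → ℝ) (hN : ∀ i, 2 ≤ N i)
    (D₁ D₂ : Finset ι) :
    1 / (∏ i ∈ D₁ ∪ D₂, N i) =
      (∑ E ∈ (D₁ ∩ D₂).powerset, ∏ i ∈ E, (N i - 1)) / ((∏ i ∈ D₁, N i) * (∏ i ∈ D₂, N i)) := by
  have h0 : ∀ D : Finset ι, (∏ i ∈ D, N i) ≠ 0 := fun D =>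
    Finset.prod_ne_zero_iff.2 fun i _ => by have := hN i; linarith
  have h1 : ∑ E ∈ (D₁ ∩ D₂).powerset, ∏ i ∈ E, (N i - 1) = ∏ i ∈ D₁ ∩ D₂, N i := by
    rw [← Finset.prod_one_add]
    exact Finset.prod_congr rfl fun i _ => by ring
  rw [h1, ← Finset.prod_union_inter, div_eq_div_iff (h0 _) (mul_ne_zero (h0 _) (h0 _))]
  ring

open Finset in
theorem selberg_diag {ι : Type*} [DecidableEq ι] (N : ι → ℝ) (hN : ∀ i, 2 ≤ N i)
    (𝒟 : Finset (Finset ι)) (hdown : ∀ D ∈ 𝒟, ∀ E ⊆ D, E ∈ 𝒟) (l : Finset ι → ℝ) :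
    ∑ D₁ ∈ 𝒟, ∑ D₂ ∈ 𝒟, l D₁ * l D₂ * (1 / (∏ i ∈ D₁ ∪ D₂, N i)) =
      ∑ E ∈ 𝒟, (∏ i ∈ E, (N i - 1)) * (∑ D ∈ 𝒟 with E ⊆ D, l D / ∏ i ∈ D, N i) ^ 2 := by
  have key : ∀ D₁ ∈ 𝒟, ∀ D₂ ∈ 𝒟, l D₁ * l D₂ * (1 / (∏ i ∈ D₁ ∪ D₂, N i)) =
      ∑ E ∈ 𝒟, (∏ i ∈ E, (N i - 1)) *
        ((if E ⊆ D₁ then l D₁ / ∏ i ∈ D₁, N i else 0) *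
         (if E ⊆ D₂ then l D₂ / ∏ i ∈ D₂, N i else 0)) := by
    intro D₁ h₁ D₂ h₂
    rw [selberg_identity N hN]
    have : (D₁ ∩ D₂).powerset = 𝒟.filter (fun E => E ⊆ D₁ ∧ E ⊆ D₂) := by
      ext E
      simp only [mem_powerset, mem_filter, subset_inter_iff]
      exact ⟨fun h => ⟨hdown _ h₁ _ h.1, h⟩, fun h => h.2⟩
    rw [this, Finset.sum_filter, Finset.sum_div, Finset.mul_sum]
    refine Finset.sum_congr rfl fun E _ => ?_
    by_cases a : E ⊆ D₁ <;> by_cases b : E ⊆ D₂ <;> simp [a, b]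
    ring
  rw [Finset.sum_congr rfl fun D₁ h₁ => Finset.sum_congr rfl fun D₂ h₂ => key D₁ h₁ D₂ h₂]
  rw [Finset.sum_congr rfl fun D₁ _ => Finset.sum_comm]
  rw [Finset.sum_comm]
  refine Finset.sum_congr rfl fun E _ => ?_
  rw [sq, Finset.sum_filter, Finset.sum_mul_sum, Finset.mul_sum]
  refine Finset.sum_congr rfl fun D₁ _ => ?_
  rw [Finset.mul_sum]

open Finset in
theorem alt_sum_between {ι : Type*} [DecidableEq ι] (E F : Finset ι) (h : E ⊆ F) :
    ∑ D ∈ F.powerset with E ⊆ D, (-1 : ℝ) ^ D.card = if E = F then (-1 : ℝ) ^ E.card else 0 := by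
  have h1 : F.powerset.filter (fun D => E ⊆ D) = (F \ E).powerset.image (fun D => E ∪ D) := by
    ext D
    simp only [mem_filter, mem_powerset, mem_image]
    constructor
    · rintro ⟨a, b⟩
      exact ⟨D \ E, sdiff_subset_sdiff a le_rfl, by simp [b]⟩
    · rintro ⟨D', a, rfl⟩
      exact ⟨union_subset h (a.trans sdiff_subset), subset_union_left⟩
  rw [h1, Finset.sum_image]
  · have : ∀ D ∈ (F \ E).powerset, (-1 : ℝ) ^ (E ∪ D).card = (-1) ^ E.card * (-1) ^ D.card := by
      intro D hD
      rw [card_union_of_disjoint, pow_add]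
      exact (disjoint_sdiff.mono_right (mem_powerset.1 hD))
    rw [Finset.sum_congr rfl this, ← Finset.mul_sum]
    have := Finset.sum_powerset_neg_one_pow_card (x := F \ E)
    have h2 : ∑ D ∈ (F \ E).powerset, (-1 : ℝ) ^ D.card = if F \ E = ∅ then 1 else 0 := by
      have := congrArg (Int.cast : ℤ → ℝ) this
      push_cast at this
      rw [this]
    rw [h2]
    by_cases hE : E = F
    · simp [hE]
    · have : F \ E ≠ ∅ := fun h' => hE (h.antisymm (sdiff_eq_empty_iff_subset.1 h'))
      rw [if_neg this, if_neg hE, mul_zero]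
  · intro a ha b hb hab
    have e1 : ∀ D ∈ (F \ E).powerset, (E ∪ D) \ E = D := by
      intro D hD
      rw [union_sdiff_left]
      exact sdiff_eq_self_of_disjoint (disjoint_sdiff.mono_right (mem_powerset.1 hD)).symm
    rw [← e1 a ha, ← e1 b hb]
    exact congrArg (· \ E) hab

open Finset in
theorem selberg_sieve {ι μ : Type*} [DecidableEq ι] (N : ι → ℝ) (hN : ∀ i, 2 ≤ N i)
    (𝒟 : Finset (Finset ι)) (hdown : ∀ D ∈ 𝒟, ∀ E ⊆ D, E ∈ 𝒟)
    (M : Finset μ) (T : μ → Finset ι) (V θ : ℝ) (hV : 0 ≤ V) (hθ : 0 ≤ θ)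
    (hcount : ∀ D₁ ∈ 𝒟, ∀ D₂ ∈ 𝒟,
      |((M.filter (fun m => D₁ ∪ D₂ ⊆ T m)).card : ℝ) - V / ∏ i ∈ D₁ ∪ D₂, N i| ≤
        θ * (V / ∏ i ∈ D₁ ∪ D₂, N i))
    (G : ℝ) (hG : G = ∑ E ∈ 𝒟, 1 / ∏ i ∈ E, (N i - 1)) :
    ((M.filter (fun m => ∀ D ∈ 𝒟, D ⊆ T m → D = ∅)).card : ℝ) * G ^ 2 ≤ V * (G + θ * G ^ 5) := by
  classical
  set φ : Finset ι → ℝ := fun E => ∏ i ∈ E, (N i - 1) with hφ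
  set P : Finset ι → ℝ := fun E => ∏ i ∈ E, N i with hP
  have φpos : ∀ E, 0 < φ E := fun E => Finset.prod_pos fun i _ => by have := hN i; linarith
  have Ppos : ∀ E, 0 < P E := fun E => Finset.prod_pos fun i _ => by have := hN i; linarith
  have hG0 : 0 ≤ G := by rw [hG]; exact Finset.sum_nonneg fun E _ => (one_div_pos.2 (φpos E)).le
  set S : Finset ι → ℝ := fun D => ∑ E ∈ 𝒟 with D ⊆ E, 1 / φ E with hS
  have S0 : ∀ D, 0 ≤ S D := fun D => Finset.sum_nonneg fun E _ => (one_div_pos.2 (φpos E)).le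
  have S_le : ∀ D, S D ≤ G / φ D := by
    intro D
    have h1 : S D = ∑ E ∈ 𝒟 with D ⊆ E, (1 / φ D) * (1 / φ (E \ D)) := by
      refine Finset.sum_congr rfl fun E hE => ?_
      have hDE := (mem_filter.1 hE).2
      have : φ E = φ (E \ D) * φ D := (Finset.prod_sdiff hDE).symm
      rw [this]
      field_simp
    rw [h1, ← Finset.mul_sum, mul_comm, div_eq_mul_one_div G]
    refine mul_le_mul_of_nonneg_right ?_ (one_div_pos.2 (φpos D)).le
    rw [← Finset.sum_image (f := fun F => 1 / φ F) (g := fun E => E \ D), hG]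
    · refine Finset.sum_le_sum_of_subset_of_nonneg ?_ fun E _ _ => (one_div_pos.2 (φpos E)).le
      intro F hF
      obtain ⟨E, hE, rfl⟩ := mem_image.1 hF
      exact hdown E (mem_filter.1 hE).1 _ sdiff_subset
    · intro a ha b hb hab
      have ha' := (mem_filter.1 (mem_coe.1 ha)).2
      have hb' := (mem_filter.1 (mem_coe.1 hb)).2
      rw [← sdiff_union_of_subset ha', ← sdiff_union_of_subset hb']
      exact congrArg (· ∪ D) hab
  set l : Finset ι → ℝ := fun D => (-1) ^ D.card * P D * S D with hl
  have labs : ∀ D, |l D| = P D * S D := by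
    intro D
    rw [hl]; simp only [abs_mul, abs_pow, abs_neg, abs_one, one_pow, one_mul]
    rw [abs_of_pos (Ppos D), abs_of_nonneg (S0 D)]
  -- the quadratic form
  set g : μ → ℝ := fun m => ∑ D ∈ 𝒟, if D ⊆ T m then l D else 0 with hg
  have hsum : ∑ m ∈ M, g m ^ 2 = ∑ D₁ ∈ 𝒟, ∑ D₂ ∈ 𝒟, l D₁ * l D₂ *
      ((M.filter (fun m => D₁ ∪ D₂ ⊆ T m)).card : ℝ) := by
    have h1 : ∀ m, g m ^ 2 = ∑ D₁ ∈ 𝒟, ∑ D₂ ∈ 𝒟, if D₁ ∪ D₂ ⊆ T m then l D₁ * l D₂ else 0 := by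
      intro m
      rw [sq, hg]
      simp only []
      rw [Finset.sum_mul_sum]
      refine Finset.sum_congr rfl fun D₁ _ => Finset.sum_congr rfl fun D₂ _ => ?_
      by_cases a : D₁ ⊆ T m <;> by_cases b : D₂ ⊆ T m <;> simp [a, b, union_subset_iff]
    simp only [h1]
    rw [Finset.sum_comm]
    refine Finset.sum_congr rfl fun D₁ _ => ?_
    rw [Finset.sum_comm]
    refine Finset.sum_congr rfl fun D₂ _ => ?_
    rw [← Finset.sum_filter, Finset.sum_const, nsmul_eq_mul, mul_comm]
  -- main term
  have hmain : ∑ D₁ ∈ 𝒟, ∑ D₂ ∈ 𝒟, l D₁ * l D₂ * (1 / P (D₁ ∪ D₂)) = G := by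
    rw [selberg_diag N hN 𝒟 hdown l, hG]
    refine Finset.sum_congr rfl fun E hE => ?_
    have : ∑ D ∈ 𝒟 with E ⊆ D, l D / P D = (-1) ^ E.card / φ E := by
      have h1 : ∀ D ∈ 𝒟.filter (fun D => E ⊆ D), l D / P D =
          ∑ F ∈ 𝒟, if D ⊆ F then (-1) ^ D.card * (1 / φ F) else 0 := by
        intro D _
        rw [← Finset.sum_filter, ← Finset.mul_sum, hl]
        have := (Ppos D).ne'
        field_simp
        rfl
      rw [Finset.sum_congr rfl h1, Finset.sum_comm]
      have h2 : ∀ F ∈ 𝒟, (∑ D ∈ 𝒟 with E ⊆ D, if D ⊆ F then (-1 : ℝ) ^ D.card * (1 / φ F) else 0)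
          = if E = F then (-1) ^ E.card / φ E else 0 := by
        intro F hF
        rw [← Finset.sum_filter, ← Finset.sum_mul]
        have h3 : (𝒟.filter (fun D => E ⊆ D)).filter (fun D => D ⊆ F) =
            F.powerset.filter (fun D => E ⊆ D) := by
          ext D
          simp only [mem_filter, mem_powerset]
          exact ⟨fun h => ⟨h.2, h.1.2⟩, fun h => ⟨⟨hdown F hF D h.1, h.2⟩, h.1⟩⟩
        rw [h3]
        by_cases hEF : E ⊆ F
        · rw [alt_sum_between E F hEF]
          by_cases h : E = F
          · subst h; simp [div_eq_mul_inv]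
          · simp [h]
        · have hne : E ≠ F := fun h => hEF h.le
          rw [if_neg hne, Finset.filter_false_of_mem]
          · simp
          · intro D hD h; exact hEF (h.trans (mem_powerset.1 hD))
      rw [Finset.sum_congr rfl h2, Finset.sum_ite_eq, if_pos hE]
    change φ E * (∑ D ∈ 𝒟 with E ⊆ D, l D / P D) ^ 2 = 1 / φ E
    rw [this, div_pow, ← pow_mul, mul_comm E.card 2, pow_mul]
    have := (φpos E).ne'
    simp
    field_simp
  -- error term
  have herr : ∑ D₁ ∈ 𝒟, ∑ D₂ ∈ 𝒟, |l D₁| * |l D₂| * (1 / P (D₁ ∪ D₂)) ≤ G ^ 5 := by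
    rw [selberg_diag N hN 𝒟 hdown (fun D => |l D|)]
    calc _ ≤ ∑ E ∈ 𝒟, φ E * (G * (G / φ E)) ^ 2 := by
          refine Finset.sum_le_sum fun E _ => ?_
          refine mul_le_mul_of_nonneg_left ?_ (φpos E).le
          refine pow_le_pow_left₀ (Finset.sum_nonneg fun D _ =>
            div_nonneg (abs_nonneg _) (Ppos D).le) ?_ 2
          calc ∑ D ∈ 𝒟 with E ⊆ D, |l D| / P D ≤ ∑ D ∈ 𝒟 with E ⊆ D, G * (1 / φ D) := by
                refine Finset.sum_le_sum fun D _ => ?_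
                rw [labs, mul_div_cancel_left₀ _ (Ppos D).ne', ← div_eq_mul_one_div]
                exact S_le D
            _ = G * S E := by rw [← Finset.mul_sum]
            _ ≤ _ := mul_le_mul_of_nonneg_left (S_le E) hG0
      _ = G ^ 4 * ∑ E ∈ 𝒟, 1 / φ E := by
          rw [Finset.mul_sum]
          refine Finset.sum_congr rfl fun E _ => ?_
          have := (φpos E).ne'
          field_simp
      _ = G ^ 5 := by rw [← hG]; ring
  have hupper : ∑ m ∈ M, g m ^ 2 ≤ V * (G + θ * G ^ 5) := by
    rw [hsum]
    calc _ ≤ ∑ D₁ ∈ 𝒟, ∑ D₂ ∈ 𝒟, (V * (l D₁ * l D₂ * (1 / P (D₁ ∪ D₂))) +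
            θ * V * (|l D₁| * |l D₂| * (1 / P (D₁ ∪ D₂)))) := by
          refine Finset.sum_le_sum fun D₁ h₁ => Finset.sum_le_sum fun D₂ h₂ => ?_
          set c : ℝ := ((M.filter (fun m => D₁ ∪ D₂ ⊆ T m)).card : ℝ)
          have h := hcount D₁ h₁ D₂ h₂
          change |c - V / P (D₁ ∪ D₂)| ≤ θ * (V / P (D₁ ∪ D₂)) at h
          have h3 : l D₁ * l D₂ * (c - V / P (D₁ ∪ D₂)) ≤
              |l D₁| * |l D₂| * (θ * (V / P (D₁ ∪ D₂))) := by
            refine (le_abs_self _).trans ?_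
            rw [abs_mul, abs_mul]
            exact mul_le_mul_of_nonneg_left h (by positivity)
          have e1 : V * (l D₁ * l D₂ * (1 / P (D₁ ∪ D₂))) = l D₁ * l D₂ * (V / P (D₁ ∪ D₂)) := by
            ring
          have e2 : θ * V * (|l D₁| * |l D₂| * (1 / P (D₁ ∪ D₂))) =
              |l D₁| * |l D₂| * (θ * (V / P (D₁ ∪ D₂))) := by ring
          rw [e1, e2]
          linarith
      _ = V * G + θ * V * ∑ D₁ ∈ 𝒟, ∑ D₂ ∈ 𝒟, |l D₁| * |l D₂| * (1 / P (D₁ ∪ D₂)) := by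
          simp only [Finset.sum_add_distrib, ← Finset.mul_sum]
          rw [hmain]
      _ ≤ V * G + θ * V * G ^ 5 := by
          have := mul_le_mul_of_nonneg_left herr (mul_nonneg hθ hV)
          linarith
      _ = _ := by ring
  refine le_trans ?_ hupper
  have hlow : ∀ m ∈ M.filter (fun m => ∀ D ∈ 𝒟, D ⊆ T m → D = ∅), g m ^ 2 = G ^ 2 := by
    intro m hm
    have hm' := (mem_filter.1 hm).2
    congr 1
    have h1 : g m = ∑ D ∈ 𝒟, if D = ∅ then l D else 0 := by
      refine Finset.sum_congr rfl fun D hD => ?_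
      by_cases h : D = ∅
      · simp [h]
      · rw [if_neg h, if_neg fun h' => h (hm' D hD h')]
    rw [h1, Finset.sum_ite_eq']
    by_cases h : ∅ ∈ 𝒟
    · rw [if_pos h, hl, hS, hP, hG]; simp [hφ]
    · rw [if_neg h, hG]
      have : 𝒟 = ∅ := by
        rw [Finset.eq_empty_iff_forall_notMem]
        exact fun D hD => h (hdown D hD ∅ (empty_subset _))
      simp [this]
  calc _ = ∑ m ∈ M.filter (fun m => ∀ D ∈ 𝒟, D ⊆ T m → D = ∅), g m ^ 2 := by
        rw [Finset.sum_congr rfl hlow, Finset.sum_const, nsmul_eq_mul]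
    _ ≤ _ := Finset.sum_le_sum_of_subset_of_nonneg (filter_subset _ _) fun m _ _ => sq_nonneg _


open NumberField

section Lattice

set_option linter.unusedSectionVars false

variable {K : Type*} [Field K] [NumberField K]
variable {ι : Type*} [Fintype ι] [DecidableEq ι]

/-- The box of ring elements with coordinates in `[c i, c i + s)`. -/
noncomputable def latBox (b : Module.Basis ι ℤ (𝓞 K)) (c : ι → ℤ) (s : ℤ) : Finset (𝓞 K) :=
  (Fintype.piFinset fun i => Finset.Ico (c i) (c i + s)).map b.equivFun.symm.toEquiv.toEmbedding

theorem mem_latBox (b : Module.Basis ι ℤ (𝓞 K)) (c : ι → ℤ) (s : ℤ) (m : 𝓞 K) :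
    m ∈ latBox b c s ↔ ∀ i, c i ≤ b.repr m i ∧ b.repr m i < c i + s := by
  unfold latBox
  rw [Finset.mem_map_equiv]
  simp [Fintype.mem_piFinset, Module.Basis.equivFun_apply]

theorem card_latBox (b : Module.Basis ι ℤ (𝓞 K)) (c : ι → ℤ) (s : ℤ) :
    (latBox b c s).card = s.toNat ^ Fintype.card ι := by
  unfold latBox
  rw [Finset.card_map, Fintype.card_piFinset]
  simp

theorem exists_mul_const (b : Module.Basis ι ℤ (𝓞 K)) :
    ∃ C : ℤ, 0 < C ∧ ∀ (x y : 𝓞 K) (X Y : ℤ), (∀ i, |b.repr x i| ≤ X) → (∀ i, |b.repr y i| ≤ Y) →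
      ∀ i, |b.repr (x * y) i| ≤ C * (X * Y) := by
  refine ⟨1 + ∑ i, ∑ j, ∑ l, |b.repr (b j * b l) i|, by positivity, ?_⟩
  intro x y X Y hx hy i
  have hX : 0 ≤ X := (abs_nonneg _).trans (hx i)
  have hY : 0 ≤ Y := (abs_nonneg _).trans (hy i)
  have h1 : x * y = ∑ j, ∑ l, (b.repr x j * b.repr y l) • (b j * b l) := by
    conv_lhs => rw [← b.sum_repr x, ← b.sum_repr y]
    rw [Finset.sum_mul_sum]
    refine Finset.sum_congr rfl fun j _ => Finset.sum_congr rfl fun l _ => ?_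
    rw [smul_mul_smul_comm]
  have h2 : b.repr (x * y) i = ∑ j, ∑ l, (b.repr x j * b.repr y l) * b.repr (b j * b l) i := by
    rw [h1]
    simp only [map_sum, Finsupp.finsetSum_apply, map_smul, Finsupp.smul_apply, smul_eq_mul]
  rw [h2]
  calc _ ≤ ∑ j, ∑ l, |(b.repr x j * b.repr y l) * b.repr (b j * b l) i| :=
        (Finset.abs_sum_le_sum_abs _ _).trans
          (Finset.sum_le_sum fun j _ => Finset.abs_sum_le_sum_abs _ _)
    _ ≤ ∑ j, ∑ l, (X * Y) * |b.repr (b j * b l) i| := by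
        refine Finset.sum_le_sum fun j _ => Finset.sum_le_sum fun l _ => ?_
        rw [abs_mul, abs_mul]
        gcongr
        · exact hx j
        · exact hy l
    _ = (∑ j, ∑ l, |b.repr (b j * b l) i|) * (X * Y) := by
        simp only [← Finset.mul_sum]; ring
    _ ≤ _ := by
        refine mul_le_mul_of_nonneg_right ?_ (mul_nonneg hX hY)
        have := Finset.single_le_sum (f := fun i => ∑ j, ∑ l, |b.repr (b j * b l) i|)
          (fun i _ => by positivity) (Finset.mem_univ i)
        linarith

theorem exists_short (b : Module.Basis ι ℤ (𝓞 K)) (I : Ideal (𝓞 K)) (hI : I ≠ ⊥)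
    (u : ℕ) (hu : Ideal.absNorm I < (u + 1) ^ Fintype.card ι) :
    ∃ α ∈ I, α ≠ 0 ∧ ∀ i, |b.repr α i| ≤ u := by
  classical
  have hpos : Ideal.absNorm I ≠ 0 := by rwa [Ne, Ideal.absNorm_eq_zero_iff]
  have : Finite (𝓞 K ⧸ I) := Ideal.finiteQuotientOfFreeOfNeBot I hI
  have := Fintype.ofFinite (𝓞 K ⧸ I)
  have hcard : Fintype.card (𝓞 K ⧸ I) = Ideal.absNorm I := by
    rw [← Nat.card_eq_fintype_card, Ideal.absNorm_apply, Submodule.cardQuot_apply]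
  have : (Finset.univ : Finset (𝓞 K ⧸ I)).card < (latBox b (fun _ => 0) (u + 1)).card := by
    rw [card_latBox, Finset.card_univ, hcard]
    simpa using hu
  obtain ⟨x, hx, y, hy, hne, h⟩ := Finset.exists_ne_map_eq_of_card_lt_of_maps_to this
    (f := fun z => Ideal.Quotient.mk I z) (fun _ _ => Finset.mem_univ _)
  refine ⟨x - y, Ideal.Quotient.eq.1 h, sub_ne_zero.2 hne, fun i => ?_⟩
  have h1 := (mem_latBox b _ _ x).1 hx i
  have h2 := (mem_latBox b _ _ y).1 hy i
  simp only [map_sub, Finsupp.sub_apply]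
  rw [abs_le]
  constructor <;> omega

theorem exists_covering (b : Module.Basis ι ℤ (𝓞 K)) :
    ∃ C : ℤ, 0 < C ∧ ∀ (I : Ideal (𝓞 K)), I ≠ ⊥ → ∀ u : ℕ,
      Ideal.absNorm I < (u + 1) ^ Fintype.card ι →
      ∀ z : 𝓞 K, ∃ a ∈ I, ∀ i, |b.repr (z - a) i| ≤ C * u := by
  obtain ⟨C, hC, hmul⟩ := exists_mul_const b
  refine ⟨C, hC, fun I hI u hu z => ?_⟩
  obtain ⟨α, hαI, hα0, hα⟩ := exists_short b I hI u hu
  set n : ℕ := Ideal.absNorm (Ideal.span {α}) with hn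
  have hn0 : n ≠ 0 := by
    rw [hn, Ne, Ideal.absNorm_eq_zero_iff, Ideal.span_singleton_eq_bot]; exact hα0
  obtain ⟨β, hβ⟩ := Ideal.mem_span_singleton'.1 (Ideal.absNorm_mem (Ideal.span {α}))
  rw [← hn] at hβ
  -- round
  set w : 𝓞 K := ∑ i, (b.repr (z * β) i / (n : ℤ)) • b i with hw
  set r : 𝓞 K := z * β - n * w with hr
  have hrw : ∀ i, b.repr w i = b.repr (z * β) i / (n : ℤ) := by
    intro i; rw [hw]; exact congrFun (b.repr_sum_self _) i
  have hrr : ∀ i, b.repr r i = b.repr (z * β) i % (n : ℤ) := by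
    intro i
    rw [hr, map_sub, Finsupp.sub_apply]
    have : (n : 𝓞 K) * w = (n : ℤ) • w := by simp
    rw [this, map_smul, Finsupp.smul_apply, hrw, smul_eq_mul]
    have := Int.emod_add_mul_ediv (b.repr (z * β) i) n
    linarith
  have hnpos : (0 : ℤ) < n := by exact_mod_cast Nat.pos_of_ne_zero hn0
  have hrle : ∀ i, |b.repr r i| ≤ (n : ℤ) := by
    intro i
    rw [hrr, abs_of_nonneg (Int.emod_nonneg _ hnpos.ne')]
    exact (Int.emod_lt_of_pos _ hnpos).le
  refine ⟨w * α, I.mul_mem_left _ hαI, fun i => ?_⟩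
  have e : (n : ℤ) • (z - w * α) = r * α := by
    have : (n : ℤ) • (z - w * α) = (n : 𝓞 K) * (z - w * α) := by simp
    rw [this, hr, sub_mul, mul_sub]
    have : (n : 𝓞 K) * z = z * β * α := by rw [← hβ]; ring
    rw [this]; ring
  have h1 := hmul r α n u hrle hα i
  rw [← e, map_smul, Finsupp.smul_apply, smul_eq_mul, abs_mul, abs_of_pos hnpos] at h1
  have : (n : ℤ) * |b.repr (z - w * α) i| ≤ n * (C * u) := by
    calc _ ≤ _ := h1
      _ = _ := by ring
  exact le_of_mul_le_mul_left this hnpos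

theorem lattice_count (b : Module.Basis ι ℤ (𝓞 K)) :
    ∃ C : ℤ, 0 < C ∧ ∀ (I : Ideal (𝓞 K)), I ≠ ⊥ → ∀ u : ℕ,
      Ideal.absNorm I < (u + 1) ^ Fintype.card ι → ∀ (c : ι → ℤ) (s : ℤ) (M : Finset (𝓞 K)),
      (∀ m, m ∈ M ↔ m ∈ latBox b c s ∧ m ∈ I) →
      Ideal.absNorm I * M.card ≤ (s + 2 * (C * u)).toNat ^ Fintype.card ι ∧
      (s - 2 * (C * u)).toNat ^ Fintype.card ι ≤ Ideal.absNorm I * M.card := by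
  classical
  obtain ⟨C, hC, hcov⟩ := exists_covering b
  refine ⟨C, hC, fun I hI u hu c s M hM => ?_⟩
  have : Finite (𝓞 K ⧸ I) := Ideal.finiteQuotientOfFreeOfNeBot I hI
  have := Fintype.ofFinite (𝓞 K ⧸ I)
  have hcard : Fintype.card (𝓞 K ⧸ I) = Ideal.absNorm I := by
    rw [← Nat.card_eq_fintype_card, Ideal.absNorm_apply, Submodule.cardQuot_apply]
  have hrep : ∀ q : 𝓞 K ⧸ I, ∃ r : 𝓞 K, Ideal.Quotient.mk I r = q ∧ ∀ i, |b.repr r i| ≤ C * u := by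
    intro q
    obtain ⟨z, rfl⟩ := Ideal.Quotient.mk_surjective q
    obtain ⟨a, ha, h⟩ := hcov I hI u hu z
    exact ⟨z - a, by rw [map_sub, Ideal.Quotient.eq_zero_iff_mem.2 ha, sub_zero], h⟩
  choose r hr1 hr2 using hrep
  have hcard2 : Ideal.absNorm I * M.card = ((Finset.univ : Finset (𝓞 K ⧸ I)) ×ˢ M).card := by
    rw [Finset.card_product, Finset.card_univ, hcard]
  rw [hcard2]
  constructor
  · have := card_latBox b (fun i => c i - C * u) (s + 2 * (C * u))
    rw [← this]
    refine Finset.card_le_card_of_injOn (fun p => p.2 + r p.1) ?_ ?_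
    · rintro ⟨q, a⟩ h
      have ha := (hM a).1 (Finset.mem_product.1 h).2
      have h1 := (mem_latBox b _ _ a).1 ha.1
      refine Finset.mem_coe.2 ((mem_latBox b _ _ _).2 fun i => ?_)
      have h2 := abs_le.1 (hr2 q i)
      have h3 := h1 i
      simp only [map_add, Finsupp.add_apply]
      constructor <;> linarith [h2.1, h2.2, h3.1, h3.2]
    · rintro ⟨q, a⟩ h ⟨q', a'⟩ h' heq
      simp only at heq
      have ha := ((hM a).1 (Finset.mem_product.1 h).2).2
      have ha' := ((hM a').1 (Finset.mem_product.1 h').2).2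
      have : q = q' := by
        have := congrArg (Ideal.Quotient.mk I) heq
        rwa [map_add, map_add, Ideal.Quotient.eq_zero_iff_mem.2 ha,
          Ideal.Quotient.eq_zero_iff_mem.2 ha', zero_add, zero_add, hr1, hr1] at this
      subst this
      simpa using heq
  · have := card_latBox b (fun i => c i + C * u) (s - 2 * (C * u))
    rw [← this]
    refine Finset.card_le_card_of_injOn
      (fun z => (Ideal.Quotient.mk I z, z - r (Ideal.Quotient.mk I z))) ?_ ?_
    · intro z h
      have h1 := (mem_latBox b _ _ z).1 h
      refine Finset.mem_coe.2 (Finset.mem_product.2 ⟨Finset.mem_univ _, (hM _).2 ⟨?_, ?_⟩⟩)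
      · refine (mem_latBox b _ _ _).2 fun i => ?_
        have h2 := abs_le.1 (hr2 (Ideal.Quotient.mk I z) i)
        have h3 := h1 i
        simp only [map_sub, Finsupp.sub_apply]
        constructor <;> linarith [h2.1, h2.2, h3.1, h3.2]
      · rw [← Ideal.Quotient.eq_zero_iff_mem, map_sub, hr1, sub_self]
    · intro z _ z' _ heq
      simp only [Prod.mk.injEq] at heq
      have := heq.2
      rw [heq.1] at this
      simpa using this

/-- Relative error version. -/
theorem lattice_count' (b : Module.Basis ι ℤ (𝓞 K)) (hd : 0 < Fintype.card ι) :
    ∃ C : ℝ, 0 < C ∧ ∀ (I : Ideal (𝓞 K)), I ≠ ⊥ → ∀ (c : ι → ℤ) (s : ℕ) (M : Finset (𝓞 K)),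
      (∀ m, m ∈ M ↔ m ∈ latBox b c s ∧ m ∈ I) → ∀ θ : ℝ, θ ≤ 1 →
      C ^ Fintype.card ι * (Ideal.absNorm I) ≤ (θ * s) ^ Fintype.card ι → 0 ≤ θ →
      |(M.card : ℝ) - (s : ℝ) ^ Fintype.card ι / Ideal.absNorm I| ≤
        θ * ((s : ℝ) ^ Fintype.card ι / Ideal.absNorm I) := by
  obtain ⟨C, hC, H⟩ := lattice_count b
  set d := Fintype.card ι with hdd
  refine ⟨4 * d * C, by positivity, fun I hI c s M hM θ hθ1 hθ hθ0 => ?_⟩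
  set q := Ideal.absNorm I with hq
  have hq0 : 0 < q := Nat.pos_of_ne_zero (by rwa [hq, Ne, Ideal.absNorm_eq_zero_iff])
  -- choose u
  have hex : ∃ v : ℕ, q < (v + 1) ^ d :=
    ⟨q, lt_of_lt_of_le (Nat.lt_succ_self q) (Nat.le_self_pow hd.ne' _)⟩
  classical
  set u := Nat.find hex with hu
  have hu1 : q < (u + 1) ^ d := Nat.find_spec hex
  have hu2 : u ^ d ≤ q := by
    rcases Nat.eq_zero_or_pos u with h0 | h0
    · rw [h0, zero_pow hd.ne']; exact Nat.zero_le _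
    · have := Nat.find_min hex (m := u - 1) (by omega)
      rw [not_lt] at this
      rwa [Nat.sub_add_cancel h0] at this
  obtain ⟨h1, h2⟩ := H I hI u hu1 c s M hM
  have hCr : (0 : ℝ) < C := by exact_mod_cast hC
  have hdr : (0 : ℝ) < d := by exact_mod_cast hd
  have hCu : (4 * d * C : ℝ) * u ≤ θ * s := by
    by_contra hcon
    push Not at hcon
    have := pow_lt_pow_left₀ hcon (by positivity) hd.ne'
    rw [mul_pow (4 * d * C : ℝ)] at this
    have h3 : ((u : ℝ)) ^ d ≤ q := by exact_mod_cast hu2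
    have h4 := mul_le_mul_of_nonneg_left h3 (show (0 : ℝ) ≤ (4 * d * C : ℝ) ^ d by positivity)
    linarith
  rcases Nat.eq_zero_or_pos s with hs0 | hs0
  · subst hs0
    have : C * u ≤ 0 := by
      have : (C : ℝ) * u ≤ 0 := by
        have h5 : (4 * d : ℝ) * (C * u) ≤ 0 := by simp at hCu; linarith
        by_contra h6
        push Not at h6
        have : (0:ℝ) < 4 * d * (C * u) := by positivity
        linarith
      exact_mod_cast this
    have h7 : q * M.card ≤ 0 := by
      refine h1.trans ?_
      have : ((0 : ℕ) + 2 * (C * u) : ℤ).toNat = 0 := by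
        rw [Int.toNat_eq_zero]; push_cast; linarith
      rw [this, zero_pow hd.ne']
    have h8 : M.card = 0 := by
      rcases Nat.mul_eq_zero.1 (Nat.le_zero.1 h7) with h | h
      · omega
      · exact h
    rw [h8]
    simp [zero_pow hd.ne']
  have hsr : (0 : ℝ) < s := by exact_mod_cast hs0
  set y : ℝ := 2 * (C * u) / s with hy
  have hy0 : 0 ≤ y := by positivity
  have hdy : 2 * (d * y) ≤ θ := by
    rw [hy]
    rw [show 2 * (d * (2 * (C * u) / s)) = (4 * d * C * u : ℝ) / s by ring, div_le_iff₀ hsr]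
    exact hCu
  have hy1 : y ≤ 1 := by
    have : (1 : ℝ) ≤ d := by exact_mod_cast hd
    nlinarith
  have hup : (q : ℝ) * M.card ≤ s ^ d * (1 + y) ^ d := by
    rw [← mul_pow]
    have : ((s + 2 * (C * u) : ℤ).toNat : ℝ) = s * (1 + y) := by
      have h9 : (((s + 2 * (C * u) : ℤ).toNat : ℤ) : ℝ) = ((s + 2 * (C * u) : ℤ) : ℝ) := by
        rw [Int.toNat_of_nonneg (by positivity)]
      rw [hy]
      push_cast at h9
      rw [h9]
      field_simp
    rw [← this]
    exact_mod_cast h1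
  have hlo : (s : ℝ) ^ d * (1 - y) ^ d ≤ q * M.card := by
    rw [← mul_pow]
    have : s * (1 - y) ≤ ((s - 2 * (C * u) : ℤ).toNat : ℝ) := by
      have h9 : ((s - 2 * (C * u) : ℤ) : ℝ) ≤ (((s - 2 * (C * u) : ℤ).toNat : ℤ) : ℝ) := by
        exact_mod_cast Int.self_le_toNat _
      push_cast at h9
      refine le_trans (le_of_eq ?_) h9
      rw [hy]; field_simp
    refine (pow_le_pow_left₀ (mul_nonneg hsr.le (by linarith)) this d).trans ?_
    exact_mod_cast h2
  have hb1 : (1 + y) ^ d ≤ 1 + θ := by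
    have e1 : (1 + y) ^ d ≤ Real.exp (d * y) := by
      rw [Real.exp_nat_mul]
      exact pow_le_pow_left₀ (by linarith) (by linarith [Real.add_one_le_exp y]) d
    have e2 : Real.exp (d * y) ≤ 1 + 2 * (d * y) := by
      have hz0 : 0 ≤ d * y := by positivity
      have := Real.exp_bound_div_one_sub_of_interval hz0 (by linarith)
      refine this.trans ?_
      rw [div_le_iff₀ (by linarith)]
      nlinarith
    linarith
  have hb2 : 1 - θ ≤ (1 - y) ^ d := by
    have := one_add_mul_le_pow (a := -y) (by linarith) d
    have e : (1 + -y) = 1 - y := by ring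
    rw [e] at this
    nlinarith
  have hqr : (0 : ℝ) < q := by exact_mod_cast hq0
  have hsd : (0 : ℝ) < (s : ℝ) ^ d := by positivity
  have k1 : (M.card : ℝ) ≤ (1 + θ) * (s ^ d / q) := by
    rw [← mul_div_assoc, le_div_iff₀ hqr]
    calc _ = (q : ℝ) * M.card := by ring
      _ ≤ s ^ d * (1 + y) ^ d := hup
      _ ≤ s ^ d * (1 + θ) := mul_le_mul_of_nonneg_left hb1 hsd.le
      _ = _ := by ring
  have k2 : (1 - θ) * (s ^ d / q) ≤ (M.card : ℝ) := by
    rw [← mul_div_assoc, div_le_iff₀ hqr]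
    calc _ = (s : ℝ) ^ d * (1 - θ) := by ring
      _ ≤ s ^ d * (1 - y) ^ d := mul_le_mul_of_nonneg_left hb2 hsd.le
      _ ≤ q * M.card := hlo
      _ = _ := by ring
  rw [abs_le]
  constructor <;> linarith

end Lattice


open NumberField

section NormBox

variable {K : Type*} [Field K] [NumberField K]
variable {ι : Type*} [Fintype ι] [DecidableEq ι]

theorem norm_box (b : Module.Basis ι ℤ (𝓞 K)) (hcard : Fintype.card ι = Module.finrank ℚ K) :
    ∃ L : ℕ, 0 < L ∧ ∀ M s : ℕ, s * L ≤ M →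
      ∀ m ∈ latBox b (fun i => (M : ℤ) * b.repr 1 i) s,
        M ^ Fintype.card ι ≤ 2 * Ideal.absNorm (Ideal.span {m}) ∧
        Ideal.absNorm (Ideal.span {m}) ≤ 2 * M ^ Fintype.card ι := by
  set d := Fintype.card ι with hd
  have hdpos : 0 < d := by rw [hcard]; exact Module.finrank_pos
  set B : ℝ := ∑ σ : K →ₐ[ℚ] ℂ, ∑ i, ‖σ (b i : K)‖ with hB
  have hB0 : 0 ≤ B := by positivity
  obtain ⟨L, hL⟩ := exists_nat_gt (2 * d * B)
  refine ⟨L + 1, by omega, ?_⟩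
  intro M s hsM m hm
  rw [mem_latBox] at hm
  set η : 𝓞 K := m - (M : ℤ) • 1 with hη
  have hrepr : ∀ i, b.repr η i = b.repr m i - M * b.repr 1 i := by
    intro i; rw [hη, map_sub, map_smul]; rfl
  have hηabs : ∀ i, |(b.repr η i : ℝ)| ≤ s := by
    intro i
    have := hm i
    rw [hrepr]
    have h0 : 0 ≤ b.repr m i - M * b.repr 1 i := by linarith [this.1]
    have h1 : b.repr m i - M * b.repr 1 i ≤ s := by linarith [this.2]
    rw [abs_of_nonneg (by exact_mod_cast h0)]
    exact_mod_cast h1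
  have hσ : ∀ σ : K →ₐ[ℚ] ℂ, ‖σ (η : K)‖ ≤ s * B := by
    intro σ
    have h1 : (η : K) = ∑ i, (b.repr η i : K) * (b i : K) := by
      conv_lhs => rw [← b.sum_repr η]
      simp
    rw [h1, map_sum]
    calc _ ≤ ∑ i, ‖σ ((b.repr η i : K) * (b i : K))‖ := norm_sum_le _ _
      _ ≤ ∑ i, (s:ℝ) * ‖σ (b i : K)‖ := by
          refine Finset.sum_le_sum fun i _ => ?_
          rw [map_mul, norm_mul]
          gcongr
          rw [map_intCast, Complex.norm_intCast]
          exact hηabs i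
      _ = s * ∑ i, ‖σ (b i : K)‖ := by rw [Finset.mul_sum]
      _ ≤ s * B := by
          gcongr
          exact Finset.single_le_sum (f := fun σ : K →ₐ[ℚ] ℂ => ∑ i, ‖σ (b i : K)‖)
            (fun i _ => by positivity) (Finset.mem_univ σ)
  set δ : ℝ := 1 / (2 * d) with hδ
  have hdR : (0:ℝ) < d := by exact_mod_cast hdpos
  have hd1 : (1:ℝ) ≤ d := by exact_mod_cast hdpos
  have hδ0 : 0 < δ := by positivity
  have hδd : d * δ = 1 / 2 := by rw [hδ]; field_simp
  have hδ1 : δ ≤ 1 / 2 := by nlinarith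
  have hsB : s * B ≤ δ * M := by
    have h1 : (s:ℝ) * (L + 1) ≤ M := by exact_mod_cast hsM
    have h2 : B ≤ δ * (L + 1) := by
      have : 2 * d * B * δ ≤ (L + 1) * δ := by gcongr; linarith
      have h3 : 2 * d * B * δ = B := by
        calc 2 * d * B * δ = 2 * B * (d * δ) := by ring
          _ = B := by rw [hδd]; ring
      linarith
    calc s * B ≤ s * (δ * (L + 1)) := by gcongr
      _ = δ * (s * (L + 1)) := by ring
      _ ≤ _ := by gcongr
  have hmσ : ∀ σ : K →ₐ[ℚ] ℂ, σ (m : K) = M + σ (η : K) := by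
    intro σ
    have : (m : K) = (M : K) + (η : K) := by
      rw [hη]; simp
    rw [this, map_add, map_natCast]
  have hlow : ∀ σ : K →ₐ[ℚ] ℂ, (1 - δ) * M ≤ ‖σ (m : K)‖ := by
    intro σ
    rw [hmσ]
    have h1 : ‖(M:ℂ)‖ - ‖σ (η : K)‖ ≤ ‖(M:ℂ) + σ (η : K)‖ := by
      have := norm_sub_norm_le (M:ℂ) (-σ (η : K))
      simpa using this
    rw [Complex.norm_natCast] at h1
    linarith [hσ σ]
  have hup : ∀ σ : K →ₐ[ℚ] ℂ, ‖σ (m : K)‖ ≤ (1 + δ) * M := by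
    intro σ
    rw [hmσ]
    have h1 := norm_add_le (M:ℂ) (σ (η : K))
    rw [Complex.norm_natCast] at h1
    linarith [hσ σ]
  have hnorm : (Ideal.absNorm (Ideal.span {m}) : ℝ) = ∏ σ : K →ₐ[ℚ] ℂ, ‖σ (m : K)‖ := by
    rw [Ideal.absNorm_span_singleton, ← norm_prod,
      ← Algebra.norm_eq_prod_embeddings ℚ ℂ (m : K), ← Algebra.coe_norm_int]
    simp [Nat.cast_natAbs]
  have hcardσ : Fintype.card (K →ₐ[ℚ] ℂ) = d := by
    rw [AlgHom.card, hcard]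
  have hA : ((1 - δ) * M) ^ d ≤ (Ideal.absNorm (Ideal.span {m}) : ℝ) := by
    rw [hnorm, ← hcardσ, ← Finset.card_univ, ← Finset.prod_const]
    refine Finset.prod_le_prod (fun σ _ => by nlinarith) fun σ _ => hlow σ
  have hA' : (Ideal.absNorm (Ideal.span {m}) : ℝ) ≤ ((1 + δ) * M) ^ d := by
    rw [hnorm, ← hcardσ, ← Finset.card_univ, ← Finset.prod_const]
    refine Finset.prod_le_prod (fun σ _ => by positivity) fun σ _ => hup σ
  have hb1 : 1 / 2 ≤ (1 - δ) ^ d := by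
    have := one_add_mul_le_pow (a := -δ) (by linarith) d
    have h2 : (1:ℝ) + d * (-δ) = 1 / 2 := by nlinarith
    rw [h2] at this
    simpa [sub_eq_add_neg] using this
  have hb2 : (1 + δ) ^ d ≤ 2 := by
    have h1 : ((1 + δ) * (1 - δ)) ^ d ≤ 1 := pow_le_one₀ (by nlinarith) (by nlinarith)
    rw [mul_pow] at h1
    have : 0 < (1 + δ) ^ d := by positivity
    nlinarith
  constructor
  · have : (M:ℝ) ^ d ≤ 2 * (Ideal.absNorm (Ideal.span {m}) : ℝ) := by
      rw [mul_pow] at hA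
      have : (0:ℝ) ≤ (M:ℝ) ^ d := by positivity
      nlinarith
    exact_mod_cast this
  · have : (Ideal.absNorm (Ideal.span {m}) : ℝ) ≤ 2 * (M:ℝ) ^ d := by
      rw [mul_pow] at hA'
      have : (0:ℝ) ≤ (M:ℝ) ^ d := by positivity
      nlinarith
    exact_mod_cast this

end NormBox


open NumberField

section IdealSums

variable (K : Type*) [Field K] [NumberField K]

theorem ideal_sum_bound (ε : ℝ) (hε : 0 < ε) :
    ∃ C : ℝ, 0 ≤ C ∧ ∀ S : Finset (Ideal (𝓞 K)), (∀ I ∈ S, I ≠ ⊥) →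
      ∑ I ∈ S, (Ideal.absNorm I : ℝ) ^ (-(1 + ε)) ≤ C := by
  classical
  set f : ℕ → ℝ := fun n => (Nat.card {I : Ideal (𝓞 K) // Ideal.absNorm I = n} : ℝ) with hf
  have hlim := ((Ideal.tendsto_norm_le_div_atTop₀ K).comp tendsto_natCast_atTop_atTop)
  have hsum : ∀ n : ℕ, ∑ k ∈ Finset.Icc 1 n, f k =
      (Nat.card {I : nonZeroDivisors (Ideal (𝓞 K)) // (Ideal.absNorm (I : Ideal (𝓞 K)) : ℝ) ≤ n} : ℝ) := by
    intro n
    simp only [hf, Nat.cast_le, ← Nat.cast_sum]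
    congr 1
    symm
    rw [← add_left_inj 1, ← Ideal.card_norm_le_eq_card_norm_le_add_one,
      show Finset.Icc 1 n = Finset.Ioc 0 n from Finset.Icc_succ_left_eq_Ioc _ _,
      show 1 = Nat.card {I : Ideal (𝓞 K) // Ideal.absNorm I = 0} by simp [Ideal.absNorm_eq_zero_iff],
      Finset.sum_Ioc_add_eq_sum_Icc (n.zero_le),
      ← Finset.card_preimage_eq_sum_card_image_eq (fun k _ ↦ Ideal.finite_setOfPred_absNorm_eq k)]
    simp [Set.coe_eq_subtype]
  have hO : (fun n ↦ ∑ k ∈ Finset.Icc 1 n, f k) =O[Filter.atTop] fun n ↦ (n : ℝ) ^ (1:ℝ) := by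
    have h1 := hlim.isBigO_one ℝ
    have h2 := h1.mul (Asymptotics.isBigO_refl (fun n : ℕ => (n:ℝ)) Filter.atTop)
    refine (h2.congr' ?_ ?_)
    · filter_upwards [Filter.eventually_gt_atTop 0] with n hn
      have : (n:ℝ) ≠ 0 := by exact_mod_cast hn.ne'
      simp only [Function.comp_apply]
      rw [hsum n, div_mul_cancel₀ _ this]
    · filter_upwards with n
      simp
  have hs := LSeriesSummable_of_sum_norm_bigO_and_nonneg (s := ((1 + ε : ℝ) : ℂ)) hO
    (fun n => by positivity) (by norm_num) (by simpa using hε)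
  have hs' := hs.norm
  set C := ∑' n, ‖LSeries.term (fun n => (f n : ℂ)) ((1 + ε : ℝ) : ℂ) n‖ with hC
  refine ⟨C, tsum_nonneg fun _ => norm_nonneg _, ?_⟩
  intro S hS
  calc _ = ∑ n ∈ S.image Ideal.absNorm, ∑ I ∈ S with Ideal.absNorm I = n,
        (Ideal.absNorm I : ℝ) ^ (-(1 + ε)) := by
        rw [Finset.sum_fiberwise_of_maps_to]
        exact fun I hI => Finset.mem_image_of_mem _ hI
    _ ≤ ∑ n ∈ S.image Ideal.absNorm, ‖LSeries.term (fun n => (f n : ℂ)) ((1 + ε : ℝ) : ℂ) n‖ := by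
        refine Finset.sum_le_sum fun n hn => ?_
        obtain ⟨J, hJ, hJn⟩ := Finset.mem_image.1 hn
        have hn0 : n ≠ 0 := by
          rw [← hJn, Ne, Ideal.absNorm_eq_zero_iff]; exact hS J hJ
        rw [LSeries.term_of_ne_zero hn0, norm_div, Complex.norm_natCast_cpow_of_pos (by omega)]
        have h1 : ∑ I ∈ S with Ideal.absNorm I = n, (Ideal.absNorm I : ℝ) ^ (-(1 + ε))
            = ((S.filter (fun I => Ideal.absNorm I = n)).card : ℝ) * (n:ℝ) ^ (-(1+ε)) := by
          rw [Finset.sum_congr rfl (g := fun _ => (n:ℝ) ^ (-(1+ε)))]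
          · simp
          · intro I hI; rw [(Finset.mem_filter.1 hI).2]
        rw [h1]
        have h2 : ((S.filter (fun I => Ideal.absNorm I = n)).card : ℝ) ≤ f n := by
          simp only [hf, Nat.cast_le]
          have hfin := Ideal.finite_setOfPred_absNorm_eq (S := 𝓞 K) n
          rw [← Set.ncard_coe_finset]
          exact Set.ncard_le_ncard (t := {I : Ideal (𝓞 K) | Ideal.absNorm I = n})
            (fun I hI => by simpa using (Finset.mem_filter.1 hI).2) hfin
        have h3 : ‖((f n : ℝ) : ℂ)‖ = f n := by
          rw [Complex.norm_real, Real.norm_of_nonneg]; positivity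
        rw [h3, Real.rpow_neg (by positivity), ← div_eq_mul_inv]
        simp only [Complex.ofReal_re]
        gcongr
    _ ≤ C := hs'.sum_le_tsum _ fun _ _ => norm_nonneg _

end IdealSums


open NumberField

section SieveG

variable (K : Type*) [Field K] [NumberField K]

/-- Finset of nonzero ideals of norm at most `R`. -/
noncomputable def idealsLE (R : ℕ) : Finset (Ideal (𝓞 K)) := by
  classical
  exact (Ideal.finite_setOfPred_absNorm_le (S := 𝓞 K) R).toFinset.filter (fun I => I ≠ ⊥)

/-- Finset of nonzero prime ideals of norm at most `R`. -/
noncomputable def primesLE (R : ℕ) : Finset (Ideal (𝓞 K)) := by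
  classical
  exact (idealsLE K R).filter (fun I => I.IsPrime)

/-- The clipped norm. -/
noncomputable def idN (I : Ideal (𝓞 K)) : ℝ := max 2 (Ideal.absNorm I : ℝ)

/-- The index set of the sieve. -/
noncomputable def sieveD (R : ℕ) : Finset (Finset (Ideal (𝓞 K))) := by
  classical
  exact (primesLE K R).powerset.filter (fun E => ∏ I ∈ E, Ideal.absNorm I ≤ R)

/-- The main sieve sum. -/
noncomputable def sieveG (R : ℕ) : ℝ := ∑ E ∈ sieveD K R, 1 / ∏ I ∈ E, (idN K I - 1)

variable {K}

theorem mem_idealsLE {R : ℕ} {I : Ideal (𝓞 K)} :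
    I ∈ idealsLE K R ↔ Ideal.absNorm I ≤ R ∧ I ≠ ⊥ := by
  simp [idealsLE]

theorem mem_primesLE {R : ℕ} {I : Ideal (𝓞 K)} :
    I ∈ primesLE K R ↔ (Ideal.absNorm I ≤ R ∧ I ≠ ⊥) ∧ I.IsPrime := by
  simp [primesLE, mem_idealsLE]

theorem two_le_absNorm_of_prime {I : Ideal (𝓞 K)} (h0 : I ≠ ⊥) (hI : I.IsPrime) :
    2 ≤ Ideal.absNorm I := by
  have h1 : Ideal.absNorm I ≠ 0 := by rwa [Ne, Ideal.absNorm_eq_zero_iff]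
  have h2 : Ideal.absNorm I ≠ 1 := by
    rw [Ne, Ideal.absNorm_eq_one_iff]; exact hI.ne_top
  omega

theorem idN_of_prime {I : Ideal (𝓞 K)} (h0 : I ≠ ⊥) (hI : I.IsPrime) :
    idN K I = Ideal.absNorm I := by
  have := two_le_absNorm_of_prime h0 hI
  exact max_eq_right (by exact_mod_cast this)

theorem two_le_idN (I : Ideal (𝓞 K)) : 2 ≤ idN K I := le_max_left _ _

theorem mem_sieveD {R : ℕ} {E : Finset (Ideal (𝓞 K))} :
    E ∈ sieveD K R ↔ E ⊆ primesLE K R ∧ ∏ I ∈ E, Ideal.absNorm I ≤ R := by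
  simp [sieveD]

theorem sieveD_down {R : ℕ} : ∀ D ∈ sieveD K R, ∀ E ⊆ D, E ∈ sieveD K R := by
  intro D hD E hE
  rw [mem_sieveD] at *
  refine ⟨hE.trans hD.1, le_trans ?_ hD.2⟩
  refine Finset.prod_le_prod_of_subset_of_one_le' hE fun I hI _ => ?_
  have := mem_primesLE.1 (hD.1 hI)
  have := two_le_absNorm_of_prime this.1.2 this.2
  omega

theorem sieveG_ge (R : ℕ) (S : Finset (Ideal (𝓞 K))) (hS : S ⊆ idealsLE K R) :
    ∑ a ∈ S, 1 / (Ideal.absNorm a : ℝ) ≤ sieveG K R := by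
  classical
  open UniqueFactorizationMonoid in
  set supp : Ideal (𝓞 K) → Finset (Ideal (𝓞 K)) := fun a => (normalizedFactors a).toFinset
    with hsupp
  have hprime : ∀ a ∈ S, ∀ P ∈ supp a, P.IsPrime ∧ P ≠ ⊥ := by
    intro a ha P hP
    have h1 := UniqueFactorizationMonoid.prime_of_normalized_factor P (Multiset.mem_toFinset.1 hP)
    exact ⟨Ideal.isPrime_of_prime h1, h1.ne_zero⟩
  have hfac : ∀ a ∈ S, a = ∏ P ∈ supp a, P ^ (UniqueFactorizationMonoid.normalizedFactors a).count P := by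
    intro a ha
    have h0 : a ≠ ⊥ := (mem_idealsLE.1 (hS ha)).2
    conv_lhs => rw [← Ideal.prod_normalizedFactors_eq_self h0]
    rw [Finset.prod_multiset_count]
  have hnorm : ∀ a ∈ S, Ideal.absNorm a = ∏ P ∈ supp a, (Ideal.absNorm P) ^
      (UniqueFactorizationMonoid.normalizedFactors a).count P := by
    intro a ha
    conv_lhs => rw [hfac a ha]
    rw [map_prod]
    simp only [map_pow]
  have hcount : ∀ a ∈ S, ∀ P ∈ supp a,
      1 ≤ (UniqueFactorizationMonoid.normalizedFactors a).count P ∧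
      (UniqueFactorizationMonoid.normalizedFactors a).count P ≤ R ∧ Ideal.absNorm P ≤ R := by
    intro a ha P hP
    have h1 : 1 ≤ (UniqueFactorizationMonoid.normalizedFactors a).count P :=
      Multiset.one_le_count_iff_mem.2 (Multiset.mem_toFinset.1 hP)
    have h2 := (mem_idealsLE.1 (hS ha)).1
    have h3 : (Ideal.absNorm P) ^ (UniqueFactorizationMonoid.normalizedFactors a).count P ≤ R := by
      refine le_trans ?_ h2
      rw [hnorm a ha]
      refine Finset.single_le_prod' (f := fun P => (Ideal.absNorm P) ^
        (UniqueFactorizationMonoid.normalizedFactors a).count P) (fun Q hQ => ?_) hP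
      have := two_le_absNorm_of_prime (hprime a ha Q hQ).2 (hprime a ha Q hQ).1
      exact Nat.one_le_pow _ _ (by omega)
    have h4 := two_le_absNorm_of_prime (hprime a ha P hP).2 (hprime a ha P hP).1
    refine ⟨h1, ?_, ?_⟩
    · exact ((Nat.lt_pow_self (by omega)).le).trans h3
    · exact (Nat.le_self_pow (by omega) _).trans h3
  have hmaps : ∀ a ∈ S, supp a ∈ sieveD K R := by
    intro a ha
    rw [mem_sieveD]
    refine ⟨fun P hP => mem_primesLE.2 ⟨⟨(hcount a ha P hP).2.2, (hprime a ha P hP).2⟩,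
      (hprime a ha P hP).1⟩, ?_⟩
    refine le_trans ?_ (mem_idealsLE.1 (hS ha)).1
    rw [hnorm a ha]
    refine Finset.prod_le_prod' fun P hP => ?_
    have := hcount a ha P hP
    exact Nat.le_self_pow (by omega) _
  rw [← Finset.sum_fiberwise_of_maps_to hmaps]
  refine Finset.sum_le_sum fun E hE => ?_
  have hEp := (mem_sieveD.1 hE).1
  set N : Ideal (𝓞 K) → ℝ := fun P => (Ideal.absNorm P : ℝ) with hN
  have hN2 : ∀ P ∈ E, 2 ≤ N P := by
    intro P hP
    have h := mem_primesLE.1 (hEp hP)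
    simp only [hN]
    exact_mod_cast two_le_absNorm_of_prime h.1.2 h.2
  have hgeom : ∀ P ∈ E, ∑ e ∈ Finset.Icc 1 R, (1 / N P) ^ e ≤ 1 / (idN K P - 1) := by
    intro P hP
    have h := mem_primesLE.1 (hEp hP)
    rw [idN_of_prime h.1.2 h.2]
    change _ ≤ 1 / (N P - 1)
    have h2 := hN2 P hP
    have hq : 1 / N P < 1 := by rw [div_lt_one (by linarith)]; linarith
    have : ∑ e ∈ Finset.Icc 1 R, (1 / N P) ^ e = (1 / N P) * ∑ e ∈ Finset.range R, (1 / N P) ^ e := by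
      rw [Finset.mul_sum]
      rw [show Finset.Icc 1 R = Finset.Ico 1 (R+1) from rfl, Finset.sum_Ico_eq_sum_range]
      refine Finset.sum_congr (by simp) fun e _ => by rw [pow_add, pow_one]
    rw [this]
    have h3 : ∑ e ∈ Finset.range R, (1 / N P) ^ e ≤ (1 - 1 / N P)⁻¹ := by
      have hs := summable_geometric_of_lt_one (r := 1 / N P) (by positivity) hq
      rw [← tsum_geometric_of_lt_one (by positivity) hq]
      exact hs.sum_le_tsum _ fun _ _ => by positivity
    calc _ ≤ (1 / N P) * (1 - 1 / N P)⁻¹ := by gcongr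
      _ = 1 / (N P - 1) := by
        have : N P ≠ 0 := by linarith
        have : N P - 1 ≠ 0 := by linarith
        field_simp
  calc _ ≤ ∏ P ∈ E, ∑ e ∈ Finset.Icc 1 R, (1 / N P) ^ e := by
        rw [Finset.prod_sum]
        have key : ∀ a ∈ S.filter (fun a => supp a = E), 1 / (Ideal.absNorm a : ℝ) =
            ∏ x ∈ E.attach, (1 / N x.1) ^
              ((UniqueFactorizationMonoid.normalizedFactors a).count x.1) := by
          intro a ha
          obtain ⟨haS, haE⟩ := Finset.mem_filter.1 ha
          rw [hnorm a haS, haE, Finset.prod_attach E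
            (fun x => (1 / N x) ^ ((UniqueFactorizationMonoid.normalizedFactors a).count x))]
          push_cast
          simp [hN]
        rw [Finset.sum_congr rfl key]
        have := Finset.sum_le_sum_of_subset_of_nonneg
          (s := (S.filter (fun a => supp a = E)).image
            (fun a => fun (x : Ideal (𝓞 K)) (_ : x ∈ E) =>
              (UniqueFactorizationMonoid.normalizedFactors a).count x))
          (t := E.pi fun _ => Finset.Icc 1 R)
          (f := fun p => ∏ x ∈ E.attach, (1 / N x.1) ^ (p x.1 x.2)) ?_ ?_
        · rw [Finset.sum_image] at this
          · exact this
          · intro a ha a' ha' h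
            obtain ⟨haS, haE⟩ := Finset.mem_filter.1 ha
            obtain ⟨haS', haE'⟩ := Finset.mem_filter.1 ha'
            rw [hfac a haS, hfac a' haS', haE, haE']
            refine Finset.prod_congr rfl fun P hP => ?_
            have := congrFun (congrFun h P) hP
            simp only at this
            rw [this]
        · intro p hp
          obtain ⟨a, ha, rfl⟩ := Finset.mem_image.1 hp
          obtain ⟨haS, haE⟩ := Finset.mem_filter.1 ha
          rw [Finset.mem_pi]
          intro P hP
          have := hcount a haS P (haE ▸ hP)
          exact Finset.mem_Icc.2 ⟨this.1, this.2.1⟩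
        · intro p _ _
          positivity
    _ ≤ ∏ P ∈ E, 1 / (idN K P - 1) :=
        Finset.prod_le_prod (fun P _ => by positivity) hgeom
    _ = _ := by simp [Finset.prod_inv_distrib]

theorem one_le_sieveG (R : ℕ) (hR : 1 ≤ R) : 1 ≤ sieveG K R := by
  have := sieveG_ge (K := K) R {⊤} (by
    intro I hI
    rw [Finset.mem_singleton] at hI
    subst hI
    rw [mem_idealsLE]
    simp [hR])
  simpa using this

variable (K) in
theorem sieveG_le (ε : ℝ) (hε : 0 < ε) : ∃ C : ℝ, 0 < C ∧ ∀ R : ℕ, 1 ≤ R →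
    sieveG K R ≤ C * (R:ℝ) ^ ε := by
  classical
  obtain ⟨C, hC0, hC⟩ := ideal_sum_bound K ε hε
  refine ⟨Real.exp (2 * C), Real.exp_pos _, ?_⟩
  intro R hR
  have hR0 : (0:ℝ) < R := by exact_mod_cast hR
  set N : Ideal (𝓞 K) → ℝ := fun P => (Ideal.absNorm P : ℝ) with hN
  have hN2 : ∀ P ∈ primesLE K R, 2 ≤ N P := by
    intro P hP
    have h := mem_primesLE.1 hP
    simp only [hN]
    exact_mod_cast two_le_absNorm_of_prime h.1.2 h.2
  calc sieveG K R ≤ ∑ E ∈ sieveD K R, (R:ℝ) ^ ε * ∏ P ∈ E, (2 * (N P) ^ (-(1 + ε))) := by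
        refine Finset.sum_le_sum fun E hE => ?_
        obtain ⟨hE1, hE2⟩ := mem_sieveD.1 hE
        have h1 : ∏ P ∈ E, (N P) ^ ε ≤ (R:ℝ) ^ ε := by
          rw [Real.finsetProd_rpow _ _ fun P hP => by linarith [hN2 P (hE1 hP)]]
          refine Real.rpow_le_rpow (by positivity) ?_ hε.le
          simp only [hN]
          exact_mod_cast hE2
        calc 1 / ∏ I ∈ E, (idN K I - 1) = ∏ P ∈ E, 1 / (idN K P - 1) := by
              simp [Finset.prod_inv_distrib]
          _ ≤ ∏ P ∈ E, ((N P) ^ ε * (2 * (N P) ^ (-(1 + ε)))) := by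
              refine Finset.prod_le_prod (fun P _ => ?_) fun P hP => ?_
              · have := two_le_idN P
                exact div_nonneg zero_le_one (by linarith)
              · have h := mem_primesLE.1 (hE1 hP)
                have h2 := hN2 P (hE1 hP)
                rw [idN_of_prime h.1.2 h.2]
                change 1 / (N P - 1) ≤ _
                have h3 : (N P) ^ ε * (2 * (N P) ^ (-(1 + ε))) = 2 / N P := by
                  rw [mul_left_comm, ← Real.rpow_add (by linarith)]
                  rw [show ε + -(1 + ε) = -1 by ring, Real.rpow_neg_one]
                  ring
                rw [h3, div_le_div_iff₀ (by linarith) (by linarith)]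
                linarith
          _ = (∏ P ∈ E, (N P) ^ ε) * ∏ P ∈ E, (2 * (N P) ^ (-(1 + ε))) := Finset.prod_mul_distrib
          _ ≤ _ := by
              gcongr
    _ ≤ ∑ E ∈ (primesLE K R).powerset, (R:ℝ) ^ ε * ∏ P ∈ E, (2 * (N P) ^ (-(1 + ε))) := by
        refine Finset.sum_le_sum_of_subset_of_nonneg ?_ ?_
        · intro E hE
          exact Finset.mem_powerset.2 (mem_sieveD.1 hE).1
        · intro E _ _
          exact mul_nonneg (by positivity) (Finset.prod_nonneg fun P _ => by positivity)
    _ = (R:ℝ) ^ ε * ∏ P ∈ primesLE K R, (1 + 2 * (N P) ^ (-(1 + ε))) := by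
        rw [← Finset.mul_sum, Finset.prod_one_add]
    _ ≤ (R:ℝ) ^ ε * Real.exp (2 * C) := by
        gcongr
        calc _ ≤ ∏ P ∈ primesLE K R, Real.exp (2 * (N P) ^ (-(1 + ε))) := by
              refine Finset.prod_le_prod (fun P _ => by positivity) fun P _ => ?_
              linarith [Real.add_one_le_exp (2 * (N P) ^ (-(1 + ε)))]
          _ = Real.exp (2 * ∑ P ∈ primesLE K R, (N P) ^ (-(1 + ε))) := by
              rw [← Real.exp_sum, Finset.mul_sum]
          _ ≤ _ := by
              refine Real.exp_le_exp.2 ?_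
              have := hC (primesLE K R) fun I hI => (mem_primesLE.1 hI).1.2
              linarith
    _ = _ := mul_comm _ _

end SieveG


open NumberField

section Window

variable {K : Type*} [Field K] [NumberField K]
variable {ι : Type*} [Fintype ι] [DecidableEq ι]

/-- Finset of nonzero prime ideals with norm in `(x, 2 * x]`. -/
noncomputable def primeWin (K : Type*) [Field K] [NumberField K] (x : ℕ) :
    Finset (Ideal (𝓞 K)) := by
  classical
  exact (primesLE K (2 * x)).filter (fun P => x < Ideal.absNorm P)

/-- Finset of ideals with norm in `[A, 16 * A)`. -/
noncomputable def idealWin (K : Type*) [Field K] [NumberField K] (A : ℕ) :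
    Finset (Ideal (𝓞 K)) := by
  classical
  exact (idealsLE K (16 * A)).filter (fun P => A ≤ Ideal.absNorm P ∧ Ideal.absNorm P < 16 * A)

theorem mem_primeWin {x : ℕ} {P : Ideal (𝓞 K)} : P ∈ primeWin K x ↔
    P.IsPrime ∧ P ≠ ⊥ ∧ x < Ideal.absNorm P ∧ Ideal.absNorm P ≤ 2 * x := by
  simp only [primeWin, Finset.mem_filter, mem_primesLE]
  tauto

theorem mem_idealWin {A : ℕ} {a : Ideal (𝓞 K)} : a ∈ idealWin K A ↔
    a ≠ ⊥ ∧ A ≤ Ideal.absNorm a ∧ Ideal.absNorm a < 16 * A := by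
  simp only [idealWin, Finset.mem_filter, mem_idealsLE]
  constructor
  · tauto
  · rintro ⟨h1, h2, h3⟩
    exact ⟨⟨h3.le, h1⟩, h2, h3⟩

set_option maxHeartbeats 1000000 in
theorem window_sieve (x A R M s : ℕ) (d : ℕ) (V C θ : ℝ) (box : Finset (𝓞 K))
    (hx : 1 ≤ x) (hA : 1 ≤ A) (hR : 1 ≤ R) (hRx : R ≤ x)
    (hM1 : 4 * x * A ≤ M ^ d) (hM2 : M ^ d < 8 * x * A)
    (hbox : ∀ m ∈ box, M ^ d ≤ 2 * Ideal.absNorm (Ideal.span {m}) ∧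
        Ideal.absNorm (Ideal.span {m}) ≤ 2 * M ^ d)
    (hV : V = (s:ℝ) ^ d) (hs : 0 < s)
    (hcount : ∀ I : Ideal (𝓞 K), I ≠ ⊥ → ∀ M : Finset (𝓞 K), (∀ m, m ∈ M ↔ m ∈ box ∧ m ∈ I) →
      ∀ θ : ℝ, θ ≤ 1 → C ^ d * (Ideal.absNorm I) ≤ (θ * s) ^ d → 0 ≤ θ →
        |(M.card : ℝ) - V / Ideal.absNorm I| ≤ θ * (V / Ideal.absNorm I))
    (hC : 0 < C)
    (hθ0 : 0 ≤ θ) (hθ1 : θ ≤ 1) (hθG : θ * (sieveG K R) ^ 4 ≤ 1)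
    (H1 : C ^ d * (2 * x) ≤ (1 / 2 * s) ^ d)
    (H2 : C ^ d * (16 * A * R ^ 2) ≤ (θ * s) ^ d) :
    ((primeWin K x).card : ℝ) * sieveG K R ≤
      8 * x * ∑ a ∈ idealWin K A, 1 / (Ideal.absNorm a : ℝ) := by
  classical
  set G := sieveG K R with hG
  have hG1 : 1 ≤ G := one_le_sieveG R hR
  have hV0 : 0 < V := by rw [hV]; positivity
  -- lower bound for each prime
  have hlow : ∀ P ∈ primeWin K x, V / (4 * x) ≤ ((box.filter (fun m => m ∈ P)).card : ℝ) := by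
    intro P hP
    obtain ⟨hPp, hP0, hP1, hP2⟩ := mem_primeWin.1 hP
    have hx0 : (0:ℝ) < x := by exact_mod_cast hx
    have hn0 : (0:ℝ) < Ideal.absNorm P := by exact_mod_cast (by omega : 0 < Ideal.absNorm P)
    have hn2 : (Ideal.absNorm P : ℝ) ≤ 2 * x := by exact_mod_cast hP2
    have := hcount P hP0 (box.filter (fun m => m ∈ P)) (by simp) (1/2) (by norm_num)
      (le_trans (by gcongr) H1) (by norm_num)
    have h2 := (abs_le.1 this).1
    have h3 : V / (4 * x) ≤ 1 / 2 * (V / Ideal.absNorm P) := by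
      have : 1 / 2 * (V / Ideal.absNorm P) = V / (2 * Ideal.absNorm P) := by field_simp
      rw [this]
      exact div_le_div_of_nonneg_left hV0.le (by positivity) (by linarith)
    linarith
  -- the sieve bound
  have hsieve : ∀ a ∈ idealWin K A,
      ((box.filter (fun m => ∃ P ∈ primeWin K x, Ideal.span {m} = P * a)).card : ℝ) * G ≤
        2 * V * (1 / Ideal.absNorm a) := by
    intro a ha
    obtain ⟨ha0, haA, haA2⟩ := mem_idealWin.1 ha
    have hn0 : (0:ℝ) < Ideal.absNorm a := by exact_mod_cast (by omega : 0 < Ideal.absNorm a)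
    have hn2 : (Ideal.absNorm a : ℝ) ≤ 16 * A := by exact_mod_cast haA2.le
    set T : 𝓞 K → Finset (Ideal (𝓞 K)) := fun m => (primesLE K R).filter (fun Q => m ∈ a * Q)
      with hT
    have hsel := selberg_sieve (idN K) two_le_idN (sieveD K R) sieveD_down
      (box.filter (fun m => m ∈ a)) T (V / Ideal.absNorm a) θ (by positivity) hθ0 ?_ G rfl
    · have hsub : box.filter (fun m => ∃ P ∈ primeWin K x, Ideal.span {m} = P * a) ⊆
          (box.filter (fun m => m ∈ a)).filter (fun m => ∀ D ∈ sieveD K R, D ⊆ T m → D = ∅) := by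
        intro m hm
        obtain ⟨hmb, P, hP, hmP⟩ := Finset.mem_filter.1 hm
        obtain ⟨hPp, hP0, hP1, hP2⟩ := mem_primeWin.1 hP
        refine Finset.mem_filter.2 ⟨Finset.mem_filter.2 ⟨hmb, ?_⟩, ?_⟩
        · rw [← Ideal.dvd_span_singleton, hmP]; exact dvd_mul_left _ _
        · intro D hD hDT
          by_contra hne
          obtain ⟨Q, hQ⟩ := Finset.nonempty_iff_ne_empty.2 hne
          obtain ⟨hQR, hQm⟩ := Finset.mem_filter.1 (hDT hQ)
          obtain ⟨⟨hQ1, hQ0⟩, hQp⟩ := mem_primesLE.1 hQR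
          rw [← Ideal.dvd_span_singleton, hmP, mul_comm P a,
            mul_dvd_mul_iff_left (by exact ha0)] at hQm
          have hle : P ≤ Q := Ideal.le_of_dvd hQm
          have := (hPp.isMaximal hP0).eq_of_le hQp.ne_top hle
          subst this
          omega
      have h1 : ((box.filter (fun m => ∃ P ∈ primeWin K x, Ideal.span {m} = P * a)).card : ℝ) * G ^ 2
          ≤ V / Ideal.absNorm a * (G + θ * G ^ 5) :=
        le_trans (mul_le_mul_of_nonneg_right (by exact_mod_cast Finset.card_le_card hsub)
          (by positivity)) hsel
      have h2 : V / Ideal.absNorm a * (G + θ * G ^ 5) ≤ V / Ideal.absNorm a * (2 * G) := by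
        gcongr
        nlinarith
      have h3 : ((box.filter (fun m => ∃ P ∈ primeWin K x, Ideal.span {m} = P * a)).card : ℝ) * G * G
          ≤ 2 * V * (1 / Ideal.absNorm a) * G := by
        calc _ = ((box.filter (fun m => ∃ P ∈ primeWin K x,
                  Ideal.span {m} = P * a)).card : ℝ) * G ^ 2 := by ring
          _ ≤ _ := h1.trans h2
          _ = _ := by ring
      exact le_of_mul_le_mul_right h3 (by linarith)
    · intro D₁ hD₁ D₂ hD₂
      obtain ⟨h11, h12⟩ := mem_sieveD.1 hD₁
      obtain ⟨h21, h22⟩ := mem_sieveD.1 hD₂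
      set D := D₁ ∪ D₂ with hD
      have hDp : D ⊆ primesLE K R := Finset.union_subset h11 h21
      have hDprime : ∀ Q ∈ D, Prime Q := by
        intro Q hQ
        obtain ⟨⟨hQ1, hQ0⟩, hQp⟩ := mem_primesLE.1 (hDp hQ)
        exact Ideal.prime_of_isPrime hQ0 hQp
      have hDge : ∀ Q ∈ D, 1 ≤ Ideal.absNorm Q := by
        intro Q hQ
        obtain ⟨⟨hQ1, hQ0⟩, hQp⟩ := mem_primesLE.1 (hDp hQ)
        have := two_le_absNorm_of_prime hQ0 hQp
        omega
      have hprodN : ∏ Q ∈ D, Ideal.absNorm Q ≤ R ^ 2 := by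
        have h3 := Finset.prod_union_inter (s₁ := D₁) (s₂ := D₂) (f := fun Q => Ideal.absNorm Q)
        have h4 : 1 ≤ ∏ Q ∈ D₁ ∩ D₂, Ideal.absNorm Q :=
          Finset.one_le_prod' fun Q hQ =>
            hDge Q (Finset.mem_union_left _ (Finset.mem_inter.1 hQ).1)
        calc _ ≤ (∏ Q ∈ D, Ideal.absNorm Q) * ∏ Q ∈ D₁ ∩ D₂, Ideal.absNorm Q :=
              Nat.le_mul_of_pos_right _ h4
          _ = _ := h3
          _ ≤ R * R := Nat.mul_le_mul h12 h22
          _ = _ := by ring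
      set I : Ideal (𝓞 K) := a * ∏ Q ∈ D, Q with hI
      have hI0 : I ≠ ⊥ := by
        rw [hI]
        refine mul_ne_zero ha0 (Finset.prod_ne_zero_iff.2 fun Q hQ => (hDprime Q hQ).ne_zero)
      have hNI : (Ideal.absNorm I : ℝ) = Ideal.absNorm a * ∏ Q ∈ D, idN K Q := by
        rw [hI, map_mul, map_prod]
        push_cast
        congr 1
        refine Finset.prod_congr rfl fun Q hQ => ?_
        obtain ⟨⟨hQ1, hQ0⟩, hQp⟩ := mem_primesLE.1 (hDp hQ)
        rw [idN_of_prime hQ0 hQp]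
      have := hcount I hI0 ((box.filter (fun m => m ∈ a)).filter (fun m => D ⊆ T m)) ?_ θ hθ1 ?_ hθ0
      · rw [hNI, ← div_div] at this
        exact this
      · intro m
        simp only [Finset.mem_filter, and_assoc]
        refine and_congr_right fun _ => ?_
        rw [← Ideal.dvd_span_singleton (I := I), ← Ideal.dvd_span_singleton (I := a)]
        constructor
        · rintro ⟨⟨c, hc⟩, hDT⟩
          rw [hc, hI, mul_dvd_mul_iff_left (by exact ha0)]
          refine Finset.prod_primes_dvd c hDprime fun Q hQ => ?_
          have := (Finset.mem_filter.1 (hDT hQ)).2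
          rwa [← Ideal.dvd_span_singleton, hc, mul_dvd_mul_iff_left (by exact ha0)] at this
        · intro h
          refine ⟨(dvd_mul_right a (∏ Q ∈ D, Q)).trans h, fun Q hQ => Finset.mem_filter.2 ⟨hDp hQ, ?_⟩⟩
          rw [← Ideal.dvd_span_singleton]
          have hQI : a * Q ∣ I := by
            rw [hI]
            exact mul_dvd_mul_left a (Finset.dvd_prod_of_mem (fun Q => Q) hQ)
          exact hQI.trans h
      · refine le_trans ?_ H2
        refine mul_le_mul_of_nonneg_left ?_ (by positivity)
        rw [hI, map_mul, map_prod]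
        push_cast
        have : (∏ Q ∈ D, (Ideal.absNorm Q : ℝ)) ≤ (R:ℝ) ^ 2 := by exact_mod_cast hprodN
        exact mul_le_mul hn2 this (Finset.prod_nonneg fun Q _ => Nat.cast_nonneg _)
          (mul_nonneg (by norm_num) (Nat.cast_nonneg _))
  -- double counting
  have hdc : ∑ P ∈ primeWin K x, (box.filter (fun m => m ∈ P)).card ≤
      ∑ a ∈ idealWin K A,
        (box.filter (fun m => ∃ P ∈ primeWin K x, Ideal.span {m} = P * a)).card := by
    rw [← Finset.card_sigma, ← Finset.card_sigma]
    have hex : ∀ z : (Σ _ : Ideal (𝓞 K), 𝓞 K),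
        z ∈ (primeWin K x).sigma (fun P => box.filter (fun m => m ∈ P)) →
        ∃ a ∈ idealWin K A, Ideal.span {z.2} = z.1 * a := by
      rintro ⟨P, m⟩ hz
      rw [Finset.mem_sigma] at hz
      obtain ⟨hP, hm⟩ := hz
      obtain ⟨hmb, hmP⟩ := Finset.mem_filter.1 hm
      obtain ⟨hPp, hP0, hP1, hP2⟩ := mem_primeWin.1 hP
      simp only at hmb hmP hPp hP0 hP1 hP2 ⊢
      rw [← Ideal.dvd_span_singleton] at hmP
      obtain ⟨a, ha⟩ := hmP
      have hb := hbox m hmb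
      have hmul : Ideal.absNorm (Ideal.span {m}) = Ideal.absNorm P * Ideal.absNorm a := by
        rw [ha, map_mul]
      rw [hmul] at hb
      refine ⟨a, mem_idealWin.2 ⟨?_, ?_, ?_⟩, ha⟩
      · rintro rfl
        rw [Ideal.absNorm_bot, mul_zero, mul_zero] at hb
        have : 0 < 4 * x * A := by positivity
        omega
      · have h1 : 4 * x * A ≤ 2 * (Ideal.absNorm P * Ideal.absNorm a) := hM1.trans hb.1
        have h2 : Ideal.absNorm P * Ideal.absNorm a ≤ 2 * x * Ideal.absNorm a :=
          Nat.mul_le_mul_right _ hP2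
        have h3 : (4 * x) * A ≤ (4 * x) * Ideal.absNorm a := by nlinarith
        exact Nat.le_of_mul_le_mul_left h3 (by omega)
      · have h1 : Ideal.absNorm P * Ideal.absNorm a < 16 * x * A := by
          have := hb.2
          nlinarith
        have h2 : x * Ideal.absNorm a ≤ Ideal.absNorm P * Ideal.absNorm a :=
          Nat.mul_le_mul_right _ hP1.le
        have h3 : x * Ideal.absNorm a < x * (16 * A) := by nlinarith
        exact Nat.lt_of_mul_lt_mul_left h3
    choose! g hg1 hg2 using hex
    refine Finset.card_le_card_of_injOn (fun z => ⟨g z, z.2⟩) ?_ ?_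
    · intro z hz
      have hz' := hz
      rw [Finset.mem_coe, Finset.mem_sigma] at hz'
      rw [Finset.mem_coe, Finset.mem_sigma]
      exact ⟨hg1 z hz, Finset.mem_filter.2 ⟨(Finset.mem_filter.1 hz'.2).1, z.1, hz'.1, hg2 z hz⟩⟩
    · rintro ⟨P, m⟩ hz ⟨P', m'⟩ hz' h
      have h1 := hg2 _ hz
      have h2 := hg2 _ hz'
      simp only [Sigma.mk.injEq, heq_eq_eq] at h
      obtain ⟨h3, rfl⟩ := h
      rw [← h3] at h2
      simp only at h1 h2
      have ha0 := (mem_idealWin.1 (hg1 _ hz)).1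
      have : P = P' := mul_right_cancel₀ ha0 (h1.symm.trans h2)
      rw [this]
  have hx0 : (0:ℝ) < x := by exact_mod_cast hx
  have hfin : ((primeWin K x).card : ℝ) * (V / (4 * x)) * G ≤
      2 * V * ∑ a ∈ idealWin K A, 1 / (Ideal.absNorm a : ℝ) := by
    calc _ = (∑ P ∈ primeWin K x, V / (4 * x)) * G := by simp
      _ ≤ (∑ P ∈ primeWin K x, ((box.filter (fun m => m ∈ P)).card : ℝ)) * G := by
          gcongr with P hP
          exact hlow P hP
      _ ≤ (∑ a ∈ idealWin K A,
        ((box.filter (fun m => ∃ P ∈ primeWin K x, Ideal.span {m} = P * a)).card : ℝ)) * G := by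
          gcongr
          exact_mod_cast hdc
      _ ≤ _ := by
          rw [Finset.sum_mul, Finset.mul_sum]
          exact Finset.sum_le_sum hsieve
  have h5 : ((primeWin K x).card : ℝ) * G * V ≤
      8 * x * (∑ a ∈ idealWin K A, 1 / (Ideal.absNorm a : ℝ)) * V := by
    have : ((primeWin K x).card : ℝ) * G * V =
      (4 * x) * (((primeWin K x).card : ℝ) * (V / (4 * x)) * G) := by field_simp
    rw [this]
    calc _ ≤ (4 * x) * (2 * V * ∑ a ∈ idealWin K A, 1 / (Ideal.absNorm a : ℝ)) := by gcongr
      _ = _ := by ring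
  exact le_of_mul_le_mul_right h5 hV0

end Window


open NumberField

section BT

theorem exists_pow_window (d : ℕ) (hd : 0 < d) (B : ℕ) :
    ∃ Y0 : ℕ, ∀ Y : ℕ, Y0 ≤ Y → ∃ M : ℕ, B ≤ M ∧ Y ≤ M ^ d ∧ M ^ d < 2 * Y := by
  refine ⟨(B + 2 * d + 1) ^ d + 1, fun Y hY => ?_⟩
  have hex : ∃ M : ℕ, Y ≤ M ^ d := ⟨Y, Nat.le_self_pow hd.ne' Y⟩
  classical
  set M := Nat.find hex with hM
  have h1 : Y ≤ M ^ d := Nat.find_spec hex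
  have hMB : B + 2 * d + 1 < M := by
    by_contra h
    push Not at h
    have := Nat.pow_le_pow_left h d
    omega
  have h2 : (M - 1) ^ d < Y := by
    have := Nat.find_min hex (m := M - 1) (by omega)
    omega
  refine ⟨M, by omega, h1, ?_⟩
  obtain ⟨m, hm⟩ : ∃ m, M = m + 1 := ⟨M - 1, by omega⟩
  rw [hm] at h2 ⊢ 
  simp only [Nat.add_sub_cancel] at h2
  have hm2 : 2 * d ≤ m := by omega
  suffices (m + 1) ^ d ≤ 2 * m ^ d by omega
  have hmR : (2 * d : ℝ) ≤ m := by exact_mod_cast hm2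
  have hd' : (0:ℝ) < d := by exact_mod_cast hd
  have hb : 1 / 2 ≤ ((m:ℝ) / (m + 1)) ^ d := by
    have := one_add_mul_le_pow (a := -(1 / ((m:ℝ) + 1))) (by
      have : 1 / ((m:ℝ) + 1) ≤ 1 := by
        rw [div_le_one (by positivity)]; linarith
      linarith) d
    have h3 : 1 + -(1 / ((m:ℝ) + 1)) = (m:ℝ) / (m + 1) := by field_simp; ring
    rw [h3] at this
    refine le_trans ?_ this
    have h4 : (d:ℝ) * (1 / ((m:ℝ) + 1)) ≤ 1 / 2 := by
      rw [mul_one_div, div_le_div_iff₀ (by positivity) (by norm_num)]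
      linarith
    linarith
  rw [div_pow, le_div_iff₀ (by positivity)] at hb
  have : ((m:ℝ) + 1) ^ d ≤ 2 * (m:ℝ) ^ d := by linarith
  exact_mod_cast this

variable (K : Type*) [Field K] [NumberField K]

theorem bt_params : ∃ (j0 R0 : ℕ), ∀ x R j : ℕ, 1 ≤ x → R0 ≤ R → R ^ 6 ≤ x → j0 ≤ j →
    ((primeWin K x).card : ℝ) * sieveG K R ≤
      8 * x * ∑ a ∈ idealWin K (16 ^ j), 1 / (Ideal.absNorm a : ℝ) := by
  classical
  set b := RingOfIntegers.basis K with hb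
  have hcard : Fintype.card (Module.Free.ChooseBasisIndex ℤ (𝓞 K)) = Module.finrank ℚ K := by
    rw [← Module.finrank_eq_card_chooseBasisIndex]
    exact RingOfIntegers.rank K
  set d := Fintype.card (Module.Free.ChooseBasisIndex ℤ (𝓞 K)) with hdd
  have hd : 0 < d := by rw [hcard]; exact Module.finrank_pos
  obtain ⟨L, hL, hnb⟩ := norm_box b hcard
  obtain ⟨C, hC, hlc⟩ := lattice_count' b hd
  have hdR : (0:ℝ) < d := by exact_mod_cast hd
  obtain ⟨D, hD, hDG⟩ := sieveG_le K (1 / (4 * d)) (by positivity)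
  obtain ⟨Y0, hY0⟩ := exists_pow_window d hd L
  have hLR : (0:ℝ) < L := by exact_mod_cast hL
  obtain ⟨j0, hj0⟩ := pow_unbounded_of_one_lt ((4 * L * C) ^ d) (by norm_num : (1:ℝ) < 16)
  obtain ⟨R0, hR0⟩ := exists_nat_gt (D ^ (4 * d) * ((2 * L * C) ^ d * 4))
  refine ⟨j0, max (max R0 Y0) 1, ?_⟩
  intro x R j hx hRR hRx hj
  have hR1 : 1 ≤ R := (le_max_right _ _).trans hRR
  have hRR0 : R0 ≤ R := (le_max_left _ _).trans ((le_max_left _ _).trans hRR)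
  have hRY0 : Y0 ≤ R := (le_max_right _ _).trans ((le_max_left _ _).trans hRR)
  have hRx1 : R ≤ x := (Nat.le_self_pow (by norm_num) R).trans hRx
  set A := 16 ^ j with hA
  have hA1 : 1 ≤ A := Nat.one_le_pow _ _ (by norm_num)
  obtain ⟨M, hML, hM1, hM2⟩ := hY0 (4 * x * A) (by nlinarith)
  set s := M / L with hs
  have hsL : s * L ≤ M := Nat.div_mul_le_self M L
  have hs1 : 1 ≤ s := (Nat.one_le_div_iff hL).2 hML
  have hsM : M ≤ s * (2 * L) := by
    have := Nat.lt_div_mul_add (a := M) hL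
    rw [← hs] at this
    nlinarith
  have hsd : (4 * x * A : ℝ) ≤ (s:ℝ) ^ d * (2 * L) ^ d := by
    have h1 : (4 * x * A : ℝ) ≤ (M:ℝ) ^ d := by exact_mod_cast hM1
    have h2 : (M:ℝ) ≤ s * (2 * L) := by exact_mod_cast hsM
    rw [← mul_pow]
    exact h1.trans (by gcongr)
  set G := sieveG K R with hG
  have hG1 : 1 ≤ G := one_le_sieveG R hR1
  have hG0 : 0 < G := by linarith
  have hx0 : (0:ℝ) < x := by exact_mod_cast hx
  have hA0 : (0:ℝ) < A := by exact_mod_cast hA1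
  have hRr : (1:ℝ) ≤ R := by exact_mod_cast hR1
  have hGd : G ^ (4 * d) ≤ D ^ (4 * d) * R := by
    have h1 := hDG R hR1
    calc G ^ (4 * d) ≤ (D * (R:ℝ) ^ ((1:ℝ) / (4 * d))) ^ (4 * d) := by gcongr
      _ = D ^ (4 * d) * R := by
        rw [mul_pow]
        congr 1
        rw [← Real.rpow_natCast ((R:ℝ) ^ ((1:ℝ) / (4 * d))), ← Real.rpow_mul (by positivity)]
        push_cast
        rw [one_div_mul_cancel (by positivity), Real.rpow_one]
  refine window_sieve x A R M s d ((s:ℝ) ^ d) C (1 / G ^ 4)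
    (latBox b (fun i => (M : ℤ) * b.repr 1 i) s) hx hA1 hR1 hRx1 hM1 (by linarith)
    (hnb M s hsL) rfl hs1 ?_ hC (by positivity) ?_ ?_ ?_ ?_
  · intro I hI M' hM' θ hθ1 hθ2 hθ0
    exact hlc I hI _ s M' hM' θ hθ1 hθ2 hθ0
  · rw [div_le_one (by positivity)]
    exact one_le_pow₀ hG1
  · rw [← hG, one_div_mul_cancel (by positivity)]
  · have hAj : (4 * L * C) ^ d ≤ (A:ℝ) := by
      refine hj0.le.trans ?_
      rw [hA]; push_cast
      exact pow_le_pow_right₀ (by norm_num) hj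
    have h2 : C ^ d * (2 * x) * (2 ^ d * (2 * L) ^ d) ≤ (s:ℝ) ^ d * (2 * L) ^ d := by
      refine le_trans ?_ hsd
      calc C ^ d * (2 * x) * (2 ^ d * (2 * L) ^ d) = (2 * x) * (4 * L * C) ^ d := by
            rw [show (4 * L * C : ℝ) = C * (2 * (2 * L)) by ring, mul_pow C, mul_pow 2 (2 * L : ℝ)]; ring
        _ ≤ (2 * x) * A := by gcongr
        _ ≤ _ := by nlinarith
    have h3 : C ^ d * (2 * x) * 2 ^ d ≤ (s:ℝ) ^ d := by
      rw [← mul_assoc] at h2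
      exact le_of_mul_le_mul_right h2 (by positivity)
    rw [mul_pow, one_div, inv_pow, inv_mul_eq_div, le_div_iff₀ (by positivity)]
    exact h3
  · have h2 : C ^ d * (16 * A * R ^ 2) * G ^ (4 * d) * (2 * L) ^ d ≤ (s:ℝ) ^ d * (2 * L) ^ d := by
      refine le_trans ?_ hsd
      have hc : D ^ (4 * d) * ((2 * L * C) ^ d * 4) ≤ (R:ℝ) :=
        hR0.le.trans (by exact_mod_cast hRR0)
      have hxx : (R:ℝ) ^ 6 ≤ x := by exact_mod_cast hRx
      calc C ^ d * (16 * A * R ^ 2) * G ^ (4 * d) * (2 * L) ^ d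
          ≤ C ^ d * (16 * A * R ^ 2) * (D ^ (4 * d) * R) * (2 * L) ^ d := by gcongr
        _ = 4 * A * R ^ 3 * (D ^ (4 * d) * ((2 * L * C) ^ d * 4)) := by
            rw [mul_pow (2 * L : ℝ) C]; ring
        _ ≤ 4 * A * R ^ 3 * R := by gcongr
        _ = 4 * A * R ^ 4 := by ring
        _ ≤ 4 * A * R ^ 6 := by gcongr; norm_num
        _ ≤ 4 * A * x := by gcongr
        _ = _ := by ring
    have h3 := le_of_mul_le_mul_right h2 (by positivity)
    rw [mul_pow, div_pow, one_pow, ← pow_mul, one_div_mul_eq_div, le_div_iff₀ (by positivity)]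
    exact h3

/-- Brun-Titchmarsh type upper bound with an absolute constant. -/
theorem brun_titchmarsh : ∃ x0 : ℕ, ∀ x : ℕ, x0 ≤ x →
    ((primeWin K x).card : ℝ) ≤ 400 * (x / Real.log x) := by
  classical
  obtain ⟨j0, R0, H⟩ := bt_params K
  have hlog16 : Real.log 16 ≤ 3 := by
    have : (16:ℝ) = 2 ^ 4 := by norm_num
    rw [this, Real.log_pow]
    have := Real.log_two_lt_d9
    push_cast; linarith
  have hlog16' : 0 < Real.log 16 := Real.log_pos (by norm_num)
  obtain ⟨x1, hx1⟩ := Filter.eventually_atTop.1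
    ((Real.tendsto_log_atTop.comp tendsto_natCast_atTop_atTop).eventually_ge_atTop
      (50 * ((j0:ℝ) + R0 + 3)))
  refine ⟨max x1 1, fun x hx => ?_⟩
  have hx1' : 50 * ((j0:ℝ) + R0 + 3) ≤ Real.log x := hx1 x ((le_max_left _ _).trans hx)
  have hxpos : 1 ≤ x := (le_max_right _ _).trans hx
  have hx0 : (0:ℝ) < x := by exact_mod_cast hxpos
  have hlogpos : 0 < Real.log x := by
    have : (0:ℝ) ≤ j0 + R0 := by positivity
    linarith
  set j1 := Nat.log 16 x / 6 with hj1
  set R := 16 ^ j1 with hR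
  have hRx : R ^ 6 ≤ x := by
    rw [hR, ← pow_mul]
    exact (Nat.pow_le_pow_right (by norm_num) (Nat.div_mul_le_self _ _)).trans
      (Nat.pow_log_le_self 16 (by omega))
  -- lower bound on j1
  have hlog : Real.log x ≤ (18 * (j1 + 1) : ℝ) := by
    have h1 : x < 16 ^ (Nat.log 16 x + 1) := Nat.lt_pow_succ_log_self (by norm_num) x
    have h2 : Nat.log 16 x + 1 ≤ 6 * (j1 + 1) := by
      have := Nat.lt_div_mul_add (a := Nat.log 16 x) (b := 6) (by norm_num)
      omega
    have h3 : x ≤ 16 ^ (6 * (j1 + 1)) := h1.le.trans (Nat.pow_le_pow_right (by norm_num) h2)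
    have h4 : (x:ℝ) ≤ (16:ℝ) ^ (6 * (j1 + 1)) := by exact_mod_cast h3
    have h5 := Real.log_le_log hx0 h4
    rw [Real.log_pow] at h5
    push_cast at h5
    have h6 : (0:ℝ) ≤ j1 := by positivity
    nlinarith
  have hj1R : (j0:ℝ) + R0 + 1 ≤ j1 := by
    have : (0:ℝ) ≤ j0 + R0 := by positivity
    linarith
  have hj1N : j0 + R0 + 1 ≤ j1 := by exact_mod_cast hj1R
  have hR0 : R0 ≤ R := by
    have : j1 < 16 ^ j1 := Nat.lt_pow_self (by norm_num)
    omega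
  set G := sieveG K R with hG
  have hG1 : 1 ≤ G := one_le_sieveG R (Nat.one_le_pow _ _ (by norm_num))
  have hsum : ∑ j ∈ Finset.Ico j0 j1, ∑ a ∈ idealWin K (16 ^ j), 1 / (Ideal.absNorm a : ℝ) ≤ G := by
    rw [← Finset.sum_biUnion]
    · refine sieveG_ge R _ ?_
      intro a ha
      obtain ⟨j, hj, haj⟩ := Finset.mem_biUnion.1 ha
      obtain ⟨h1, h2, h3⟩ := mem_idealWin.1 haj
      refine mem_idealsLE.2 ⟨h3.le.trans ?_, h1⟩
      rw [hR, ← pow_succ']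
      exact Nat.pow_le_pow_right (by norm_num) (by have := (Finset.mem_Ico.1 hj).2; omega)
    · intro i hi j hj hij
      rw [Function.onFun, Finset.disjoint_left]
      intro a ha hb
      obtain ⟨h1, h2, h3⟩ := mem_idealWin.1 ha
      obtain ⟨_, h5, h6⟩ := mem_idealWin.1 hb
      rw [← pow_succ'] at h3 h6
      have h7 := (Nat.pow_lt_pow_iff_right (by norm_num : 1 < 16)).1 (h2.trans_lt h6)
      have h8 := (Nat.pow_lt_pow_iff_right (by norm_num : 1 < 16)).1 (h5.trans_lt h3)
      omega
  have hmain : ((j1:ℝ) - j0) * (((primeWin K x).card : ℝ) * G) ≤ 8 * x * G := by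
    calc ((j1:ℝ) - j0) * (((primeWin K x).card : ℝ) * G)
        = ∑ j ∈ Finset.Ico j0 j1, (((primeWin K x).card : ℝ) * G) := by
          rw [Finset.sum_const, Nat.card_Ico, nsmul_eq_mul, Nat.cast_sub (by omega)]
      _ ≤ ∑ j ∈ Finset.Ico j0 j1,
          8 * x * ∑ a ∈ idealWin K (16 ^ j), 1 / (Ideal.absNorm a : ℝ) :=
          Finset.sum_le_sum fun j hj => H x R j hxpos hR0 hRx (Finset.mem_Ico.1 hj).1
      _ ≤ _ := by
          rw [← Finset.mul_sum]
          gcongr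
  have hJ : Real.log x ≤ 50 * ((j1:ℝ) - j0) := by
    have : (0:ℝ) ≤ R0 := by positivity
    have : (0:ℝ) ≤ j0 := by positivity
    linarith
  have hm2 : ((j1:ℝ) - j0) * ((primeWin K x).card : ℝ) ≤ 8 * x := by
    rw [← mul_assoc] at hmain
    exact le_of_mul_le_mul_right hmain (by linarith)
  rw [← mul_div_assoc, le_div_iff₀ hlogpos]
  calc ((primeWin K x).card : ℝ) * Real.log x
      ≤ ((primeWin K x).card : ℝ) * (50 * ((j1:ℝ) - j0)) := by gcongr
    _ = 50 * (((j1:ℝ) - j0) * ((primeWin K x).card : ℝ)) := by ring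
    _ ≤ 50 * (8 * x) := by gcongr
    _ = _ := by ring

end BT


section ArithB

/-- The normalized critical orbit. -/
def critB (k : ℤ) : ℕ → ℤ
  | 0 => 0
  | n + 1 => 1 + k * (critB k n * (critB k n - 2))

theorem critB_succ (k : ℤ) (n : ℕ) :
    critB k (n + 1) = 1 + k * (critB k n * (critB k n - 2)) := rfl

theorem critB_one (k : ℤ) : critB k 1 = 1 := by simp [critB]

theorem critB_two (k : ℤ) : critB k 2 = 1 - k := by simp [critB]; ring

theorem critB_three (k : ℤ) : critB k 3 = k ^ 3 - k + 1 := by simp [critB]; ring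

theorem critB_modEq_step (k N a b : ℤ) (h : a ≡ b [ZMOD N]) :
    1 + k * (a * (a - 2)) ≡ 1 + k * (b * (b - 2)) [ZMOD N] := by
  gcongr

theorem critB_add_modEq (k N : ℤ) (i j : ℕ) (h : critB k i ≡ critB k j [ZMOD N]) (t : ℕ) :
    critB k (i + t) ≡ critB k (j + t) [ZMOD N] := by
  induction t with
  | zero => simpa using h
  | succ t ih =>
    rw [← add_assoc, ← add_assoc, critB_succ, critB_succ]
    exact critB_modEq_step k N _ _ ih

theorem critB_modEq_one (k : ℤ) (n : ℕ) (hn : 1 ≤ n) : critB k n ≡ 1 [ZMOD k] := by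
  obtain ⟨m, rfl⟩ : ∃ m, n = m + 1 := ⟨n - 1, by omega⟩
  rw [critB_succ]
  exact (Int.modEq_iff_dvd.2 ⟨-(critB k m * (critB k m - 2)), by ring⟩)

theorem critB_gcd (k p : ℤ) (m n : ℕ) (hm : p ∣ critB k m) (hn : p ∣ critB k n) :
    p ∣ critB k (Nat.gcd m n) := by
  induction m, n using Nat.gcd.induction with
  | H0 n => simpa using hn
  | H1 m n hpos ih =>
    rw [Nat.gcd_rec]
    refine ih ?_ hm
    have h0 : critB k m ≡ critB k 0 [ZMOD p] := by
      simpa [critB] using (Int.modEq_zero_iff_dvd.2 hm)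
    have hstep : ∀ q r : ℕ, critB k (r + q * m) ≡ critB k r [ZMOD p] := by
      intro q r
      induction q with
      | zero => simp
      | succ q ih2 =>
        have := critB_add_modEq k p m 0 h0 (r + q * m)
        rw [zero_add] at this
        have h2 : r + (q + 1) * m = m + (r + q * m) := by ring
        rw [h2]
        exact this.trans ih2
    have := hstep (n / m) (n % m)
    rw [Nat.mod_add_div' n m] at this
    exact Int.modEq_zero_iff_dvd.1 (this.symm.trans (Int.modEq_zero_iff_dvd.2 hn))

/-- if `k * B_m` is a square then contradiction -/
theorem k_mul_critB_not_sq (k : ℤ) (h0 : k ≠ 0) (h1 : k ≠ 1) (h2 : k ≠ -1) (m : ℕ) (hm : 3 ≤ m)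
    (z : ℤ) : k * critB k m ≠ z ^ 2 := by
  intro hz
  obtain ⟨n, rfl⟩ : ∃ n, m = n + 1 := ⟨m - 1, by omega⟩
  have hcop : IsCoprime k (critB k (n + 1)) := by
    rw [critB_succ]
    exact ⟨-(critB k n * (critB k n - 2)), 1, by ring⟩
  obtain ⟨s, hs⟩ := Int.sq_of_isCoprime hcop hz
  have hs0 : s ≠ 0 := by
    rintro rfl
    rcases hs with hs | hs <;> · apply h0; simpa using hs
  have hsdvd : s ∣ z := by
    rw [← Int.pow_dvd_pow_iff (n := 2) (by norm_num), ← hz]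
    rcases hs with hs | hs
    · rw [← hs]; exact dvd_mul_right _ _
    · exact ⟨-critB k (n+1), by linear_combination (critB k (n+1)) * hs⟩
  obtain ⟨w, hw⟩ := hsdvd
  obtain ⟨v, hv⟩ := (critB_modEq_one k n (by omega)).symm.dvd
  rw [critB_succ] at hz
  have hs2 : 2 ≤ |s| := by
    by_contra hlt
    push Not at hlt
    have h3 : |s| = 1 := by
      have := abs_pos.2 hs0; omega
    have h4 : s ^ 2 = 1 := by rw [← sq_abs, h3]; norm_num
    rw [h4] at hs
    rcases hs with hs | hs
    · exact h1 hs
    · exact h2 hs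
  have hss : s ^ 2 = |s| ^ 2 := (sq_abs s).symm
  set S := |s| with hS
  have key : ∀ W T : ℤ, 0 < T → (S ^ 3 * v) ^ 2 - W ^ 2 = T → T ≤ S ^ 2 + 1 → False := by
    intro W T hT0 hT hT1
    have hv0 : v ≠ 0 := by
      rintro rfl
      simp at hT
      nlinarith [sq_nonneg W]
    have hv1 : 1 ≤ |v| := Int.one_le_abs hv0
    set U := S ^ 3 * |v| with hU
    have hU2 : (S ^ 3 * v) ^ 2 = U ^ 2 := by
      rw [hU, mul_pow, mul_pow, sq_abs]
    rw [hU2, ← sq_abs W] at hT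
    have hU0 : S ^ 3 ≤ U := by
      have : 0 ≤ S ^ 3 := by positivity
      nlinarith
    have hUp : 0 ≤ U := by positivity
    have hW0 := abs_nonneg W
    have hlt : |W| < U := by
      by_contra hge
      push Not at hge
      nlinarith
    have h5 : U ^ 2 - |W| ^ 2 ≥ 2 * U - 1 := by nlinarith
    have h6 : S ^ 3 ≥ 2 * S ^ 2 := by nlinarith [sq_nonneg S]
    nlinarith [sq_nonneg S]
  have hspos : s ^ 2 ≠ 0 := pow_ne_zero 2 hs0
  rcases hs with hs | hs
  · have h5 : critB k n = 1 + s ^ 2 * v := by linear_combination hv + v * hs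
    rw [h5, hs, hw] at hz
    have h6 : s ^ 2 * ((s ^ 3 * v) ^ 2 - w ^ 2) = s ^ 2 * (s ^ 2 - 1) := by linear_combination hz
    have h7 := mul_left_cancel₀ hspos h6
    refine key w (S ^ 2 - 1) (by nlinarith) ?_ (by linarith)
    rw [← hss, ← h7, mul_pow, mul_pow]
    have : (S ^ 3) ^ 2 = (s ^ 3) ^ 2 := by rw [← pow_mul, mul_comm, pow_mul, ← hss]; ring
    rw [this]
  · have h5 : critB k n = 1 - s ^ 2 * v := by linear_combination hv + v * hs
    rw [h5, hs, hw] at hz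
    have h6 : s ^ 2 * ((s ^ 3 * v) ^ 2 - w ^ 2) = s ^ 2 * (s ^ 2 + 1) := by linear_combination hz
    have h7 := mul_left_cancel₀ hspos h6
    refine key w (S ^ 2 + 1) (by nlinarith) ?_ (by linarith)
    rw [← hss, ← h7, mul_pow, mul_pow]
    have : (S ^ 3) ^ 2 = (s ^ 3) ^ 2 := by rw [← pow_mul, mul_comm, pow_mul, ← hss]; ring
    rw [this]

theorem k_sq_sub_k_not_sq (k : ℤ) (h0 : k ≠ 0) (h1 : k ≠ 1) (z : ℤ) : k ^ 2 - k ≠ z ^ 2 := by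
  intro hz
  rw [← sq_abs z] at hz
  have hz0 := abs_nonneg z
  set Z := |z|
  rcases lt_or_ge k 0 with hk | hk
  · have h3 : -k < Z := by nlinarith
    have h4 : Z < -k + 1 := by nlinarith
    omega
  · have hk2 : 2 ≤ k := by omega
    have h3 : Z < k := by nlinarith
    have h4 : k - 1 < Z := by nlinarith
    omega

theorem exists_odd_prime_of_mod_three (c : ℤ) (hc : 0 < c) (h3 : c % 3 = 2) :
    ∃ (a b : ℤ) (p : ℕ), p.Prime ∧ c = b ^ 2 * a ∧ b ≠ 0 ∧ (p : ℤ) ∣ a ∧ ¬ (p : ℤ) ^ 2 ∣ a := by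
  lift c to ℕ using hc.le
  obtain ⟨a, b, hab, hsq⟩ := Nat.sq_mul_squarefree c
  have hb0 : b ≠ 0 := by
    rintro rfl; simp at hab; omega
  have ha1 : a ≠ 1 := by
    rintro rfl
    rw [mul_one] at hab
    have hc' : c % 3 = 2 := by omega
    rw [← hab, Nat.pow_mod] at hc'
    have : b % 3 < 3 := Nat.mod_lt _ (by norm_num)
    interval_cases b % 3 <;> simp at hc'
  obtain ⟨p, hp, hpa⟩ := Nat.exists_prime_and_dvd ha1
  refine ⟨a, b, p, hp, by rw [← hab]; push_cast; ring, by exact_mod_cast hb0, by exact_mod_cast hpa, ?_⟩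
  intro h
  have h' : p * p ∣ a := by
    rw [← sq]; exact_mod_cast h
  exact hp.one_lt.ne' (Nat.isUnit_iff.1 (hsq p h'))

theorem critB_odd_mod_three (k : ℤ) (n : ℕ) : critB k (2 * n + 1) ≡ 1 [ZMOD 3] := by
  induction n with
  | zero => simp [critB_one]
  | succ n ih =>
    have h : critB k (2 * n + 1) ≡ critB k 1 [ZMOD 3] := by rw [critB_one]; exact ih
    have := critB_add_modEq k 3 _ _ h 2
    rw [show 2 * n + 1 + 2 = 2 * (n + 1) + 1 by ring, show 1 + 2 = 3 from rfl, critB_three] at this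
    refine this.trans ?_
    refine Int.modEq_iff_dvd.2 ?_
    have h3 : k % 3 = 0 ∨ k % 3 = 1 ∨ k % 3 = 2 := by omega
    refine Int.dvd_of_emod_eq_zero ?_
    rcases h3 with h | h | h <;> simp [Int.sub_emod, pow_succ, Int.mul_emod, h]

theorem critB_odd_mod_two (k : ℤ) (n : ℕ) : critB k (2 * n + 1) ≡ 1 [ZMOD 2] := by
  induction n with
  | zero => simp [critB_one]
  | succ n ih =>
    have h : critB k (2 * n + 1) ≡ critB k 1 [ZMOD 2] := by rw [critB_one]; exact ih
    have := critB_add_modEq k 2 _ _ h 2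
    rw [show 2 * n + 1 + 2 = 2 * (n + 1) + 1 by ring, show 1 + 2 = 3 from rfl, critB_three] at this
    refine this.trans ?_
    refine Int.modEq_iff_dvd.2 ?_
    have h3 : k % 2 = 0 ∨ k % 2 = 1 := by omega
    refine Int.dvd_of_emod_eq_zero ?_
    rcases h3 with h | h <;> simp [Int.sub_emod, pow_succ, Int.mul_emod, h]

theorem critB_neg (k : ℤ) (hk : k ≤ -2) (n : ℕ) : critB k (n + 3) < 0 := by
  induction n with
  | zero => rw [zero_add, critB_three]; nlinarith [sq_nonneg k]
  | succ n ih =>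
    rw [show n + 1 + 3 = n + 3 + 1 by ring, critB_succ]
    set y := critB k (n + 3)
    have : 3 ≤ y * (y - 2) := by nlinarith
    nlinarith

theorem critB_pos (k : ℤ) (hk : 2 ≤ k) (n : ℕ) : 2 ≤ critB k (n + 3) := by
  induction n with
  | zero => rw [zero_add, critB_three]; nlinarith [sq_nonneg k]
  | succ n ih =>
    rw [show n + 1 + 3 = n + 3 + 1 by ring, critB_succ]
    set y := critB k (n + 3) with hy
    have hy3 : y ≠ 2 := by
      have h1 : critB k (n + 3) ≡ 1 [ZMOD k] := critB_modEq_one k _ (by omega)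
      intro h
      rw [← hy, h] at h1
      have h2 := h1.symm.dvd
      have := Int.le_of_dvd (by norm_num) h2
      omega
    have : 3 ≤ y * (y - 2) := by
      have : 3 ≤ y := by omega
      nlinarith
    nlinarith

/-- `n` is a good level, witnessed by a primitive prime divisor with odd exponent. -/
def GoodLevel (k : ℤ) (n : ℕ) : Prop :=
  ∃ (p : ℕ) (a b : ℤ), p.Prime ∧ p ≠ 2 ∧ ¬ (p : ℤ) ∣ k ∧
    (∀ i, 1 ≤ i → i ≤ n → ¬ (p : ℤ) ∣ critB k i) ∧
    critB k (n + 1) = b ^ 2 * a ∧ b ≠ 0 ∧ (p : ℤ) ∣ a ∧ ¬ (p : ℤ) ^ 2 ∣ a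

theorem not_dvd_k_of_dvd_critB (k : ℤ) (p : ℕ) (hp : p.Prime) (m : ℕ) (hm : 1 ≤ m)
    (h : (p : ℤ) ∣ critB k m) : ¬ (p : ℤ) ∣ k := by
  intro hk
  have h1 := (critB_modEq_one k m hm).of_dvd hk
  have h2 := (Int.modEq_zero_iff_dvd.2 h)
  have h3 := (h2.symm.trans h1).dvd
  have h4 : (p:ℤ) ∣ 1 := by simpa using h3
  have : p ∣ 1 := by exact_mod_cast h4
  exact hp.one_lt.ne' (Nat.dvd_one.1 this)

theorem not_dvd_critB_one (k : ℤ) (p : ℕ) (hp : p.Prime) : ¬ (p : ℤ) ∣ critB k 1 := by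
  rw [critB_one]
  intro h
  have : p ∣ 1 := by exact_mod_cast h
  exact hp.one_lt.ne' (Nat.dvd_one.1 this)

theorem good_of_neg (k : ℤ) (hk : k ≤ -2) (n : ℕ) (hq : (n + 1).Prime) (hn : 2 ≤ n) :
    GoodLevel k n := by
  obtain ⟨m, rfl⟩ : ∃ m, n = 2 * m := by
    rcases hq.eq_two_or_odd' with h | h
    · omega
    · obtain ⟨m, hm⟩ := h; exact ⟨m, by omega⟩
  have hneg : critB k (2 * m + 1) < 0 := by
    have := critB_neg k hk (2 * m - 2)
    rwa [show 2 * m - 2 + 3 = 2 * m + 1 by omega] at this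
  have h3 := critB_odd_mod_three k m
  obtain ⟨a, b, p, hp, hc, hb, hpa, hpa2⟩ := exists_odd_prime_of_mod_three (-critB k (2 * m + 1))
    (by linarith) (by unfold Int.ModEq at h3; omega)
  have hpB : (p:ℤ) ∣ critB k (2 * m + 1) := by
    rw [← dvd_neg, hc]; exact hpa.mul_left _
  refine ⟨p, -a, b, hp, ?_, not_dvd_k_of_dvd_critB k p hp _ (by omega) hpB, ?_, by linarith, hb,
    by simpa using hpa, by simpa using hpa2⟩
  · rintro rfl
    have := critB_odd_mod_two k m
    unfold Int.ModEq at this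
    push_cast at hpB
    omega
  · intro i hi1 hi2 hpi
    have h5 := critB_gcd k p i (2 * m + 1) hpi hpB
    have h6 : Nat.gcd i (2 * m + 1) = 1 := by
      refine Nat.Coprime.symm ((Nat.Prime.coprime_iff_not_dvd hq).2 fun h => ?_)
      have := Nat.le_of_dvd (by omega) h
      omega
    rw [h6] at h5
    exact not_dvd_critB_one k p hp h5

/-- Quotient of even terms by `1-k`. -/
def critE (k : ℤ) : ℕ → ℤ
  | 0 => 1
  | n + 1 => 1 - k ^ 3 * (k - 1) * (critE k n ^ 2 * ((k - 1) * critE k n + 2) ^ 2)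

theorem critB_eq_critE (k : ℤ) (n : ℕ) : critB k (2 * n + 2) = (1 - k) * critE k n := by
  induction n with
  | zero => simp [critB_two, critE]
  | succ n ih =>
    rw [show 2 * (n + 1) + 2 = 2 * n + 2 + 1 + 1 by ring, critB_succ, critB_succ, ih, critE]
    ring

theorem critE_mod_three (k : ℤ) (n : ℕ) : critE k n % 3 = 1 := by
  induction n with
  | zero => rfl
  | succ n ih =>
    rw [critE]
    have h3 : k % 3 = 0 ∨ k % 3 = 1 ∨ k % 3 = 2 := by omega
    rcases h3 with h | h | h <;> simp [Int.sub_emod, Int.add_emod, pow_succ, Int.mul_emod, h, ih]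

theorem critE_mod_two (k : ℤ) (n : ℕ) : critE k n % 2 = 1 := by
  cases n with
  | zero => rfl
  | succ n =>
    rw [critE]
    have h3 : k % 2 = 0 ∨ k % 2 = 1 := by omega
    rcases h3 with h | h <;> simp [Int.sub_emod, Int.mul_emod, pow_succ, h]

theorem critE_mod_pred (k : ℤ) (n : ℕ) : critE k n ≡ 1 [ZMOD (k - 1)] := by
  cases n with
  | zero => rfl
  | succ n =>
    rw [critE]
    exact Int.modEq_iff_dvd.2 ⟨k ^ 3 * (critE k n ^ 2 * ((k - 1) * critE k n + 2) ^ 2), by ring⟩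

theorem critB_double (k : ℤ) (q : ℕ) (hq : 2 ≤ q) :
    ∃ t, critB k (2 * q) = critB k q * (1 + critB k q * t) := by
  have h2 : critB k (q + 2) ≡ critB k 2 [ZMOD (critB k q) ^ 2] := by
    rw [critB_two, critB_succ, critB_succ]
    set B := critB k q
    exact Int.modEq_iff_dvd.2 ⟨-(k * (k * (B - 2)) ^ 2), by ring⟩
  have h3 := critB_add_modEq k _ _ _ h2 (q - 2)
  rw [show q + 2 + (q - 2) = 2 * q by omega, show 2 + (q - 2) = q by omega] at h3
  obtain ⟨t, ht⟩ := h3.symm.dvd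
  exact ⟨t, by linear_combination ht⟩

theorem good_of_pos (k : ℤ) (hk : 2 ≤ k) (q : ℕ) (hq : q.Prime) (hq3 : 3 ≤ q) :
    GoodLevel k (2 * q - 1) := by
  obtain ⟨m, hm⟩ : ∃ m, q = 2 * m + 1 := by
    rcases hq.eq_two_or_odd' with h | h
    · omega
    · exact h
  have hBq : critB k q ≡ 1 [ZMOD 3] := by rw [hm]; exact critB_odd_mod_three k m
  have hBq2 : 2 ≤ critB k q := by
    have := critB_pos k hk (q - 3)
    rwa [show q - 3 + 3 = q by omega] at this
  have hB2q2 : 2 ≤ critB k (2 * q) := by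
    have := critB_pos k hk (2 * q - 3)
    rwa [show 2 * q - 3 + 3 = 2 * q by omega] at this
  set E := critE k (q - 1) with hE
  have hBE : critB k (2 * q) = (1 - k) * E := by
    have := critB_eq_critE k (q - 1)
    rwa [show 2 * (q - 1) + 2 = 2 * q by omega] at this
  obtain ⟨t, ht⟩ := critB_double k q (by omega)
  -- B_q coprime to 1 - k
  have hcop : IsCoprime (critB k q) (1 - k) := by
    rw [Int.isCoprime_iff_gcd_eq_one]
    by_contra hne
    obtain ⟨p, hp, hpg⟩ := Nat.exists_prime_and_dvd hne
    have h1 : (p:ℤ) ∣ critB k q := (Int.natCast_dvd_natCast.2 hpg).trans (Int.gcd_dvd_left _ _)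
    have h2 : (p:ℤ) ∣ critB k 2 := by
      rw [critB_two]; exact (Int.natCast_dvd_natCast.2 hpg).trans (Int.gcd_dvd_right _ _)
    have h3 := critB_gcd k p q 2 h1 h2
    have h4 : Nat.gcd q 2 = 1 := by
      rw [hm]; simp
    rw [h4] at h3
    exact not_dvd_critB_one k p hp h3
  obtain ⟨c, hc⟩ : critB k q ∣ E := by
    refine hcop.dvd_of_dvd_mul_left ?_
    rw [← hBE, ht]; exact dvd_mul_right _ _
  have hE3 := critE_mod_three k (q - 1)
  rw [← hE] at hE3
  have hcneg : c < 0 := by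
    have h1 : E < 0 := by
      by_contra h; push Not at h
      nlinarith
    by_contra h; push Not at h
    nlinarith
  have hc3 : c % 3 = 1 := by
    have h1 : E ≡ c [ZMOD 3] := by
      rw [hc]
      simpa using hBq.mul_right c
    unfold Int.ModEq at h1
    omega
  obtain ⟨a, b, p, hp, hcab, hb, hpa, hpa2⟩ := exists_odd_prime_of_mod_three (-c)
    (by linarith) (by omega)
  have hpc : (p:ℤ) ∣ c := by rw [← dvd_neg, hcab]; exact hpa.mul_left _
  have hpE : (p:ℤ) ∣ E := by rw [hc]; exact hpc.mul_left _
  have hpB : (p:ℤ) ∣ critB k (2 * q) := by rw [hBE]; exact hpE.mul_left _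
  have hpp : Prime (p:ℤ) := Nat.prime_iff_prime_int.1 hp
  have hnot1 : ¬ (p:ℤ) ∣ 1 := hpp.not_dvd_one
  have hp1k : ¬ (p:ℤ) ∣ 1 - k := by
    intro h
    have h1 : (p:ℤ) ∣ k - 1 := by rw [← dvd_neg]; simpa using h
    have h2 := (critE_mod_pred k (q - 1)).of_dvd h1
    rw [← hE] at h2
    have := (((Int.modEq_zero_iff_dvd.2 hpE).symm.trans h2).dvd)
    exact hnot1 (by simpa using this)
  have hpq : ¬ (p:ℤ) ∣ critB k q := by
    intro h
    have h1 : (1 - k) * c = 1 + critB k q * t := by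
      have h0 : critB k q ≠ 0 := by omega
      apply mul_left_cancel₀ h0
      rw [← ht, hBE, hc]; ring
    have h2 : (p:ℤ) ∣ 1 + critB k q * t := by rw [← h1]; exact hpc.mul_left _
    exact hnot1 ((dvd_add_left (h.mul_right t)).1 h2)
  refine ⟨p, -((1 - k) * critB k q * a), b, hp, ?_,
    not_dvd_k_of_dvd_critB k p hp _ (by omega) hpB, ?_, ?_, hb, ?_, ?_⟩
  · rintro rfl
    have := critE_mod_two k (q - 1)
    rw [← hE] at this
    push_cast at hpE
    omega
  · intro i hi1 hi2 hpi
    have h5 := critB_gcd k p i (2 * q) hpi hpB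
    have h6 : Nat.gcd i (2 * q) ∣ 2 * q := Nat.gcd_dvd_right _ _
    obtain ⟨u, v', hu, hv, huv⟩ := (Nat.dvd_mul.1 h6)
    rw [← huv] at h5
    rcases (Nat.dvd_prime Nat.prime_two).1 hu with rfl | rfl <;>
      rcases (Nat.dvd_prime hq).1 hv with rfl | rfl
    · exact not_dvd_critB_one k p hp (by simpa using h5)
    · exact hpq (by simpa using h5)
    · exact hp1k (by simpa [critB_two] using h5)
    · have := Nat.le_of_dvd (by omega) (huv ▸ Nat.gcd_dvd_left i _)
      omega
  · rw [show 2 * q - 1 + 1 = 2 * q by omega, hBE, hc]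
    linear_combination (-(1 - k) * critB k q) * hcab
  · rw [dvd_neg]; exact hpa.mul_left _
  · rw [dvd_neg]
    intro h
    have h1 : IsCoprime ((p:ℤ) ^ 2) ((1 - k) * critB k q) := by
      refine IsCoprime.pow_left ?_
      rw [Prime.coprime_iff_not_dvd hpp]
      intro h
      rcases hpp.dvd_or_dvd h with h | h
      · exact hp1k h
      · exact hpq h
    exact hpa2 (h1.dvd_of_dvd_mul_left h)

theorem exists_good (k : ℤ) (h0 : k ≠ 0) (h1 : k ≠ 1) (h2 : k ≠ -1) (N : ℕ) :
    ∃ n, N ≤ n ∧ GoodLevel k n := by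
  obtain ⟨q, hq, hqp⟩ := Nat.exists_infinite_primes (N + 5)
  rcases lt_or_ge k 0 with hk | hk
  · refine ⟨q - 1, by omega, good_of_neg k (by omega) (q - 1) ?_ (by omega)⟩
    rwa [show q - 1 + 1 = q by omega]
  · exact ⟨2 * q - 1, by omega, good_of_pos k (by omega) q hqp (by omega)⟩

end ArithB


set_option linter.unusedSectionVars false

section Tree

/-- The quadratic map over an arbitrary commutative ring. -/
def qF {A : Type*} [CommRing A] (k : ℤ) (x : A) : A := x ^ 2 - 2 * k * x + k

theorem map_qF {A B : Type*} [CommRing A] [CommRing B] (k : ℤ) {T : Type*} [FunLike T A B]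
    [RingHomClass T A B] (φ : T) (x : A) : φ (qF k x) = qF k (φ x) := by
  have h : φ 2 = 2 := map_ofNat φ 2
  simp [qF, h]

theorem map_qF_iter {A B : Type*} [CommRing A] [CommRing B] (k : ℤ) {T : Type*} [FunLike T A B]
    [RingHomClass T A B] (φ : T) (n : ℕ) (x : A) : φ ((qF k)^[n] x) = (qF k)^[n] (φ x) := by
  induction n generalizing x with
  | zero => rfl
  | succ n ih => rw [Function.iterate_succ_apply, Function.iterate_succ_apply, ih, map_qF]

theorem qF_iter_k (k : ℤ) (n : ℕ) : (qF k)^[n] k = k * critB k (n + 1) := by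
  induction n with
  | zero => simp [critB_one]
  | succ n ih =>
    rw [Function.iterate_succ_apply', ih, critB_succ k (n + 1), qF]
    push_cast
    ring

theorem qF_iter_k' {A : Type*} [CommRing A] (k : ℤ) (n : ℕ) :
    (qF k)^[n] (k : A) = ((k * critB k (n + 1) : ℤ) : A) := by
  rw [← qF_iter_k, ← eq_intCast (Int.castRingHom A), ← eq_intCast (Int.castRingHom A), map_qF_iter]

theorem critB_ne_zero (k : ℤ) (h0 : k ≠ 0) (h1 : k ≠ 1) (h2 : k ≠ -1) (n : ℕ) :
    critB k (n + 1) ≠ 0 := by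
  intro h
  rw [critB_succ] at h
  have h3 : k ∣ 1 := ⟨-(critB k n * (critB k n - 2)), by linear_combination h⟩
  rcases Int.isUnit_iff.1 (isUnit_of_dvd_one h3) with h | h
  · exact h1 h
  · exact h2 h

theorem k_critB_ne_zero (k : ℤ) (h0 : k ≠ 0) (h1 : k ≠ 1) (h2 : k ≠ -1) (n : ℕ) :
    k * critB k (n + 1) ≠ 0 := mul_ne_zero h0 (critB_ne_zero k h0 h1 h2 n)

/-- Number fields in which all iterates up to `N` split, and generated by the roots. -/
structure TreeField (k : ℤ) (N : ℕ) (L : Type*) [Field L] [NumberField L] : Prop where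
  galois : IsGalois ℚ L
  surj : ∀ n < N, ∀ α : L, (qF k)^[n] α = 0 → ∃ y, qF k y = α
  faithful : ∀ σ : L ≃ₐ[ℚ] L, (∀ n ≤ N, ∀ x : L, (qF k)^[n] x = 0 → σ x = x) → σ = 1

variable {L : Type*} [Field L] [NumberField L]

theorem qF_eq_iff (k : ℤ) (x y : L) : qF k x = qF k y ↔ x = y ∨ x = 2 * k - y := by
  have h : qF k x - qF k y = (x - y) * (x - (2 * k - y)) := by simp only [qF]; ring
  rw [← sub_eq_zero, h, mul_eq_zero, sub_eq_zero, sub_eq_zero]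

theorem qF_refl (k : ℤ) (y : L) : qF k (2 * k - y) = qF k y := by
  simp only [qF]; ring

theorem finite_roots (k : ℤ) (n : ℕ) : {x : L | (qF k)^[n] x = 0}.Finite := by
  induction n with
  | zero => simp
  | succ n ih =>
    have : {x : L | (qF k)^[n+1] x = 0} = (qF k) ⁻¹' {x : L | (qF k)^[n] x = 0} := by
      ext x; simp
    rw [this]
    refine ih.preimage' fun b _ => ?_
    by_cases h : ∃ y, qF k y = b
    · obtain ⟨y, rfl⟩ := h
      refine (Set.toFinite {y, 2 * (k:L) - y}).subset ?_
      intro x hx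
      simpa using (qF_eq_iff k x y).1 hx
    · convert Set.finite_empty
      ext x
      simp only [Set.mem_preimage, Set.mem_singleton_iff, Set.mem_empty_iff_false, iff_false]
      exact fun hx => h ⟨x, hx⟩

variable (L) in
/-- The roots of the `n`-th iterate. -/
noncomputable def tR (k : ℤ) (n : ℕ) : Finset L := (finite_roots (L := L) k n).toFinset

theorem mem_tR {k : ℤ} {n : ℕ} {x : L} : x ∈ tR L k n ↔ (qF k)^[n] x = 0 := by simp [tR]

theorem mem_tR_succ {k : ℤ} {n : ℕ} {x : L} : x ∈ tR L k (n + 1) ↔ qF k x ∈ tR L k n := by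
  rw [mem_tR, mem_tR, Function.iterate_succ_apply]

theorem map_mem_tR {k : ℤ} {n : ℕ} {x : L} (σ : L ≃ₐ[ℚ] L) : σ x ∈ tR L k n ↔ x ∈ tR L k n := by
  rw [mem_tR, mem_tR, ← map_qF_iter, map_eq_zero_iff σ σ.injective]

theorem ne_k_of_mem_tR {k : ℤ} (h0 : k ≠ 0) (h1 : k ≠ 1) (h2 : k ≠ -1) {n : ℕ} {x : L}
    (hx : x ∈ tR L k n) : x ≠ k := by
  rintro rfl
  rw [mem_tR, qF_iter_k', Int.cast_eq_zero] at hx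
  exact k_critB_ne_zero k h0 h1 h2 n hx

theorem ne_refl_of_mem_tR {k : ℤ} (h0 : k ≠ 0) (h1 : k ≠ 1) (h2 : k ≠ -1) {n : ℕ} {x : L}
    (hx : x ∈ tR L k n) : x ≠ 2 * k - x := by
  intro h
  apply ne_k_of_mem_tR h0 h1 h2 hx
  have : (2:L) * (x - k) = 0 := by linear_combination h
  rcases mul_eq_zero.1 this with h | h
  · norm_num at h
  · exact sub_eq_zero.1 h

theorem fiber_tR [DecidableEq L] {k : ℤ} {n : ℕ} {y : L} (hy : y ∈ tR L k (n + 1)) :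
    (tR L k (n + 1)).filter (fun x => qF k x = qF k y) = {y, 2 * (k:L) - y} := by
  ext x
  simp only [Finset.mem_filter, Finset.mem_insert, Finset.mem_singleton, qF_eq_iff]
  constructor
  · exact fun h => h.2
  · intro h
    refine ⟨?_, h⟩
    rcases h with rfl | rfl
    · exact hy
    · rw [mem_tR_succ, qF_refl]; exact mem_tR_succ.1 hy

variable {k : ℤ} {N : ℕ} 

theorem TreeField.exists_lift (T : TreeField k N L) {n : ℕ} (hn : n < N) {α : L}
    (hα : α ∈ tR L k n) : ∃ y ∈ tR L k (n + 1), qF k y = α := by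
  obtain ⟨y, hy⟩ := T.surj n hn α (mem_tR.1 hα)
  exact ⟨y, by rw [mem_tR_succ, hy]; exact hα, hy⟩

theorem TreeField.prod_sub (T : TreeField k N L) (h0 : k ≠ 0) (h1 : k ≠ 1) (h2 : k ≠ -1)
    {n : ℕ} (hn : n ≤ N) (x : L) : ∏ α ∈ tR L k n, (x - α) = (qF k)^[n] x := by
  classical
  induction n generalizing x with
  | zero =>
    have : tR L k 0 = {0} := by ext; simp [mem_tR]
    simp [this]
  | succ n ih =>
    rw [← Finset.prod_fiberwise_of_maps_to (t := tR L k n) (g := fun x => qF k x)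
      (fun x hx => mem_tR_succ.1 hx), Function.iterate_succ_apply, ← ih (by omega)]
    refine Finset.prod_congr rfl fun α hα => ?_
    obtain ⟨y, hy, rfl⟩ := T.exists_lift (by omega) hα
    rw [fiber_tR hy, Finset.prod_pair (ne_refl_of_mem_tR h0 h1 h2 hy)]
    simp only [qF]; ring

theorem TreeField.even_card (T : TreeField k N L) (h0 : k ≠ 0) (h1 : k ≠ 1) (h2 : k ≠ -1)
    {n : ℕ} (hn : n + 1 ≤ N) : Even (tR L k (n + 1)).card := by
  classical
  rw [Finset.card_eq_sum_card_fiberwise (f := fun x => qF k x) (t := tR L k n)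
    (fun x hx => mem_tR_succ.1 hx)]
  refine Finset.even_sum _ fun α hα => ?_
  obtain ⟨y, hy, rfl⟩ := T.exists_lift (by omega) hα
  rw [fiber_tR hy, Finset.card_pair (ne_refl_of_mem_tR h0 h1 h2 hy)]
  exact even_two

theorem sub_k_sq (k : ℤ) (y : L) : (y - k) ^ 2 = -((k:L) - k ^ 2 - qF k y) := by
  simp only [qF]; ring

theorem TreeField.prod_disc (T : TreeField k N L) (h0 : k ≠ 0) (h1 : k ≠ 1) (h2 : k ≠ -1)
    {n : ℕ} (hn : n ≤ N) : ∏ α ∈ tR L k n, (-((k:L) - k ^ 2 - α)) =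
      if n = 0 then ((k ^ 2 - k : ℤ) : L) else ((k * critB k (n + 2) : ℤ) : L) := by
  rw [Finset.prod_neg, T.prod_sub h0 h1 h2 hn]
  split_ifs with h
  · subst h
    have : tR L k 0 = {0} := by ext; simp [mem_tR]
    simp [this]
  · obtain ⟨m, rfl⟩ : ∃ m, n = m + 1 := ⟨n - 1, by omega⟩
    rw [(T.even_card h0 h1 h2 hn).neg_one_pow, one_mul]
    rw [← qF_iter_k' (A := L) k (m + 1 + 1), Function.iterate_succ_apply (qF k) (m + 1)]
    congr 1
    simp only [qF]; ring

/-- a rational square root of an integer is an integer -/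
theorem int_sq_of_fixed [IsGalois ℚ L] (t : L) (w : ℤ) (ht : t ^ 2 = w)
    (hfix : ∀ σ : L ≃ₐ[ℚ] L, σ t = t) : ∃ z : ℤ, w = z ^ 2 := by
  obtain ⟨r, hr⟩ := (IsGalois.mem_range_algebraMap_iff_fixed t).2 hfix
  have h1 : r ^ 2 = (w : ℚ) := by
    have : algebraMap ℚ L (r ^ 2) = algebraMap ℚ L w := by rw [map_pow, hr, ht]; simp
    exact (algebraMap ℚ L).injective this
  have h2 : IsIntegral ℤ r := by
    refine IsIntegral.of_pow (n := 2) (by norm_num) ?_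
    rw [h1]
    exact isIntegral_algebraMap (R := ℤ) (x := w)
  obtain ⟨z, hz⟩ := IsIntegrallyClosed.isIntegral_iff.1 h2
  refine ⟨z, ?_⟩
  rw [← hz] at h1
  have : ((z ^ 2 : ℤ) : ℚ) = w := by simpa using h1
  exact_mod_cast this.symm

theorem TreeField.transitive (T : TreeField k N L) (h0 : k ≠ 0) (h1 : k ≠ 1) (h2 : k ≠ -1)
    {n : ℕ} (hn : n ≤ N) (x y : L) (hx : x ∈ tR L k n) (hy : y ∈ tR L k n) :
    ∃ σ : L ≃ₐ[ℚ] L, σ x = y := by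
  classical
  have := T.galois
  induction n generalizing x y with
  | zero =>
    rw [mem_tR] at hx hy
    simp at hx hy
    exact ⟨1, by simp [hx, hy]⟩
  | succ n ih =>
    obtain ⟨σ, hσ⟩ := ih (by omega) (qF k x) (qF k y) (mem_tR_succ.1 hx) (mem_tR_succ.1 hy)
    rw [map_qF, qF_eq_iff] at hσ
    rcases hσ with hσ | hσ
    · exact ⟨σ, hσ⟩
    · suffices h : ∃ τ : L ≃ₐ[ℚ] L, τ y = 2 * k - y by
        obtain ⟨τ, hτ⟩ := h
        refine ⟨τ * σ, ?_⟩
        have h3 : τ 2 = 2 := map_ofNat τ 2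
        rw [AlgEquiv.mul_apply, hσ, map_sub, map_mul, hτ]
        simp [h3]
      by_contra hno
      push Not at hno
      set O : Finset L := (tR L k (n + 1)).filter (fun z => ∃ g : L ≃ₐ[ℚ] L, z = g y) with hO
      set t : L := ∏ z ∈ O, (z - k) with ht
      have hOσ : ∀ (σ : L ≃ₐ[ℚ] L) (z : L), σ z ∈ O ↔ z ∈ O := by
        intro σ z
        simp only [hO, Finset.mem_filter, map_mem_tR]
        refine and_congr_right fun _ => ?_
        constructor
        · rintro ⟨g, hg⟩
          refine ⟨σ⁻¹ * g, ?_⟩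
          rw [AlgEquiv.mul_apply, ← hg]
          exact (σ.symm_apply_apply z).symm
        · rintro ⟨g, hg⟩
          exact ⟨σ * g, by rw [hg]; rfl⟩
      have hfix : ∀ σ : L ≃ₐ[ℚ] L, σ t = t := by
        intro σ
        rw [ht, map_prod]
        refine Finset.prod_bij (fun z _ => σ z) (fun z hz => (hOσ σ z).2 hz)
          (fun a _ b _ h => σ.injective h) (fun z hz => ⟨σ.symm z, ?_, by simp⟩) (fun z _ => by simp)
        rw [← hOσ σ]; simpa using hz
      have hsq : t ^ 2 = ∏ α ∈ tR L k n, (-((k:L) - k ^ 2 - α)) := by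
        rw [ht, ← Finset.prod_pow]
        refine Finset.prod_bij (fun z _ => qF k z) ?_ ?_ ?_ ?_
        · intro z hz
          exact mem_tR_succ.1 (Finset.mem_filter.1 hz).1
        · intro z hz z' hz' h
          obtain ⟨_, g, rfl⟩ := Finset.mem_filter.1 hz
          obtain ⟨_, g', rfl⟩ := Finset.mem_filter.1 hz'
          rcases (qF_eq_iff k _ _).1 h with h | h
          · exact h
          · exfalso
            apply hno (g'⁻¹ * g)
            rw [AlgEquiv.mul_apply, h, map_sub, map_mul]
            have : g'⁻¹ (g' y) = y := g'.symm_apply_apply y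
            have h3 : g'⁻¹ 2 = 2 := map_ofNat g'⁻¹ 2
            rw [this, h3, map_intCast]
        · intro α hα
          obtain ⟨g, hg⟩ := ih (by omega) (qF k y) α (mem_tR_succ.1 hy) hα
          refine ⟨g y, Finset.mem_filter.2 ⟨(map_mem_tR g).2 hy, g, rfl⟩, ?_⟩
          rw [← map_qF, hg]
        · intro z _
          exact sub_k_sq k z
      rw [T.prod_disc h0 h1 h2 (by omega)] at hsq
      split_ifs at hsq with hn0
      · obtain ⟨z, hz⟩ := int_sq_of_fixed t _ hsq hfix
        exact k_sq_sub_k_not_sq k h0 h1 z hz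
      · obtain ⟨z, hz⟩ := int_sq_of_fixed t _ hsq hfix
        exact k_mul_critB_not_sq k h0 h1 h2 (n + 2) (by omega) z hz

theorem TreeField.pow_fix (n : ℕ) (σ : L ≃ₐ[ℚ] L) :
    ∀ x ∈ tR L k n, (σ ^ 2 ^ n) x = x := by
  induction n with
  | zero =>
    intro x hx
    rw [mem_tR] at hx
    simp at hx
    simp [hx]
  | succ n ih =>
    intro x hx
    set τ := σ ^ 2 ^ n with hτ
    have h1 := ih _ (mem_tR_succ.1 hx)
    rw [map_qF, qF_eq_iff] at h1
    have h2 : σ ^ 2 ^ (n + 1) = τ * τ := by rw [hτ, ← pow_add]; congr 1; ring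
    rw [h2, AlgEquiv.mul_apply]
    rcases h1 with h | h
    · rw [h, h]
    · have h3 : τ 2 = 2 := map_ofNat τ 2
      rw [h, map_sub, map_mul, h]; simp [h3]

theorem TreeField.pow_eq_one (T : TreeField k N L) (σ : L ≃ₐ[ℚ] L) : σ ^ 2 ^ N = 1 := by
  refine T.faithful _ fun n hn x hx => ?_
  obtain ⟨m, rfl⟩ := Nat.exists_eq_add_of_le hn
  have h1 := TreeField.pow_fix (k := k) n (σ ^ 2 ^ m) x (mem_tR.2 hx)
  rwa [← pow_mul, ← pow_add, add_comm m n] at h1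

theorem TreeField.isPGroup (T : TreeField k N L) : IsPGroup 2 (L ≃ₐ[ℚ] L) :=
  fun σ => ⟨N, T.pow_eq_one σ⟩

end Tree

open NumberField

section Unram

theorem prime_dvd_of_mem {A : Type*} [CommRing A] (P : Ideal A) (hP : P ≠ ⊤) {p : ℕ}
    (hp : p.Prime) (hpP : (p : A) ∈ P) {w : ℤ} (hw : (w : A) ∈ P) : (p : ℤ) ∣ w := by
  by_contra h
  have hc : IsCoprime (p : ℤ) w :=
    (Prime.coprime_iff_not_dvd (Nat.prime_iff_prime_int.1 hp)).2 h
  obtain ⟨u, v, huv⟩ := hc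
  apply hP
  rw [Ideal.eq_top_iff_one]
  have : (1 : A) = u * p + v * w := by exact_mod_cast (congrArg (Int.cast : ℤ → A) huv).symm
  rw [this]
  exact P.add_mem (P.mul_mem_left _ hpP) (P.mul_mem_left _ hw)

variable {L : Type*} [Field L] [NumberField L] {k : ℤ} {N : ℕ}

theorem isIntegral_tR {n : ℕ} {x : L} (hx : x ∈ tR L k n) : IsIntegral ℤ x := by
  induction n generalizing x with
  | zero =>
    rw [mem_tR] at hx
    simp at hx
    rw [hx]; exact isIntegral_zero
  | succ n ih =>
    have h1 := ih (mem_tR_succ.1 hx)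
    have hk : IsIntegral ℤ (k : L) := isIntegral_algebraMap (R := ℤ) (x := k)
    have h2 : IsIntegral ℤ ((x - k) ^ 2) := by
      have : (x - k) ^ 2 = qF k x + k ^ 2 - k := by simp only [qF]; ring
      rw [this]
      exact (h1.add (hk.pow 2)).sub hk
    have h3 := (IsIntegral.of_pow (by norm_num) h2).add hk
    simpa using h3

theorem exists_int_tR {n : ℕ} {x : L} (hx : x ∈ tR L k n) :
    ∃ r : 𝓞 L, (r : L) = x ∧ (qF k)^[n] r = 0 := by
  refine ⟨⟨x, isIntegral_tR hx⟩, rfl, ?_⟩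
  have h := map_qF_iter k (algebraMap (𝓞 L) L) n ⟨x, isIntegral_tR hx⟩
  apply FaithfulSMul.algebraMap_injective (𝓞 L) L
  rw [h, map_zero]
  exact mem_tR.1 hx

theorem qF_sub_mem {A : Type*} [CommRing A] (P : Ideal A) (k : ℤ) (x y : A) (h : x - y ∈ P) (n : ℕ) :
    (qF k)^[n] x - (qF k)^[n] y ∈ P := by
  induction n generalizing x y with
  | zero => simpa
  | succ n ih =>
    rw [Function.iterate_succ_apply, Function.iterate_succ_apply]
    apply ih
    have : qF k x - qF k y = (x + y - 2 * k) * (x - y) := by simp only [qF]; ring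
    rw [this]
    exact P.mul_mem_left _ h

/-- p is a prime not dividing the relevant quantities up to level n -/
def AwayFrom (k : ℤ) (n p : ℕ) : Prop :=
  p.Prime ∧ p ≠ 2 ∧ ¬ (p : ℤ) ∣ k ∧ ∀ i, 1 ≤ i → i ≤ n + 1 → ¬ (p : ℤ) ∣ critB k i

theorem roots_distinct {p n : ℕ} (hp : AwayFrom k n p) (P : Ideal (𝓞 L)) [hP : P.IsPrime]
    (hpP : (p : 𝓞 L) ∈ P) {r s : 𝓞 L} (hr : (qF k)^[n] r = 0) (hs : (qF k)^[n] s = 0)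
    (h : r - s ∈ P) : r = s := by
  obtain ⟨hp1, hp2, hpk, hpB⟩ := hp
  induction n generalizing r s with
  | zero => simp at hr hs; rw [hr, hs]
  | succ n ih =>
    have h1 := ih (r := qF k r) (s := qF k s) hr hs
      (qF_sub_mem P k r s h 1) (fun i hi hi' => hpB i hi (by omega))
    have h2 : (r - s) * (r - (2 * k - s)) = 0 := by
      have : (r - s) * (r - (2 * k - s)) = qF k r - qF k s := by simp only [qF]; ring
      rw [this, h1, sub_self]
    rcases mul_eq_zero.1 h2 with h3 | h3
    · exact sub_eq_zero.1 h3
    · exfalso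
      have h4 : r = 2 * k - s := sub_eq_zero.1 h3
      have h5 : (2 : 𝓞 L) * (k - s) ∈ P := by
        have : (2 : 𝓞 L) * (k - s) = r - s := by rw [h4]; ring
        rwa [this]
      rcases hP.mem_or_mem h5 with h6 | h6
      · have := prime_dvd_of_mem P hP.ne_top hp1 hpP (w := 2) (by exact_mod_cast h6)
        have h7 : p ∣ 2 := by exact_mod_cast this
        exact hp2 ((Nat.prime_dvd_prime_iff_eq hp1 Nat.prime_two).1 h7)
      · have h7 := qF_sub_mem P k _ _ h6 (n + 1)
        rw [hs, sub_zero, qF_iter_k'] at h7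
        have h8 := prime_dvd_of_mem P hP.ne_top hp1 hpP h7
        rcases (Nat.prime_iff_prime_int.1 hp1).dvd_or_dvd h8 with h9 | h9
        · exact hpk h9
        · exact hpB _ (by omega) (by omega) h9

theorem AwayFrom.mono {m n p : ℕ} (h : AwayFrom k n p) (hm : m ≤ n) : AwayFrom k m p :=
  ⟨h.1, h.2.1, h.2.2.1, fun i hi hi' => h.2.2.2 i hi (by omega)⟩

theorem smul_coe_int (g : Gal(L/ℚ)) (x : 𝓞 L) : ((g • x : 𝓞 L) : L) = g x := rfl

/-- An automorphism moving all roots trivially modulo `P` is trivial. -/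
theorem TreeField.inertia_eq_bot (T : TreeField k N L) {p : ℕ} (hp : AwayFrom k N p)
    (P : Ideal (𝓞 L)) [hP : P.IsPrime] (hpP : (p : 𝓞 L) ∈ P) : P.inertia Gal(L/ℚ) = ⊥ := by
  rw [eq_bot_iff]
  intro σ hσ
  rw [Subgroup.mem_bot]
  refine T.faithful σ fun n hn x hx => ?_
  obtain ⟨r, rfl, hr⟩ := exists_int_tR (mem_tR.2 hx)
  have h1 : (qF k)^[n] (σ • r) = 0 := by
    have := map_qF_iter k (MulSemiringAction.toRingHom Gal(L/ℚ) (𝓞 L) σ) n r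
    rw [hr, map_zero] at this
    exact this.symm
  have h2 := roots_distinct (hp.mono hn) P hpP h1 hr (hσ r)
  rw [← smul_coe_int, h2]

theorem perfect_residue (p : ℕ) [Fact p.Prime] (I : Ideal ℤ) [I.IsPrime] (hI : I = Ideal.span {(p:ℤ)}) :
    PerfectField I.ResidueField := by
  have : Finite (ℤ ⧸ I) := by
    rw [hI]
    exact Finite.of_equiv _ (Int.quotientSpanNatEquivZMod p).symm.toEquiv
  infer_instance

theorem TreeField.no_sqrt (T : TreeField k N L) {p : ℕ} (hp : AwayFrom k N p) {w : ℤ}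
    (hw : (p : ℤ) ∣ w) (hw2 : ¬ (p : ℤ) ^ 2 ∣ w) (y : L) : y ^ 2 ≠ (w : L) := by
  intro hy
  have := T.galois
  have hpp := Fact.mk hp.1
  set I : Ideal ℤ := Ideal.span {(p:ℤ)} with hI
  have hp0 : (p : ℤ) ≠ 0 := by exact_mod_cast hp.1.ne_zero
  have hIp : I.IsPrime := (Ideal.span_singleton_prime hp0).2 (Nat.prime_iff_prime_int.1 hp.1)
  have hIm : I.IsMaximal := hIp.isMaximal (by simpa [hI] using hp.1.ne_zero)
  obtain ⟨P, hPm, hPI⟩ := Ideal.exists_maximal_ideal_liesOver_of_isIntegral (S := 𝓞 L) I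
  have hpP : (p : 𝓞 L) ∈ P := by
    have : (p : ℤ) ∈ P.under ℤ := by rw [← hPI.over]; exact Ideal.mem_span_singleton_self _
    simpa [Ideal.mem_comap] using this
  have := perfect_residue p I rfl
  have hin := T.inertia_eq_bot hp P hpP
  have h1 := Ideal.card_inertia_eq_ramificationIdxIn (G := Gal(L/ℚ)) I P
  rw [hin, Ideal.ramificationIdxIn_eq_ramificationIdx I P Gal(L/ℚ), Subgroup.card_bot] at h1
  have hmap : Ideal.map (algebraMap ℤ (𝓞 L)) I = Ideal.span {(p : 𝓞 L)} := by
    rw [hI, Ideal.map_span]; simp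
  have hmap0 : Ideal.map (algebraMap ℤ (𝓞 L)) I ≠ ⊥ := by
    rw [hmap]; simpa using hp.1.ne_zero
  rw [Ideal.IsDedekindDomain.ramificationIdx_eq_multiplicity I P hmap0] at h1
  have hfin : FiniteMultiplicity P (Ideal.map (algebraMap ℤ (𝓞 L)) I) :=
    FiniteMultiplicity.of_prime_left (Ideal.prime_of_isPrime
      (fun hb => by subst hb; simp at hpP; exact hp.1.ne_zero hpP) hPm.isPrime) hmap0
  have h2 : ¬ P ^ 2 ∣ Ideal.map (algebraMap ℤ (𝓞 L)) I := by
    apply hfin.not_pow_dvd_of_multiplicity_lt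
    omega
  obtain ⟨v, rfl⟩ := hw
  have hv : ¬ (p : ℤ) ∣ v := fun ⟨u, hu⟩ => hw2 ⟨u, by rw [hu]; ring⟩
  have hyi : IsIntegral ℤ y := by
    refine IsIntegral.of_pow (n := 2) (by norm_num) ?_
    rw [hy]
    exact isIntegral_algebraMap (R := ℤ) (x := _)
  set z : 𝓞 L := ⟨y, hyi⟩ with hz
  have hz2 : z ^ 2 = (p : 𝓞 L) * v := by
    apply FaithfulSMul.algebraMap_injective (𝓞 L) L
    rw [map_pow, map_mul, map_natCast, map_intCast]
    change y ^ 2 = _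
    rw [hy]; push_cast; rfl
  have hzP : z ∈ P := by
    apply hPm.isPrime.mem_of_pow_mem 2
    rw [hz2]; exact P.mul_mem_right _ hpP
  have hzP2 : (p : 𝓞 L) * v ∈ P ^ 2 := by
    rw [← hz2]; exact Ideal.pow_mem_pow hzP 2
  apply h2
  rw [Ideal.dvd_iff_le, hmap, Ideal.span_le, Set.singleton_subset_iff, SetLike.mem_coe]
  have hc : IsCoprime (p : ℤ) v :=
    (Prime.coprime_iff_not_dvd (Nat.prime_iff_prime_int.1 hp.1)).2 hv
  obtain ⟨a, b, hab⟩ := hc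
  have h3 : (p : 𝓞 L) = a * (p * p) + b * (p * v) := by
    have := congrArg (Int.cast : ℤ → 𝓞 L) hab
    push_cast at this
    linear_combination -(p : 𝓞 L) * this
  rw [h3]
  refine Ideal.add_mem _ (Ideal.mul_mem_left _ _ ?_) (Ideal.mul_mem_left _ _ hzP2)
  rw [← pow_two]; exact Ideal.pow_mem_pow hpP 2

end Unram

open NumberField

section SubTree
variable {L : Type*} [Field L] [NumberField L] {k : ℤ} {N : ℕ}

variable (L) in
/-- The subgroup fixing all roots up to level `m`. -/
def lvlSub (k : ℤ) (m : ℕ) : Subgroup Gal(L/ℚ) where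
  carrier := {σ | ∀ j ≤ m, ∀ x ∈ tR L k j, σ x = x}
  mul_mem' := by
    intro a b ha hb j hj x hx
    rw [AlgEquiv.mul_apply, hb j hj x hx, ha j hj x hx]
  one_mem' := by intro j hj x hx; rfl
  inv_mem' := by
    intro a ha j hj x hx
    conv_lhs => rw [← ha j hj x hx]
    exact a.symm_apply_apply x

theorem mem_lvlSub {m : ℕ} {σ : Gal(L/ℚ)} :
    σ ∈ lvlSub L k m ↔ ∀ j ≤ m, ∀ x ∈ tR L k j, σ x = x := Iff.rfl

instance lvlSub_normal (m : ℕ) : (lvlSub L k m).Normal where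
  conj_mem := by
    intro h hh g j hj x hx
    have h1 : g⁻¹ x ∈ tR L k j := (map_mem_tR _).2 hx
    rw [AlgEquiv.mul_apply, AlgEquiv.mul_apply, hh j hj _ h1]
    exact g.apply_symm_apply x

theorem TreeField.sub (T : TreeField k N L) {m : ℕ} (hm : m ≤ N) :
    TreeField k m (IntermediateField.fixedField (lvlSub L k m)) := by
  have := T.galois
  have hcoe : ∀ (n : ℕ) (x : IntermediateField.fixedField (lvlSub L k m)),
      (((qF k)^[n] x : IntermediateField.fixedField (lvlSub L k m)) : L) = (qF k)^[n] (x : L) := by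
    intro n x
    exact map_qF_iter k (algebraMap (IntermediateField.fixedField (lvlSub L k m)) L) n x
  have hmem : ∀ j ≤ m, ∀ x ∈ tR L k j, x ∈ IntermediateField.fixedField (lvlSub L k m) := by
    intro j hj x hx
    rw [IntermediateField.mem_fixedField_iff]
    intro f hf
    exact hf j hj x hx
  refine ⟨IsGalois.of_fixedField_normal_subgroup _, ?_, ?_⟩
  · intro n hn α hα
    have h1 : (α : L) ∈ tR L k n := by
      rw [mem_tR, ← hcoe, hα]; rfl
    obtain ⟨y, hy, hyα⟩ := T.exists_lift (by omega) h1
    refine ⟨⟨y, hmem (n + 1) (by omega) y hy⟩, ?_⟩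
    apply Subtype.ext
    have := hcoe 1 ⟨y, hmem (n + 1) (by omega) y hy⟩
    exact this.trans hyα
  · intro σ hσ
    have : Normal ℚ (IntermediateField.fixedField (lvlSub L k m)) :=
      (IsGalois.of_fixedField_normal_subgroup (lvlSub L k m)).to_normal
    set τ := σ.liftNormal L with hτ
    have hτc : ∀ x : IntermediateField.fixedField (lvlSub L k m), τ (x : L) = (σ x : L) :=
      fun x => AlgEquiv.liftNormal_commutes σ L x
    have hτH : τ ∈ lvlSub L k m := by
      intro j hj x hx
      have h2 := hτc ⟨x, hmem j hj x hx⟩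
      rw [hσ j hj ⟨x, hmem j hj x hx⟩] at h2
      · exact h2
      · apply Subtype.ext
        rw [hcoe]
        exact mem_tR.1 hx
    ext x
    rw [← hτc]
    exact (IntermediateField.mem_fixedField_iff _ _).1 x.2 τ hτH

end SubTree

open NumberField

set_option linter.unusedVariables false
section Full
variable {L : Type*} [Field L] [NumberField L] {k : ℤ} {N : ℕ}

/-- action on roots at a level -/
instance tRAction (k : ℤ) (n : ℕ) : MulAction Gal(L/ℚ) {x // x ∈ tR L k n} where
  smul g x := ⟨g x.1, (map_mem_tR g).2 x.2⟩
  one_smul x := rfl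
  mul_smul g h x := rfl

theorem tR_smul_coe {n : ℕ} (g : Gal(L/ℚ)) (x : {x // x ∈ tR L k n}) : ((g • x).1 : L) = g x.1 := rfl

open Classical in
/-- the flip vector of an automorphism -/
noncomputable def flipV (k : ℤ) (h : Gal(L/ℚ)) (i : L) : ZMod 2 :=
  if ∀ y, qF k y = i → h y = y then 0 else 1

theorem lvl_apply {n : ℕ} {h : Gal(L/ℚ)} (hh : h ∈ lvlSub L k n) {y : L} (hy : y ∈ tR L k (n + 1)) :
    h y = y ∨ h y = 2 * k - y := by
  have := hh n le_rfl _ (mem_tR_succ.1 hy)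
  rwa [map_qF, qF_eq_iff] at this

theorem alg_two (h : Gal(L/ℚ)) (y : L) : h (2 * k - y) = 2 * k - h y := by
  have h3 : h 2 = 2 := map_ofNat h 2
  rw [map_sub, map_mul, h3, map_intCast]

theorem flipV_eq_zero {h : Gal(L/ℚ)} {y : L} : flipV k h (qF k y) = 0 ↔ h y = y := by
  unfold flipV
  split_ifs with h1
  · simp [h1 y rfl]
  · simp only [one_ne_zero, false_iff]
    intro h2
    apply h1
    intro z hz
    rcases (qF_eq_iff k z y).1 hz with rfl | rfl
    · exact h2
    · rw [alg_two, h2]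

theorem zmod2_cases (a : ZMod 2) : a = 0 ∨ a = 1 := by
  revert a; decide

theorem flipV_eq_one (h0 : k ≠ 0) (h1 : k ≠ 1) (h2 : k ≠ -1) {n : ℕ} {h : Gal(L/ℚ)}
    (hh : h ∈ lvlSub L k n) {y : L} (hy : y ∈ tR L k (n + 1)) :
    flipV k h (qF k y) = 1 ↔ h y = 2 * k - y := by
  have h3 := flipV_eq_zero (k := k) (h := h) (y := y)
  have h4 := ne_refl_of_mem_tR h0 h1 h2 hy
  rcases zmod2_cases (flipV k h (qF k y)) with h5 | h5
  · have h6 := h3.1 h5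
    rw [h5, h6]
    simp [h4]
  · rw [h5] at h3 ⊢
    simp only [one_ne_zero, false_iff] at h3
    have := lvl_apply hh hy
    simp only [true_iff]
    tauto

theorem flipV_mul (T : TreeField k N L) (h0 : k ≠ 0) (h1 : k ≠ 1) (h2 : k ≠ -1) {n : ℕ}
    (hn : n < N) {h g : Gal(L/ℚ)}
    (hh : h ∈ lvlSub L k n) (hg : g ∈ lvlSub L k n) {i : L} (hi : i ∈ tR L k n) :
    flipV k (h * g) i = flipV k h i + flipV k g i := by
  obtain ⟨y, hy, rfl⟩ := T.exists_lift hn hi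
  have hhg := (lvlSub L k n).mul_mem hh hg
  rcases lvl_apply hh hy with h3 | h3 <;> rcases lvl_apply hg hy with h4 | h4
  · rw [flipV_eq_zero.2 h3, flipV_eq_zero.2 h4, flipV_eq_zero.2]
    · rfl
    · rw [AlgEquiv.mul_apply, h4, h3]
  · rw [flipV_eq_zero.2 h3, (flipV_eq_one h0 h1 h2 hg hy).2 h4, (flipV_eq_one h0 h1 h2 hhg hy).2]
    · rfl
    · rw [AlgEquiv.mul_apply, h4, alg_two, h3]
  · rw [flipV_eq_zero.2 h4, (flipV_eq_one h0 h1 h2 hh hy).2 h3, (flipV_eq_one h0 h1 h2 hhg hy).2]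
    · rfl
    · rw [AlgEquiv.mul_apply, h4, h3]
  · rw [(flipV_eq_one h0 h1 h2 hg hy).2 h4, (flipV_eq_one h0 h1 h2 hh hy).2 h3, flipV_eq_zero.2]
    · rfl
    · rw [AlgEquiv.mul_apply, h4, alg_two, h3]; ring

theorem flipV_conj {h g : Gal(L/ℚ)} (i : L) : flipV k h (g i) = flipV k (g⁻¹ * h * g) i := by
  unfold flipV
  have : (∀ y, qF k y = g i → h y = y) ↔ (∀ y, qF k y = i → (g⁻¹ * h * g) y = y) := by
    constructor
    · intro H y hy
      rw [AlgEquiv.mul_apply, AlgEquiv.mul_apply, H (g y) (by rw [← map_qF, hy])]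
      exact g.symm_apply_apply y
    · intro H y hy
      have h1 := H (g⁻¹ y) (by rw [← map_qF, hy]; exact g.symm_apply_apply i)
      rw [AlgEquiv.mul_apply, AlgEquiv.mul_apply] at h1
      have h2 : g (g⁻¹ y) = y := g.apply_symm_apply y
      rw [h2] at h1
      have h3 := congrArg g h1
      rw [h2] at h3
      rwa [show g (g⁻¹ (h y)) = h y from g.apply_symm_apply _] at h3
  by_cases h1 : ∀ y, qF k y = g i → h y = y
  · rw [if_pos h1, if_pos (this.1 h1)]
  · rw [if_neg h1, if_neg (fun h2 => h1 (this.2 h2))]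

variable (L) in
/-- annihilator of the flips -/
noncomputable def annD (k : ℤ) (n : ℕ) : Submodule (ZMod 2) ({x // x ∈ tR L k n} → ZMod 2) where
  carrier := {c | ∀ h ∈ lvlSub L k n, ∑ i, c i * flipV k h i.1 = 0}
  add_mem' := by
    intro a b ha hb h hh
    simp only [Pi.add_apply, add_mul, Finset.sum_add_distrib]
    rw [ha h hh, hb h hh, add_zero]
  zero_mem' := by intro h hh; simp
  smul_mem' := by
    intro c x hx h hh
    simp only [Pi.smul_apply, smul_eq_mul, mul_assoc, ← Finset.mul_sum]
    rw [hx h hh, mul_zero]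

theorem mem_annD {n : ℕ} {c : {x // x ∈ tR L k n} → ZMod 2} :
    c ∈ annD L k n ↔ ∀ h ∈ lvlSub L k n, ∑ i, c i * flipV k h i.1 = 0 := Iff.rfl

instance annDAction (k : ℤ) (n : ℕ) : MulAction Gal(L/ℚ) (annD L k n) where
  smul g c := ⟨fun i => c.1 (g⁻¹ • i), by
    intro h hh
    rw [← Equiv.sum_comp (MulAction.toPerm g)]
    rw [← c.2 (g⁻¹ * h * g) (by simpa using (lvlSub_normal n).conj_mem h hh g⁻¹)]
    refine Finset.sum_congr rfl fun i _ => ?_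
    rw [MulAction.toPerm_apply]
    beta_reduce
    rw [inv_smul_smul, tR_smul_coe, flipV_conj]⟩
  one_smul c := by
    apply Subtype.ext; funext i
    change c.1 ((1:Gal(L/ℚ))⁻¹ • i) = c.1 i
    simp
  mul_smul g h c := by
    apply Subtype.ext; funext i
    change c.1 ((g * h)⁻¹ • i) = c.1 (h⁻¹ • g⁻¹ • i)
    rw [mul_inv_rev, mul_smul]

theorem annD_smul_apply {n : ℕ} (g : Gal(L/ℚ)) (c : annD L k n) (i) :
    (g • c).1 i = c.1 (g⁻¹ • i) := rfl

theorem annD_trivial_of_good (T : TreeField k N L) (h0 : k ≠ 0) (h1 : k ≠ 1) (h2 : k ≠ -1) {n : ℕ}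
    (hn0 : n ≠ 0) (hn : n < N) (hgood : GoodLevel k (n + 1)) : annD L k n = ⊥ := by
  classical
  by_contra hne
  have : Fact (Nat.Prime 2) := ⟨Nat.prime_two⟩
  -- find invariant nonzero element
  have hcard : 2 ∣ Nat.card (annD L k n) := by
    obtain ⟨c, hc, hc0⟩ := Submodule.exists_mem_ne_zero_of_ne_bot hne
    have h3 : addOrderOf (⟨c, hc⟩ : annD L k n) = 2 := by
      apply addOrderOf_eq_prime
      · apply Subtype.ext; funext i
        change (2 • c) i = 0
        rw [Pi.smul_apply]
        generalize c i = a
        rcases zmod2_cases a with rfl | rfl <;> rfl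
      · intro h; exact hc0 (congrArg Subtype.val h)
    have h4 := addOrderOf_dvd_natCard (⟨c, hc⟩ : annD L k n)
    rwa [h3] at h4
  obtain ⟨c, hcfix, hc0⟩ := T.isPGroup.exists_fixed_point_of_prime_dvd_card_of_fixed_point
    (annD L k n) hcard (a := 0) (by
      intro g; apply Subtype.ext; funext i; rfl)
  have hconst : ∀ i j, c.1 i = c.1 j := by
    intro i j
    obtain ⟨g, hg⟩ := T.transitive h0 h1 h2 hn.le j.1 i.1 j.2 i.2
    have h3 := congrFun (congrArg Subtype.val (hcfix g)) i
    rw [annD_smul_apply] at h3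
    rw [← h3]
    refine congrArg c.1 ?_
    apply Subtype.ext
    rw [tR_smul_coe, ← hg]
    exact g.symm_apply_apply j.1
  have hone : ∀ i, c.1 i = 1 := by
    intro i
    rcases zmod2_cases (c.1 i) with h3 | h3
    · exfalso
      apply hc0
      apply Subtype.ext; funext j
      rw [hconst j i, h3]; rfl
    · exact h3
  have hsum : ∀ h ∈ lvlSub L k n, ∑ i : {x // x ∈ tR L k n}, flipV k h i.1 = 0 := by
    intro h hh
    have := c.2 h hh
    simpa [hone] using this
  choose s hs1 hs2 using fun i : {x // x ∈ tR L k n} => T.exists_lift hn i.2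
  set t : L := ∏ i, (s i - k) with ht
  have htfix : ∀ h ∈ lvlSub L k n, h t = t := by
    intro h hh
    have h3 : h t = ∏ i, ((-1 : L) ^ (flipV k h i.1).val * (s i - k)) := by
      rw [ht, map_prod]
      refine Finset.prod_congr rfl fun i _ => ?_
      rw [map_sub, map_intCast]
      rcases lvl_apply hh (hs1 i) with h4 | h4
      · have h5 := flipV_eq_zero (k := k).2 h4
        rw [hs2] at h5
        rw [h5, h4]; simp
      · have h5 := (flipV_eq_one h0 h1 h2 hh (hs1 i)).2 h4
        rw [hs2] at h5
        rw [h5, h4, ZMod.val_one]; ring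
    rw [h3, Finset.prod_mul_distrib, Finset.prod_pow_eq_pow_sum]
    have h4 : Even (∑ i : {x // x ∈ tR L k n}, (flipV k h i.1).val) := by
      rw [even_iff_two_dvd, ← ZMod.natCast_eq_zero_iff, Nat.cast_sum]
      simpa using hsum h hh
    rw [h4.neg_one_pow, one_mul]
  have htsq : t ^ 2 = ((k * critB k (n + 2) : ℤ) : L) := by
    have h3 := T.prod_disc h0 h1 h2 hn.le
    rw [if_neg hn0, ← Finset.prod_coe_sort] at h3
    rw [← h3, ht, ← Finset.prod_pow]
    refine Finset.prod_congr rfl fun i _ => ?_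
    rw [sub_k_sq, hs2]
  obtain ⟨p, a, b, hp, hp2, hpk, hpB, hab, hb, hpa, hpa2⟩ := hgood
  have hpk2 : ¬ (p : ℤ) ^ 2 ∣ k * a := by
    intro h
    apply hpa2
    have hc : IsCoprime ((p : ℤ) ^ 2) k :=
      ((Prime.coprime_iff_not_dvd (Nat.prime_iff_prime_int.1 hp)).2 hpk).pow_left
    exact hc.dvd_of_dvd_mul_left h
  have hbL : (b : L) ≠ 0 := by exact_mod_cast hb
  set M := IntermediateField.fixedField (lvlSub L k n) with hM
  have htM : t ∈ M := by
    rw [hM, IntermediateField.mem_fixedField_iff]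
    exact htfix
  refine (T.sub hn.le).no_sqrt (p := p) ⟨hp, hp2, hpk, hpB⟩ (w := k * a) (hpa.mul_left k) hpk2
    (⟨t, htM⟩ / (b : M)) ?_
  apply Subtype.ext
  have h5 : (t / (b : L)) ^ 2 = ((k * a : ℤ) : L) := by
    rw [div_pow, htsq, hab]
    push_cast
    field_simp
  have h6 : (((⟨t, htM⟩ / (b : M)) ^ 2 : M) : L) = (t / (b : L)) ^ 2 := by
    push_cast; rfl
  rw [h6, h5]; push_cast; rfl

theorem TreeField.full (T : TreeField k N L) (h0 : k ≠ 0) (h1 : k ≠ 1) (h2 : k ≠ -1) {n : ℕ}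
    (hn0 : n ≠ 0) (hn : n < N) (hgood : GoodLevel k (n + 1))
    (v : {x // x ∈ tR L k n} → ZMod 2) :
    ∃ h ∈ lvlSub L k n, ∀ i : {x // x ∈ tR L k n}, flipV k h i.1 = v i := by
  classical
  let W : Submodule (ZMod 2) ({x // x ∈ tR L k n} → ZMod 2) :=
    { carrier := {v | ∃ h ∈ lvlSub L k n, ∀ i : {x // x ∈ tR L k n}, flipV k h i.1 = v i}
      add_mem' := by
        rintro a b ⟨h, hh, ha⟩ ⟨g, hg, hb⟩
        exact ⟨h * g, mul_mem hh hg, fun i => by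
          rw [flipV_mul T h0 h1 h2 hn hh hg i.2, ha, hb]; rfl⟩
      zero_mem' := ⟨1, one_mem _, fun i => by simp [flipV]⟩
      smul_mem' := by
        rintro c x ⟨h, hh, hx⟩
        rcases zmod2_cases c with rfl | rfl
        · exact ⟨1, one_mem _, fun i => by simp [flipV]⟩
        · exact ⟨h, hh, fun i => by simpa using hx i⟩ }
  suffices h : W = ⊤ by
    have : v ∈ W := by rw [h]; trivial
    exact this
  by_contra hW
  obtain ⟨f, hf, hfW⟩ := Submodule.exists_le_ker_of_lt_top W (lt_top_iff_ne_top.2 hW)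
  have hc : (fun i => f (Pi.single i 1)) ∈ annD L k n := by
    intro h hh
    have h3 : (fun i : {x // x ∈ tR L k n} => flipV k h i.1) ∈ W := ⟨h, hh, fun i => rfl⟩
    have h4 := hfW h3
    rw [LinearMap.mem_ker, LinearMap.pi_apply_eq_sum_univ] at h4
    rw [← h4]
    refine Finset.sum_congr rfl fun i _ => ?_
    rw [smul_eq_mul, mul_comm]
    congr 1
    refine congrArg f ?_
    funext j
    simp [Pi.single_apply, eq_comm]
  rw [annD_trivial_of_good T h0 h1 h2 hn0 hn hgood, Submodule.mem_bot] at hc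
  apply hf
  apply LinearMap.pi_ext'
  intro i
  ext
  simpa using congrFun hc i

end Full

open NumberField

section Step
variable {L : Type*} [Field L] [NumberField L] {k : ℤ} {N : ℕ}

open Classical in
/-- fixed roots at level n -/
noncomputable def fixS (k : ℤ) (n : ℕ) (σ : Gal(L/ℚ)) : Finset L :=
  (tR L k n).filter (fun x => σ x = x)

theorem mem_fixS {n : ℕ} {σ : Gal(L/ℚ)} {x : L} : x ∈ fixS k n σ ↔ x ∈ tR L k n ∧ σ x = x := by
  simp [fixS]

open Classical in
variable (L) in
/-- automorphisms fixing some root at level n -/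
noncomputable def fixQ (k : ℤ) (n : ℕ) : Finset Gal(L/ℚ) :=
  Finset.univ.filter (fun σ => (fixS k n σ).Nonempty)

theorem mem_fixQ {n : ℕ} {σ : Gal(L/ℚ)} : σ ∈ fixQ L k n ↔ ∃ x ∈ tR L k n, σ x = x := by
  rw [fixQ, Finset.mem_filter]
  simp only [Finset.mem_univ, true_and, Finset.Nonempty, mem_fixS]

theorem TreeField.nonempty (T : TreeField k N L) {n : ℕ} (hn : n ≤ N) : (tR L k n).Nonempty := by
  induction n with
  | zero => exact ⟨0, by simp [mem_tR]⟩
  | succ n ih =>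
    obtain ⟨x, hx⟩ := ih (by omega)
    obtain ⟨y, hy, _⟩ := T.exists_lift (by omega) hx
    exact ⟨y, hy⟩

theorem TreeField.burnside (T : TreeField k N L) (h0 : k ≠ 0) (h1 : k ≠ 1) (h2 : k ≠ -1)
    {n : ℕ} (hn : n ≤ N) : ∑ σ : Gal(L/ℚ), (fixS k n σ).card = Fintype.card Gal(L/ℚ) := by
  classical
  obtain ⟨x0, hx0⟩ := T.nonempty hn
  have e1 : ∀ σ : Gal(L/ℚ), (fixS k n σ).card = ∑ x ∈ tR L k n, if σ x = x then 1 else 0 := by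
    intro σ
    rw [Finset.sum_boole]
    simp [fixS]
  simp only [e1]
  rw [Finset.sum_comm]
  rw [← Finset.card_univ, Finset.card_eq_sum_card_fiberwise (f := fun σ : Gal(L/ℚ) => σ x0)
    (t := tR L k n) (fun σ _ => (map_mem_tR σ).2 hx0)]
  refine Finset.sum_congr rfl fun x hx => ?_
  obtain ⟨τ, hτ⟩ := T.transitive h0 h1 h2 hn x0 x hx0 hx
  rw [Finset.sum_boole, Nat.cast_id]
  refine Finset.card_bij' (fun σ _ => σ * τ) (fun σ _ => σ * τ⁻¹) ?_ ?_ ?_ ?_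
  · intro σ hσ
    simp only [Finset.mem_filter, Finset.mem_univ, true_and] at hσ ⊢
    rw [AlgEquiv.mul_apply, hτ, hσ]
  · intro σ hσ
    simp only [Finset.mem_filter, Finset.mem_univ, true_and] at hσ ⊢
    rw [AlgEquiv.mul_apply, ← hτ]
    rw [show τ⁻¹ (τ x0) = x0 from τ.symm_apply_apply x0, hσ, hτ]
  · intro σ _; simp
  · intro σ _; simp

theorem fixQ_anti {n : ℕ} : fixQ L k (n + 1) ⊆ fixQ L k n := by
  intro σ hσ
  obtain ⟨x, hx, h⟩ := mem_fixQ.1 hσ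
  exact mem_fixQ.2 ⟨qF k x, mem_tR_succ.1 hx, by rw [map_qF, h]⟩

theorem TreeField.full' (T : TreeField k N L) (h0 : k ≠ 0) (h1 : k ≠ 1) (h2 : k ≠ -1) {n : ℕ}
    (hn0 : n ≠ 0) (hn : n < N) (hgood : GoodLevel k (n + 1)) (A : Finset L) :
    ∃ h ∈ lvlSub L k n, ∀ y ∈ tR L k (n + 1),
      (qF k y ∈ A → h y = 2 * k - y) ∧ (qF k y ∉ A → h y = y) := by
  classical
  obtain ⟨h, hh, hv⟩ := T.full h0 h1 h2 hn0 hn hgood (fun i => if i.1 ∈ A then 1 else 0)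
  refine ⟨h, hh, fun y hy => ⟨fun hyA => ?_, fun hyA => ?_⟩⟩
  · have := hv ⟨qF k y, mem_tR_succ.1 hy⟩
    rw [← flipV_eq_one h0 h1 h2 hh hy, this, if_pos hyA]
  · have := hv ⟨qF k y, mem_tR_succ.1 hy⟩
    rw [← flipV_eq_zero (k := k), this, if_neg hyA]

open Classical in
theorem TreeField.step (T : TreeField k N L) (h0 : k ≠ 0) (h1 : k ≠ 1) (h2 : k ≠ -1) {n : ℕ}
    (hn0 : n ≠ 0) (hn : n < N) (hgood : GoodLevel k (n + 1)) (B : ℕ) :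
    ((fixQ L k n).filter (fun σ => (fixS k n σ).card ≤ B)).card ≤
      2 ^ B * (fixQ L k n \ fixQ L k (n + 1)).card := by
  classical
  choose hA hAH hAy using T.full' h0 h1 h2 hn0 hn hgood
  -- the set of fixed roots whose preimages are fixed
  set AA : Gal(L/ℚ) → Finset L := fun g => (fixS k n g).filter (fun i => ∀ y, qF k y = i → g y = y)
    with hAA
  have hfixeq : ∀ (g h : Gal(L/ℚ)), h ∈ lvlSub L k n → fixS k n (g * h) = fixS k n g := by
    intro g h hh
    ext x
    simp only [mem_fixS]
    refine and_congr_right fun hx => ?_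
    rw [AlgEquiv.mul_apply, hh n le_rfl x hx]
  have key : ∀ g, ∀ y ∈ tR L k (n + 1), (g * hA (AA g)) y ≠ y := by
    intro g y hy hgy
    have hyn := mem_tR_succ.1 hy
    have hgi : qF k y ∈ fixS k n g := by
      rw [← hfixeq g _ (hAH (AA g)), mem_fixS]
      exact ⟨hyn, by rw [map_qF, hgy]⟩
    have hg' : g y = y ∨ g y = 2 * k - y := by
      have := (mem_fixS.1 hgi).2
      rwa [map_qF, qF_eq_iff] at this
    have hne := ne_refl_of_mem_tR h0 h1 h2 hy
    rw [AlgEquiv.mul_apply] at hgy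
    rcases hg' with h3 | h3
    · have h4 : qF k y ∈ AA g := by
        rw [hAA, Finset.mem_filter]
        refine ⟨hgi, fun z hz => ?_⟩
        rcases (qF_eq_iff k z y).1 hz with rfl | rfl
        · exact h3
        · rw [alg_two, h3]
      rw [(hAy (AA g) y hy).1 h4, alg_two, h3] at hgy
      exact hne hgy.symm
    · have h4 : qF k y ∉ AA g := by
        rw [hAA, Finset.mem_filter]
        rintro ⟨_, h5⟩
        rw [h5 y rfl] at h3
        exact hne h3
      rw [(hAy (AA g) y hy).2 h4, h3] at hgy
      exact hne hgy.symm
  set S := (fixQ L k n).filter (fun σ => (fixS k n σ).card ≤ B) with hS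
  set S' := (fixQ L k n \ fixQ L k (n + 1)).filter (fun σ => (fixS k n σ).card ≤ B) with hS'
  have hmaps : ∀ g ∈ S, g * hA (AA g) ∈ S' := by
    intro g hg
    rw [hS, Finset.mem_filter] at hg
    rw [hS', Finset.mem_filter, Finset.mem_sdiff, hfixeq g _ (hAH _)]
    refine ⟨⟨?_, ?_⟩, hg.2⟩
    · have := hg.1
      rw [fixQ, Finset.mem_filter] at this ⊢
      rw [hfixeq g _ (hAH _)]; exact ⟨Finset.mem_univ _, this.2⟩
    · intro h
      obtain ⟨y, hy, h3⟩ := mem_fixQ.1 h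
      exact key g y hy h3
  have hcount := Finset.card_le_mul_card_image_of_maps_to (f := fun g => g * hA (AA g)) hmaps (2 ^ B)
    (by
      intro r hr
      have hrB : (fixS k n r).card ≤ B := (Finset.mem_filter.1 hr).2
      calc _ ≤ (((fixS k n r).powerset).image (fun A => r * (hA A)⁻¹)).card := by
            apply Finset.card_le_card
            intro g hg
            rw [Finset.mem_filter] at hg
            rw [Finset.mem_image]
            refine ⟨AA g, ?_, ?_⟩
            · rw [Finset.mem_powerset, ← hg.2, hfixeq g _ (hAH _)]
              exact Finset.filter_subset _ _
            · rw [← hg.2]; simp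
        _ ≤ ((fixS k n r).powerset).card := Finset.card_image_le
        _ = 2 ^ (fixS k n r).card := Finset.card_powerset _
        _ ≤ 2 ^ B := Nat.pow_le_pow_right (by norm_num) hrB)
  exact hcount.trans (Nat.mul_le_mul_left _ (Finset.card_le_card (Finset.filter_subset _ _)))

theorem TreeField.step_real (T : TreeField k N L) (h0 : k ≠ 0) (h1 : k ≠ 1) (h2 : k ≠ -1) {n : ℕ}
    (hn0 : n ≠ 0) (hn : n < N) (hgood : GoodLevel k (n + 1)) (B : ℕ) (hB : 0 < B) :
    ((fixQ L k n).card : ℝ) - Fintype.card Gal(L/ℚ) / B ≤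
      2 ^ B * ((fixQ L k n).card - (fixQ L k (n + 1)).card) := by
  classical
  have h3 := T.step h0 h1 h2 hn0 hn hgood B
  have h4 : B * ((fixQ L k n).filter (fun σ => ¬ (fixS k n σ).card ≤ B)).card ≤
      Fintype.card Gal(L/ℚ) := by
    rw [← T.burnside h0 h1 h2 hn.le, mul_comm, ← smul_eq_mul]
    refine (Finset.card_nsmul_le_sum _ (fun σ => (fixS k n σ).card) _ ?_).trans
      (Finset.sum_le_sum_of_subset (Finset.subset_univ _))
    intro σ hσ
    have := (Finset.mem_filter.1 hσ).2
    omega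
  have h5 := Finset.card_filter_add_card_filter_not (s := fixQ L k n)
    (fun σ => (fixS k n σ).card ≤ B)
  have h6 := Finset.card_sdiff_add_card_eq_card (fixQ_anti (L := L) (k := k) (n := n))
  have h3' : ((((fixQ L k n).filter (fun σ => (fixS k n σ).card ≤ B)).card : ℕ) : ℝ) ≤
      2 ^ B * ((fixQ L k n \ fixQ L k (n + 1)).card : ℝ) := by exact_mod_cast h3
  have h4' : (((fixQ L k n).filter (fun σ => ¬ (fixS k n σ).card ≤ B)).card : ℝ) ≤
      Fintype.card Gal(L/ℚ) / B := by
    rw [le_div_iff₀ (by exact_mod_cast hB), mul_comm]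
    exact_mod_cast h4
  have h6' : ((fixQ L k n \ fixQ L k (n + 1)).card : ℝ) =
      (fixQ L k n).card - (fixQ L k (n + 1)).card := by
    rw [← h6]; push_cast; ring
  have h5' : (((fixQ L k n).filter (fun σ => (fixS k n σ).card ≤ B)).card : ℝ) +
    (((fixQ L k n).filter (fun σ => ¬ (fixS k n σ).card ≤ B)).card : ℝ) = (fixQ L k n).card := by
    exact_mod_cast h5
  rw [← h6']
  linarith

open Classical in
/-- number of good levels in [2, n] -/
noncomputable def goodCnt (k : ℤ) (n : ℕ) : ℕ :=
  ((Finset.Icc 2 n).filter (fun j => GoodLevel k j)).card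

theorem TreeField.decay (T : TreeField k N L) (h0 : k ≠ 0) (h1 : k ≠ 1) (h2 : k ≠ -1)
    (B : ℕ) (hB : 0 < B) {n : ℕ} (hn : n ≤ N) :
    ((fixQ L k n).card : ℝ) / Fintype.card Gal(L/ℚ) - 1 / B ≤ (1 - (1 / 2) ^ B) ^ goodCnt k n := by
  classical
  have hG : (0 : ℝ) < Fintype.card Gal(L/ℚ) := by exact_mod_cast Fintype.card_pos
  have hδ0 : (0 : ℝ) < (1 / 2) ^ B := by positivity
  have hδ1 : ((1 / 2 : ℝ)) ^ B ≤ 1 := pow_le_one₀ (by norm_num) (by norm_num)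
  have hB0 : (0 : ℝ) < 1 / B := by positivity
  have base : ∀ n, goodCnt k n = 0 →
      ((fixQ L k n).card : ℝ) / Fintype.card Gal(L/ℚ) - 1 / B ≤ (1 - (1 / 2) ^ B) ^ goodCnt k n := by
    intro n hn
    rw [hn, pow_zero]
    have : ((fixQ L k n).card : ℝ) / Fintype.card Gal(L/ℚ) ≤ 1 := by
      rw [div_le_one hG]
      exact_mod_cast Finset.card_le_univ _
    linarith
  induction n with
  | zero => exact base 0 (by simp [goodCnt])
  | succ n ih =>
    by_cases hn0 : n = 0
    · subst hn0; exact base 1 (by simp [goodCnt])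
    have ih := ih (by omega)
    have hIcc : Finset.Icc 2 (n + 1) = insert (n + 1) (Finset.Icc 2 n) := by
      ext j; simp; omega
    have hmono : ((fixQ L k (n + 1)).card : ℝ) / Fintype.card Gal(L/ℚ) ≤
        ((fixQ L k n).card : ℝ) / Fintype.card Gal(L/ℚ) := by
      gcongr
      exact fixQ_anti
    by_cases hg : GoodLevel k (n + 1)
    · have hc : goodCnt k (n + 1) = goodCnt k n + 1 := by
        unfold goodCnt
        rw [hIcc, Finset.filter_insert, if_pos hg, Finset.card_insert_of_notMem (by simp)]
      have h3 := T.step_real h0 h1 h2 hn0 (by omega) hg B hB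
      rw [hc, pow_succ]
      set q := ((fixQ L k n).card : ℝ) / Fintype.card Gal(L/ℚ) with hq
      set q' := ((fixQ L k (n + 1)).card : ℝ) / Fintype.card Gal(L/ℚ) with hq'
      have h4 : q - 1 / B ≤ 2 ^ B * (q - q') := by
        have e : (((fixQ L k n).card : ℝ) - Fintype.card Gal(L/ℚ) / B) / Fintype.card Gal(L/ℚ) =
          q - 1 / B := by rw [hq]; field_simp
        have e2 : (2 ^ B * (((fixQ L k n).card : ℝ) - (fixQ L k (n + 1)).card)) /
          Fintype.card Gal(L/ℚ) = 2 ^ B * (q - q') := by rw [hq, hq']; ring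
        rw [← e, ← e2]
        gcongr
      have h5 : (1 / 2 : ℝ) ^ B * (q - 1 / B) ≤ q - q' := by
        have : (1 / 2 : ℝ) ^ B * (2 ^ B * (q - q')) = q - q' := by
          rw [← mul_assoc, ← mul_pow]; norm_num
        rw [← this]
        gcongr
      have h6 : q' - 1 / B ≤ (q - 1 / B) * (1 - (1 / 2) ^ B) := by linarith
      exact h6.trans (mul_le_mul_of_nonneg_right ih (by linarith))
    · have hc : goodCnt k (n + 1) = goodCnt k n := by
        unfold goodCnt
        rw [hIcc, Finset.filter_insert, if_neg hg]
      rw [hc]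
      linarith

theorem goodCnt_unbounded (h0 : k ≠ 0) (h1 : k ≠ 1) (h2 : k ≠ -1) (m : ℕ) : ∃ n, m ≤ goodCnt k n := by
  classical
  induction m with
  | zero => exact ⟨0, Nat.zero_le _⟩
  | succ m ih =>
    obtain ⟨n, hn⟩ := ih
    obtain ⟨j, hj, hg⟩ := exists_good k h0 h1 h2 (n + 2)
    refine ⟨j, ?_⟩
    have : insert j ((Finset.Icc 2 n).filter (fun j => GoodLevel k j)) ⊆
        (Finset.Icc 2 j).filter (fun j => GoodLevel k j) := by
      intro i hi
      simp only [Finset.mem_insert, Finset.mem_filter, Finset.mem_Icc] at hi ⊢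
      rcases hi with rfl | hi
      · exact ⟨⟨by omega, le_rfl⟩, hg⟩
      · exact ⟨⟨hi.1.1, by omega⟩, hi.2⟩
    have h3 := Finset.card_le_card this
    rw [Finset.card_insert_of_notMem (by simp; omega)] at h3
    unfold goodCnt at hn ⊢
    omega

end Step

theorem tree_small (k : ℤ) (h0 : k ≠ 0) (h1 : k ≠ 1) (h2 : k ≠ -1) (ε : ℝ) (hε : 0 < ε) :
    ∃ N : ℕ, ∀ (L : Type) [Field L] [NumberField L], TreeField k N L →
      ((fixQ L k N).card : ℝ) ≤ ε * Fintype.card Gal(L/ℚ) := by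
  obtain ⟨B, hB⟩ := exists_nat_gt (2 / ε)
  have hB0 : 0 < B := by
    have : (0:ℝ) < B := lt_trans (by positivity) hB
    exact_mod_cast this
  have hδ0 : (0 : ℝ) < (1 / 2) ^ B := by positivity
  have hδ1 : ((1 / 2 : ℝ)) ^ B ≤ 1 := pow_le_one₀ (by norm_num) (by norm_num)
  obtain ⟨m, hm⟩ := exists_pow_lt_of_lt_one (half_pos hε) (y := 1 - (1 / 2 : ℝ) ^ B) (by linarith)
  obtain ⟨N, hN⟩ := goodCnt_unbounded h0 h1 h2 m
  refine ⟨N, fun L _ _ T => ?_⟩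
  have hG : (0 : ℝ) < Fintype.card Gal(L/ℚ) := by exact_mod_cast Fintype.card_pos
  have h3 := T.decay h0 h1 h2 B hB0 le_rfl
  have h4 : (1 - (1 / 2 : ℝ) ^ B) ^ goodCnt k N ≤ (1 - (1 / 2 : ℝ) ^ B) ^ m :=
    pow_le_pow_of_le_one (by linarith) (by linarith) hN
  have h5 : (1 : ℝ) / B < ε / 2 := by
    rw [div_lt_iff₀ (by positivity)]
    rw [div_lt_iff₀ hε] at hB
    linarith
  rw [← div_le_iff₀ hG]
  linarith

open NumberField

section Exist
open Polynomial

/-- the iterate polynomials -/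
noncomputable def iterP (k : ℤ) : ℕ → ℚ[X]
  | 0 => X
  | n + 1 => (iterP k n).comp (X ^ 2 - 2 * (k : ℚ[X]) * X + (k : ℚ[X]))

theorem aeval_iterP {L : Type*} [Field L] [Algebra ℚ L] (k : ℤ) (n : ℕ) (x : L) :
    aeval x (iterP k n) = (qF k)^[n] x := by
  induction n generalizing x with
  | zero => simp [iterP]
  | succ n ih =>
    rw [iterP, aeval_comp, ih, Function.iterate_succ_apply]
    congr 1
    have h2 : aeval x (2 : ℚ[X]) = (2 : L) := map_ofNat _ 2
    simp [qF, h2]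

theorem quad_natDegree {L : Type*} [Field L] (b c : L) :
    (X ^ 2 - C b * X + C c : L[X]).natDegree = 2 := by
  compute_degree!

theorem iterP_ne_zero (k : ℤ) (n : ℕ) : iterP k n ≠ 0 := by
  have : (iterP k n).natDegree = 2 ^ n := by
    induction n with
    | zero => simp [iterP]
    | succ n ih =>
      have h := quad_natDegree (2 * k : ℚ) k
      have e : (X ^ 2 - C (2 * k : ℚ) * X + C (k : ℚ) : ℚ[X]) =
          X ^ 2 - 2 * (k : ℚ[X]) * X + (k : ℚ[X]) := by
        have h2 : C (2 : ℚ) = (2 : ℚ[X]) := map_ofNat C 2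
        simp [h2]
      rw [iterP, natDegree_comp, ih, ← e, h]
      ring
  intro h
  rw [h, natDegree_zero] at this
  exact absurd this.symm (by positivity)

theorem treeField_of_split (k : ℤ) (N : ℕ) (L : Type*) [Field L] [NumberField L]
    [hL : IsSplittingField ℚ L (∏ n ∈ Finset.range (N + 1), iterP k n)] : TreeField k N L := by
  have hf0 : (∏ n ∈ Finset.range (N + 1), iterP k n) ≠ 0 :=
    Finset.prod_ne_zero_iff.2 fun n _ => iterP_ne_zero k n
  refine ⟨?_, ?_, ?_⟩
  · have : Normal ℚ L := Normal.of_isSplittingField (∏ n ∈ Finset.range (N + 1), iterP k n)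
    exact ⟨⟩
  · intro n hn α hα
    have hs := hL.splits
    set q : L[X] := X ^ 2 - C (2 * k : L) * X + C (k - α : L) with hq
    have hdvd : q ∣ (iterP k (n + 1)).map (algebraMap ℚ L) := by
      have h1 : (X - C α) ∣ (iterP k n).map (algebraMap ℚ L) := by
        rw [dvd_iff_isRoot, IsRoot, eval_map_algebraMap, aeval_iterP, hα]
      obtain ⟨g, hg⟩ := h1
      refine ⟨g.comp (X ^ 2 - 2 * (k : L[X]) * X + (k : L[X])), ?_⟩
      have h2 : C (2 : L) = (2 : L[X]) := map_ofNat C 2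
      have h2' : Polynomial.map (algebraMap ℚ L) 2 = 2 := map_ofNat (mapRingHom (algebraMap ℚ L)) 2
      rw [iterP, map_comp, hg, mul_comp]
      have e1 : Polynomial.map (algebraMap ℚ L) (X ^ 2 - 2 * (k : ℚ[X]) * X + (k : ℚ[X])) =
        X ^ 2 - 2 * (k : L[X]) * X + (k : L[X]) := by simp
      rw [e1]
      congr 1
      simp [hq, h2]
      ring
    have hdvd2 : q ∣ (∏ n ∈ Finset.range (N + 1), iterP k n).map (algebraMap ℚ L) :=
      hdvd.trans (Polynomial.map_dvd _ (Finset.dvd_prod_of_mem _ (Finset.mem_range.2 (by omega))))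
    have hqs : q.Splits := hs.of_dvd (Polynomial.map_ne_zero hf0) hdvd2
    have hdeg : q.natDegree = 2 := quad_natDegree _ _
    obtain ⟨y, hy⟩ := hqs.exists_eval_eq_zero (by
      intro h
      rw [natDegree_eq_of_degree_eq_some h] at hdeg
      norm_num at hdeg)
    refine ⟨y, ?_⟩
    simp [hq] at hy
    unfold qF
    linear_combination hy
  · intro σ hσ
    have h1 := hL.adjoin_rootSet
    have h2 : (σ : L →ₐ[ℚ] L) = AlgHom.id ℚ L := by
      refine AlgHom.ext_of_adjoin_eq_top h1 ?_
      intro x hx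
      have hx' := (mem_rootSet.1 hx).2
      rw [map_prod, Finset.prod_eq_zero_iff] at hx'
      obtain ⟨n, hn, hx⟩ := hx'
      rw [aeval_iterP] at hx
      exact hσ n (by have := Finset.mem_range.1 hn; omega) x hx
    ext x
    exact DFunLike.congr_fun h2 x

theorem canon_rat {L : Type} [Field L] (f : ℚ[X]) (a : Algebra ℚ L)
    (h1 : @FiniteDimensional ℚ L _ _ a.toModule) (h2 : @IsSplittingField ℚ L _ _ a f) :
    ∃ _ : NumberField L, IsSplittingField ℚ L f := by
  have : CharZero L := algebraRat.charZero L
  obtain rfl : a = DivisionRing.toRatAlgebra := Subsingleton.elim _ _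
  have hn : NumberField L := { to_charZero := this, to_finiteDimensional := h1 }
  exact ⟨hn, h2⟩

theorem exists_treeField (k : ℤ) (N : ℕ) :
    ∃ (L : Type) (_ : Field L) (_ : NumberField L), TreeField k N L := by
  set f : ℚ[X] := ∏ n ∈ Finset.range (N + 1), iterP k n with hf
  obtain ⟨hn, hs⟩ := canon_rat f _
    (@IsSplittingField.finiteDimensional ℚ f.SplittingField _ _ _ f (IsSplittingField.splittingField f))
    (IsSplittingField.splittingField f)
  exact ⟨f.SplittingField, inferInstance, hn, treeField_of_split k N f.SplittingField⟩

end Exist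

open NumberField

theorem card_le_of_pow_eq {R : Type*} [CommRing R] [IsDomain R] {q : ℕ} (hq : 1 < q)
    (h : ∀ x : R, x ^ q = x) : Finite R ∧ Nat.card R ≤ q := by
  classical
  have hdeg : (Polynomial.X ^ q - Polynomial.X : Polynomial R).natDegree = q := by
    rw [Polynomial.natDegree_sub_eq_left_of_natDegree_lt]
    · simp
    · simpa using hq
  have hne : (Polynomial.X ^ q - Polynomial.X : Polynomial R) ≠ 0 := by
    intro h0
    rw [h0, Polynomial.natDegree_zero] at hdeg
    omega
  have hsub : (Set.univ : Set R) ⊆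
      (((Polynomial.X ^ q - Polynomial.X : Polynomial R).roots.toFinset : Finset R) : Set R) := by
    intro x _
    simp only [Finset.mem_coe, Multiset.mem_toFinset]
    rw [Polynomial.mem_roots hne]
    simp [h x]
  have hfin : Finite R := Set.finite_univ_iff.1 ((Finset.finite_toSet _).subset hsub)
  refine ⟨hfin, ?_⟩
  have := Set.ncard_le_ncard hsub (Finset.finite_toSet _)
  rw [Set.ncard_univ, Set.ncard_coe_finset] at this
  refine this.trans ((Multiset.toFinset_card_le _).trans ((Polynomial.card_roots' _).trans ?_))
  exact hdeg.le

section Frob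

variable {k : ℤ} {N : ℕ} {L : Type} [Field L] [NumberField L]

theorem finite_quot_of_mem {E : Type*} [Field E] [NumberField E] {p : ℕ} (hp : p.Prime)
    (P : Ideal (𝓞 E)) (hpP : (p : 𝓞 E) ∈ P) : Finite (𝓞 E ⧸ P) := by
  apply Ideal.finiteQuotientOfFreeOfNeBot
  rintro rfl
  simp at hpP
  exact hp.ne_zero hpP

theorem under_eq_span {E : Type*} [Field E] [NumberField E] {p : ℕ} (hp : p.Prime)
    (P : Ideal (𝓞 E)) [hP : P.IsPrime] (hpP : (p : 𝓞 E) ∈ P) :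
    P.under ℤ = Ideal.span {(p : ℤ)} := by
  ext w
  rw [Ideal.mem_span_singleton]
  constructor
  · intro hw
    exact prime_dvd_of_mem P hP.ne_top hp hpP (by simpa [Ideal.mem_comap] using hw)
  · rintro ⟨v, rfl⟩
    simp only [Ideal.mem_comap, map_mul]
    exact P.mul_mem_right _ (by simpa using hpP)

theorem card_under {E : Type*} [Field E] [NumberField E] {p : ℕ} (hp : p.Prime)
    (P : Ideal (𝓞 E)) [hP : P.IsPrime] (hpP : (p : 𝓞 E) ∈ P) :
    Nat.card (ℤ ⧸ P.under ℤ) = p := by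
  rw [under_eq_span hp P hpP]
  rw [Nat.card_congr (Int.quotientSpanNatEquivZMod p).toEquiv, Nat.card_zmod]

open Pointwise

theorem frob_exists (T : TreeField k N L) {p : ℕ} (hp : p.Prime)
    (P : Ideal (𝓞 L)) [hP : P.IsPrime] (hpP : (p : 𝓞 L) ∈ P) :
    ∃ φ : Gal(L/ℚ), φ ∈ MulAction.stabilizer Gal(L/ℚ) P ∧ ∀ x : 𝓞 L, φ • x - x ^ p ∈ P := by
  have := T.galois
  have := finite_quot_of_mem hp P hpP
  obtain ⟨φ, hφ⟩ := IsArithFrobAt.exists_of_isInvariant ℤ Gal(L/ℚ) P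
  refine ⟨φ, hφ.mem_stabilizer, fun x => ?_⟩
  have h := hφ x
  rw [card_under hp P hpP] at h
  exact h

theorem stab_card (T : TreeField k N L) {p : ℕ} (hp : AwayFrom k N p)
    (P : Ideal (𝓞 L)) [hP : P.IsPrime] (hpP : (p : 𝓞 L) ∈ P) :
    Nat.card (𝓞 L ⧸ P) = p ^ Nat.card (MulAction.stabilizer Gal(L/ℚ) P) := by
  have := T.galois
  have hpp := Fact.mk hp.1
  have hp0 : (p : ℤ) ≠ 0 := by exact_mod_cast hp.1.ne_zero
  have hIp : (Ideal.span {(p:ℤ)}).IsPrime :=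
    (Ideal.span_singleton_prime hp0).2 (Nat.prime_iff_prime_int.1 hp.1)
  have hIm : (Ideal.span {(p:ℤ)}).IsMaximal := hIp.isMaximal (by simpa using hp.1.ne_zero)
  have hlo : P.LiesOver (Ideal.span {(p:ℤ)}) := ⟨(under_eq_span hp.1 P hpP).symm⟩
  have hPm : P.IsMaximal := hP.isMaximal (by rintro rfl; simp at hpP; exact hp.1.ne_zero hpP)
  have := perfect_residue p (Ideal.span {(p:ℤ)}) rfl
  have h1 := Ideal.card_stabilizer_eq_card_inertia_mul_finrank (G := Gal(L/ℚ))
    (Ideal.span {(p:ℤ)}) P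
  rw [T.inertia_eq_bot hp P hpP, Subgroup.card_bot, one_mul] at h1
  have h2 := Ideal.absNorm_eq_pow_inertiaDeg' P hp.1
  rw [h1, ← Ideal.inertiaDeg'_eq_inertiaDeg (Ideal.span {(p:ℤ)}) P, ← h2]
  rw [Ideal.absNorm_apply, Submodule.cardQuot_apply]

theorem frob_iter {φ : Gal(L/ℚ)} {p : ℕ} (P : Ideal (𝓞 L))
    (h : ∀ x : 𝓞 L, φ • x - x ^ p ∈ P) (j : ℕ) (x : 𝓞 L) : φ ^ j • x - x ^ (p ^ j) ∈ P := by
  induction j generalizing x with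
  | zero => simp
  | succ j ih =>
    have h1 := ih (φ • x)
    have h2 : (φ • x) ^ (p ^ j) - (x ^ p) ^ (p ^ j) ∈ P :=
      P.mem_of_dvd (sub_dvd_pow_sub_pow _ _ _) (h x)
    have h3 := P.add_mem h1 h2
    rw [pow_succ, mul_smul, pow_succ', pow_mul]
    simpa using h3

theorem frob_gen (T : TreeField k N L) {p : ℕ} (hp : AwayFrom k N p)
    (P : Ideal (𝓞 L)) [hP : P.IsPrime] (hpP : (p : 𝓞 L) ∈ P) :
    ∃ φ : Gal(L/ℚ), Subgroup.zpowers φ = MulAction.stabilizer Gal(L/ℚ) P ∧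
      ∀ x : 𝓞 L, φ • x - x ^ p ∈ P := by
  have := T.galois
  obtain ⟨φ, h1, h2⟩ := frob_exists T hp.1 P hpP
  refine ⟨φ, ?_, h2⟩
  have hle : Subgroup.zpowers φ ≤ MulAction.stabilizer Gal(L/ℚ) P := by
    rw [Subgroup.zpowers_le]; exact h1
  apply Subgroup.eq_of_le_of_card_ge hle
  rw [Nat.card_zpowers]
  have hpos : 0 < orderOf φ := orderOf_pos φ
  have h3 : ∀ y : 𝓞 L ⧸ P, y ^ (p ^ orderOf φ) = y := by
    intro y
    obtain ⟨x, rfl⟩ := Ideal.Quotient.mk_surjective y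
    have := frob_iter P h2 (orderOf φ) x
    rw [pow_orderOf_eq_one, one_smul] at this
    rw [← map_pow]
    exact ((Ideal.Quotient.mk_eq_mk_iff_sub_mem _ _).2 this).symm
  have h4 := (card_le_of_pow_eq (Nat.one_lt_pow hpos.ne' hp.1.one_lt) h3).2
  rw [stab_card T hp P hpP] at h4
  exact (Nat.pow_le_pow_iff_right hp.1.one_lt).1 h4

open Classical in
theorem card_gens (T : TreeField k N L) (φ : Gal(L/ℚ)) :
    Nat.card (Subgroup.zpowers φ) ≤
      2 * ((Finset.univ : Finset Gal(L/ℚ)).filter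
        (fun σ => Subgroup.zpowers σ = Subgroup.zpowers φ)).card := by
  classical
  rw [Nat.card_zpowers]
  obtain ⟨m, hm, hm2⟩ := (Nat.dvd_prime_pow Nat.prime_two).1 (orderOf_dvd_of_pow_eq_one (T.pow_eq_one φ))
  have hinj : (((Finset.range (orderOf φ)).filter (fun i => (orderOf φ).Coprime i)).image
      (fun i => φ ^ i)).card = (orderOf φ).totient := by
    rw [Finset.card_image_of_injOn]
    · rfl
    · intro i hi j hj hij
      simp only [Finset.coe_filter, Finset.mem_range, Set.mem_ofPred_eq] at hi hj
      exact pow_injOn_Iio_orderOf hi.1 hj.1 hij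
  have hsub : (((Finset.range (orderOf φ)).filter (fun i => (orderOf φ).Coprime i)).image
      (fun i => φ ^ i)) ⊆ ((Finset.univ : Finset Gal(L/ℚ)).filter
        (fun σ => Subgroup.zpowers σ = Subgroup.zpowers φ)) := by
    intro σ hσ
    simp only [Finset.mem_image, Finset.mem_filter, Finset.mem_range] at hσ
    obtain ⟨i, ⟨_, hi⟩, rfl⟩ := hσ
    simp only [Finset.mem_filter, Finset.mem_univ, true_and]
    apply Subgroup.eq_of_le_of_card_ge
    · rw [Subgroup.zpowers_le]; exact Subgroup.npow_mem_zpowers _ _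
    · rw [Nat.card_zpowers, Nat.card_zpowers, Nat.Coprime.orderOf_pow hi]
  have h := Finset.card_le_card hsub
  rw [hinj] at h
  refine le_trans ?_ (Nat.mul_le_mul_left 2 h)
  rw [hm2]
  rcases m with _ | m
  · simp
  · rw [Nat.totient_prime_pow_succ Nat.prime_two, pow_succ]; omega

end Frob

open NumberField

section Frob2

variable {k : ℤ} {N : ℕ} {L : Type} [Field L] [NumberField L]

open Pointwise

/-- The fixed field of a cyclic subgroup of the Galois group. -/
noncomputable abbrev cycF (σ : Gal(L/ℚ)) : IntermediateField ℚ L :=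
  IntermediateField.fixedField (Subgroup.zpowers σ)

theorem fixed_int (σ : Gal(L/ℚ)) {τ : Gal(L/ℚ)} (hτ : τ ∈ Subgroup.zpowers σ) (x : 𝓞 (cycF σ)) :
    τ • (algebraMap (𝓞 (cycF σ)) (𝓞 L) x) = algebraMap (𝓞 (cycF σ)) (𝓞 L) x := by
  apply RingOfIntegers.ext
  rw [smul_coe_int]
  have h : ((algebraMap (𝓞 (cycF σ)) (𝓞 L) x : 𝓞 L) : L) = ((x : cycF σ) : L) := rfl
  rw [h]
  exact (IntermediateField.mem_fixedField_iff _ _).1 (x : cycF σ).2 τ hτ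

/-- The prime below in the fixed field. -/
noncomputable def belowP (σ : Gal(L/ℚ)) (P : Ideal (𝓞 L)) : Ideal (𝓞 (cycF σ)) :=
  P.comap (algebraMap (𝓞 (cycF σ)) (𝓞 L))

theorem belowP_norm (T : TreeField k N L) {p : ℕ} (hp : AwayFrom k N p)
    (P : Ideal (𝓞 L)) [hP : P.IsPrime] (hpP : (p : 𝓞 L) ∈ P) (σ : Gal(L/ℚ))
    (hσ : Subgroup.zpowers σ = MulAction.stabilizer Gal(L/ℚ) P) :
    (belowP σ P).IsPrime ∧ (belowP σ P) ≠ ⊥ ∧ Ideal.absNorm (belowP σ P) = p := by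
  obtain ⟨φ, h1, h2⟩ := frob_gen T hp P hpP
  have hφ : φ ∈ Subgroup.zpowers σ := by
    rw [hσ, ← h1]; exact Subgroup.mem_zpowers φ
  have hQ : (belowP σ P).IsPrime := Ideal.comap_isPrime _ _
  have hpQ : (p : 𝓞 (cycF σ)) ∈ belowP σ P := by
    simpa [belowP, Ideal.mem_comap] using hpP
  have hbot : belowP σ P ≠ ⊥ := by
    intro hb
    rw [hb] at hpQ
    simp at hpQ
    exact hp.1.ne_zero hpQ
  refine ⟨hQ, hbot, ?_⟩
  have h3 : ∀ y : 𝓞 (cycF σ) ⧸ belowP σ P, y ^ p = y := by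
    intro y
    obtain ⟨x, rfl⟩ := Ideal.Quotient.mk_surjective y
    rw [← map_pow]
    refine ((Ideal.Quotient.mk_eq_mk_iff_sub_mem _ _).2 ?_).symm
    have := h2 (algebraMap (𝓞 (cycF σ)) (𝓞 L) x)
    rw [fixed_int σ hφ] at this
    simpa [belowP, Ideal.mem_comap] using this
  obtain ⟨hfin, hle⟩ := card_le_of_pow_eq hp.1.one_lt h3
  have hcard : Nat.card (𝓞 (cycF σ) ⧸ belowP σ P) = Ideal.absNorm (belowP σ P) := by
    rw [Ideal.absNorm_apply, Submodule.cardQuot_apply]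
  rw [hcard] at hle
  apply le_antisymm hle
  have hpz : ((p : ℕ) : 𝓞 (cycF σ) ⧸ belowP σ P) = 0 := by
    have := Ideal.Quotient.eq_zero_iff_mem.2 hpQ
    simpa using this
  have hord : addOrderOf (1 : 𝓞 (cycF σ) ⧸ belowP σ P) = p := by
    apply addOrderOf_eq_prime (hp := ⟨hp.1⟩)
    · simpa using hpz
    · exact one_ne_zero
  have hdvd := addOrderOf_dvd_natCard (1 : 𝓞 (cycF σ) ⧸ belowP σ P)
  rw [hord, hcard] at hdvd
  refine Nat.le_of_dvd ?_ hdvd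
  rw [← hcard]; exact Nat.card_pos

theorem belowP_le (σ : Gal(L/ℚ)) (P P' : Ideal (𝓞 L)) [hP' : P'.IsPrime]
    (h' : Subgroup.zpowers σ = MulAction.stabilizer Gal(L/ℚ) P')
    (h : belowP σ P = belowP σ P') : P ≤ P' := by
  classical
  intro a ha
  have hfix : ∀ τ ∈ Subgroup.zpowers σ, τ • (∏ g : Subgroup.zpowers σ, (g : Gal(L/ℚ)) • a)
      = ∏ g : Subgroup.zpowers σ, (g : Gal(L/ℚ)) • a := by
    intro τ hτ
    rw [Finset.smul_prod']
    refine Fintype.prod_equiv (Equiv.mulLeft (⟨τ, hτ⟩ : Subgroup.zpowers σ)) _ _ ?_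
    intro g
    simp [mul_smul]
  set b : 𝓞 L := ∏ g : Subgroup.zpowers σ, (g : Gal(L/ℚ)) • a with hb
  have hbE : (b : L) ∈ cycF σ := by
    rw [IntermediateField.mem_fixedField_iff]
    intro τ hτ
    rw [← smul_coe_int, hfix τ hτ]
  have hIsInt : IsIntegral ℤ (⟨(b : L), hbE⟩ : cycF σ) := by
    have h0 : IsIntegral ℤ (b : L) := b.2
    exact (isIntegral_algHom_iff ((cycF σ).val.restrictScalars ℤ) Subtype.val_injective).1 h0
  obtain ⟨c, hc⟩ : ∃ c : 𝓞 (cycF σ), algebraMap (𝓞 (cycF σ)) (𝓞 L) c = b :=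
    ⟨⟨_, hIsInt⟩, RingOfIntegers.ext rfl⟩
  have hbP : b ∈ P := by
    rw [hb, ← Finset.mul_prod_erase _ _ (Finset.mem_univ (1 : Subgroup.zpowers σ))]
    apply P.mul_mem_right
    simpa using ha
  have hcP : c ∈ belowP σ P := by rw [belowP, Ideal.mem_comap, hc]; exact hbP
  rw [h, belowP, Ideal.mem_comap, hc, hb, hP'.prod_mem_iff] at hcP
  obtain ⟨g, _, hg⟩ := hcP
  have hgs : (g : Gal(L/ℚ)) ∈ MulAction.stabilizer Gal(L/ℚ) P' := h' ▸ g.2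
  rw [MulAction.mem_stabilizer_iff] at hgs
  rw [← hgs] at hg
  exact Ideal.smul_mem_pointwise_smul_iff.1 hg

theorem stab_sub_fixQ (T : TreeField k N L) (h0 : k ≠ 0) (h1 : k ≠ 1) (h2 : k ≠ -1)
    {p : ℕ} (hp : AwayFrom k N p)
    (P : Ideal (𝓞 L)) [hP : P.IsPrime] (hpP : (p : 𝓞 L) ∈ P) (a : ℤ)
    (ha : (p : ℤ) ∣ (qF k)^[N] a) (σ : Gal(L/ℚ)) (hσ : σ ∈ MulAction.stabilizer Gal(L/ℚ) P) :
    σ ∈ fixQ L k N := by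
  classical
  have hroot : ∀ α : tR L k N, ∃ r : 𝓞 L, (r : L) = α ∧ (qF k)^[N] r = 0 :=
    fun α => exists_int_tR α.2
  choose R hR1 hR2 using hroot
  have hprod : ∏ α : tR L k N, ((a : 𝓞 L) - R α) = (((qF k)^[N] a : ℤ) : 𝓞 L) := by
    apply RingOfIntegers.ext
    have hh := T.prod_sub h0 h1 h2 le_rfl (a : L)
    rw [← Finset.prod_coe_sort] at hh
    have e1 : ((∏ α : tR L k N, ((a : 𝓞 L) - R α) : 𝓞 L) : L)
        = ∏ α : tR L k N, ((a : L) - α) := by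
      change algebraMap (𝓞 L) L _ = _
      rw [map_prod]
      refine Finset.prod_congr rfl fun α _ => ?_
      rw [map_sub, map_intCast, ← hR1 α]
    rw [e1, hh]
    have e2 := map_qF_iter k (Int.castRingHom L) N a
    simp only [eq_intCast] at e2
    rw [← e2]
    change _ = algebraMap (𝓞 L) L _
    rw [map_intCast]
  have hmem : (((qF k)^[N] a : ℤ) : 𝓞 L) ∈ P := by
    obtain ⟨v, hv⟩ := ha
    rw [hv]; push_cast
    exact P.mul_mem_right _ hpP
  rw [← hprod, hP.prod_mem_iff] at hmem
  obtain ⟨α, _, hα⟩ := hmem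
  rw [mem_fixQ]
  refine ⟨α, α.2, ?_⟩
  have hσα : σ • ((a : 𝓞 L) - R α) ∈ P := by
    rw [MulAction.mem_stabilizer_iff] at hσ
    have := Ideal.smul_mem_pointwise_smul σ _ P hα
    rwa [hσ] at this
  have hz : σ • ((a : ℤ) : 𝓞 L) = a := by
    exact map_intCast (MulSemiringAction.toRingHom Gal(L/ℚ) (𝓞 L) σ) a
  rw [smul_sub, hz] at hσα
  have hd : σ • R α - R α ∈ P := by
    have := P.sub_mem hα hσα
    simpa using this
  have hs : (qF k)^[N] (σ • R α) = 0 := by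
    have := map_qF_iter k (MulSemiringAction.toRingHom Gal(L/ℚ) (𝓞 L) σ) N (R α)
    rw [hR2, map_zero] at this
    exact this.symm
  have := roots_distinct hp P hpP hs (hR2 α) hd
  have := congrArg (fun r : 𝓞 L => (r : L)) this
  simp only [smul_coe_int] at this
  rwa [hR1] at this

end Frob2

open NumberField

theorem away_large (k : ℤ) (N : ℕ) (h0 : k ≠ 0) (h1 : k ≠ 1) (h2 : k ≠ -1) :
    ∃ B : ℕ, ∀ p : ℕ, p.Prime → B < p → AwayFrom k N p := by
  refine ⟨2 + k.natAbs + ∑ i ∈ Finset.range (N + 2), (critB k i).natAbs, fun p hp hB => ?_⟩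
  have key : ∀ w : ℤ, w ≠ 0 → w.natAbs < p → ¬ (p : ℤ) ∣ w := by
    intro w hw hlt hd
    have := Nat.le_of_dvd (Int.natAbs_pos.2 hw) (Int.natCast_dvd.1 hd)
    omega
  refine ⟨hp, by omega, key k h0 (by omega), fun i hi hi2 => ?_⟩
  obtain ⟨j, rfl⟩ : ∃ j, i = j + 1 := ⟨i - 1, by omega⟩
  apply key
  · have := k_critB_ne_zero k h0 h1 h2 j
    exact right_ne_zero_of_mul this
  · have := Finset.single_le_sum (f := fun i => (critB k i).natAbs) (fun _ _ => Nat.zero_le _)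
      (Finset.mem_range.2 (show j + 1 < N + 2 by omega))
    omega

section Count
variable {k : ℤ} {N : ℕ} {L : Type} [Field L] [NumberField L]
open Pointwise

theorem exists_prime_over {p : ℕ} (hp : p.Prime) :
    ∃ P : Ideal (𝓞 L), P.IsPrime ∧ (p : 𝓞 L) ∈ P := by
  have hp0 : (p : ℤ) ≠ 0 := by exact_mod_cast hp.ne_zero
  have hIp : (Ideal.span {(p:ℤ)}).IsPrime :=
    (Ideal.span_singleton_prime hp0).2 (Nat.prime_iff_prime_int.1 hp)
  have hIm : (Ideal.span {(p:ℤ)}).IsMaximal := hIp.isMaximal (by simpa using hp.ne_zero)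
  obtain ⟨P, hPm, hPI⟩ := Ideal.exists_maximal_ideal_liesOver_of_isIntegral (S := 𝓞 L)
    (Ideal.span {(p:ℤ)})
  refine ⟨P, hPm.isPrime, ?_⟩
  have : (p : ℤ) ∈ P.under ℤ := by rw [← hPI.over]; exact Ideal.mem_span_singleton_self _
  simpa [Ideal.mem_comap] using this

open Classical in
/-- The conjugates of an ideal. -/
noncomputable def conjs (P : Ideal (𝓞 L)) : Finset (Ideal (𝓞 L)) :=
  (Finset.univ : Finset Gal(L/ℚ)).image (fun g => g • P)

theorem mem_conjs_prime {P Q : Ideal (𝓞 L)} (hP : P.IsPrime) {p : ℕ} (hpP : (p : 𝓞 L) ∈ P)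
    (hQ : Q ∈ conjs P) : Q.IsPrime ∧ (p : 𝓞 L) ∈ Q := by
  classical
  simp only [conjs, Finset.mem_image, Finset.mem_univ, true_and] at hQ
  obtain ⟨g, rfl⟩ := hQ
  refine ⟨inferInstance, ?_⟩
  have := Ideal.smul_mem_pointwise_smul g _ P hpP
  have hz : g • ((p : ℕ) : 𝓞 L) = p :=
    map_natCast (MulSemiringAction.toRingHom Gal(L/ℚ) (𝓞 L) g) p
  rwa [hz] at this

open Classical in
theorem conjs_sum (T : TreeField k N L) (h0 : k ≠ 0) (h1 : k ≠ 1) (h2 : k ≠ -1) {p : ℕ}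
    (hp : AwayFrom k N p) (P : Ideal (𝓞 L)) (hP : P.IsPrime) (hpP : (p : 𝓞 L) ∈ P) (a : ℤ)
    (ha : (p : ℤ) ∣ (qF k)^[N] a) :
    Fintype.card Gal(L/ℚ) ≤ 2 * ∑ Q ∈ conjs P, ((fixQ L k N).filter
      (fun σ => Subgroup.zpowers σ = MulAction.stabilizer Gal(L/ℚ) Q)).card := by
  have hstep : ∀ Q ∈ conjs P, Nat.card (MulAction.stabilizer Gal(L/ℚ) Q) ≤
      2 * ((fixQ L k N).filter
      (fun σ => Subgroup.zpowers σ = MulAction.stabilizer Gal(L/ℚ) Q)).card := by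
    intro Q hQ
    obtain ⟨hQp, hpQ⟩ := mem_conjs_prime hP hpP hQ
    obtain ⟨φ, hφ, _⟩ := frob_gen T hp Q hpQ
    rw [← hφ]
    refine (card_gens T φ).trans (Nat.mul_le_mul_left 2 (Finset.card_le_card ?_))
    intro σ hσ
    simp only [Finset.mem_filter, Finset.mem_univ, true_and] at hσ ⊢
    refine ⟨stab_sub_fixQ T h0 h1 h2 hp Q hpQ a ha σ ?_, hσ⟩
    rw [← hφ, ← hσ]; exact Subgroup.mem_zpowers σ
  rw [Finset.mul_sum]
  refine le_trans ?_ (Finset.sum_le_sum hstep)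
  have hcard : ∀ Q ∈ conjs P, Nat.card (MulAction.stabilizer Gal(L/ℚ) Q)
      = Nat.card (MulAction.stabilizer Gal(L/ℚ) P) := by
    intro Q hQ
    simp only [conjs, Finset.mem_image, Finset.mem_univ, true_and] at hQ
    obtain ⟨g, rfl⟩ := hQ
    exact (Nat.card_congr (MulAction.stabilizerEquivStabilizer (g := g) rfl).toEquiv).symm
  rw [Finset.sum_congr rfl hcard, Finset.sum_const, smul_eq_mul]
  have horb : (conjs P).card = Nat.card (MulAction.orbit Gal(L/ℚ) P) := by
    have : ((conjs P : Finset _) : Set (Ideal (𝓞 L))) = MulAction.orbit Gal(L/ℚ) P := by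
      ext Q; simp [conjs, MulAction.mem_orbit_iff]
    rw [← this]; simp
  rw [horb, ← Nat.card_prod, Nat.card_congr (MulAction.orbitProdStabilizerEquivGroup Gal(L/ℚ) P),
    Nat.card_eq_fintype_card]

theorem frob_bound (T : TreeField k N L) (h0 : k ≠ 0) (h1 : k ≠ 1) (h2 : k ≠ -1) :
    ∃ x0 : ℕ, ∀ x : ℕ, x0 ≤ x → ∀ S : Finset ℕ,
      (∀ p ∈ S, p.Prime ∧ x < p ∧ p ≤ 2 * x ∧ ∃ a : ℤ, (p : ℤ) ∣ (qF k)^[N] a) →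
      (S.card : ℝ) * Fintype.card Gal(L/ℚ) ≤
        2 * ((fixQ L k N).card * (400 * (x / Real.log x))) := by
  classical
  obtain ⟨B, hB⟩ := away_large k N h0 h1 h2
  have hbt : ∀ σ : Gal(L/ℚ), ∃ x0 : ℕ, ∀ x : ℕ, x0 ≤ x →
      ((primeWin (cycF σ) x).card : ℝ) ≤ 400 * (x / Real.log x) :=
    fun σ => brun_titchmarsh (cycF σ)
  choose X0 hX0 using hbt
  refine ⟨B + ∑ σ, X0 σ, fun x hx S hS => ?_⟩
  have hxσ : ∀ σ, X0 σ ≤ x := fun σ => by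
    have := Finset.single_le_sum (f := X0) (fun _ _ => Nat.zero_le _) (Finset.mem_univ σ)
    omega
  have haw : ∀ p ∈ S, AwayFrom k N p := fun p hp => hB p (hS p hp).1 (by
    have := (hS p hp).2.1; omega)
  have hch : ∀ p : ℕ, ∃ P : Ideal (𝓞 L), p.Prime → P.IsPrime ∧ (p : 𝓞 L) ∈ P := by
    intro p
    by_cases hp : p.Prime
    · obtain ⟨P, hP⟩ := exists_prime_over (L := L) hp
      exact ⟨P, fun _ => hP⟩
    · exact ⟨⊥, fun h => absurd h hp⟩
  choose P hP using hch
  have hlow : S.card * Fintype.card Gal(L/ℚ) ≤ 2 * ∑ p ∈ S, ∑ Q ∈ conjs (P p),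
      ((fixQ L k N).filter
        (fun σ => Subgroup.zpowers σ = MulAction.stabilizer Gal(L/ℚ) Q)).card := by
    rw [Finset.mul_sum, ← smul_eq_mul, ← Finset.sum_const]
    refine Finset.sum_le_sum fun p hp => ?_
    obtain ⟨a, ha⟩ := (hS p hp).2.2.2
    obtain ⟨hP1, hP2⟩ := hP p (hS p hp).1
    exact conjs_sum T h0 h1 h2 (haw p hp) (P p) hP1 hP2 a ha
  have hswap : ∑ p ∈ S, ∑ Q ∈ conjs (P p),
      ((fixQ L k N).filter
        (fun σ => Subgroup.zpowers σ = MulAction.stabilizer Gal(L/ℚ) Q)).card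
      = ∑ σ ∈ fixQ L k N, (S.sigma (fun p => (conjs (P p)).filter
        (fun Q => Subgroup.zpowers σ = MulAction.stabilizer Gal(L/ℚ) Q))).card := by
    simp_rw [Finset.card_sigma, Finset.card_filter]
    rw [Finset.sum_comm]
    refine Finset.sum_congr rfl fun p _ => ?_
    rw [Finset.sum_comm]
  have hup : ∀ σ ∈ fixQ L k N, (S.sigma (fun p => (conjs (P p)).filter
        (fun Q => Subgroup.zpowers σ = MulAction.stabilizer Gal(L/ℚ) Q))).card
        ≤ (primeWin (cycF σ) x).card := by
    intro σ _
    have hmem : ∀ z ∈ S.sigma (fun p => (conjs (P p)).filter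
        (fun Q => Subgroup.zpowers σ = MulAction.stabilizer Gal(L/ℚ) Q)),
        z.1 ∈ S ∧ z.2.IsPrime ∧ ((z.1 : ℕ) : 𝓞 L) ∈ z.2 ∧
        Subgroup.zpowers σ = MulAction.stabilizer Gal(L/ℚ) z.2 := by
      rintro ⟨p, Q⟩ hz
      simp only [Finset.mem_sigma, Finset.mem_filter] at hz
      obtain ⟨hP1, hP2⟩ := hP p (hS p hz.1).1
      obtain ⟨hQ1, hQ2⟩ := mem_conjs_prime hP1 hP2 hz.2.1
      exact ⟨hz.1, hQ1, hQ2, hz.2.2⟩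
    apply Finset.card_le_card_of_injOn (fun z => belowP σ z.2)
    · intro z hz
      obtain ⟨z1, z2, z3, z4⟩ := hmem z hz
      obtain ⟨b1, b2, b3⟩ := belowP_norm T (haw _ z1) z.2 z3 σ z4
      have := mem_primeWin (K := cycF σ) (x := x) (P := belowP σ z.2)
      refine Finset.mem_coe.2 (this.2 ⟨b1, b2, ?_⟩)
      rw [b3]
      exact ⟨(hS _ z1).2.1, (hS _ z1).2.2.1⟩
    · intro z hz w hw hzw
      obtain ⟨z1, z2, z3, z4⟩ := hmem z hz
      obtain ⟨w1, w2, w3, w4⟩ := hmem w hw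
      obtain ⟨b1, b2, b3⟩ := belowP_norm T (haw _ z1) z.2 z3 σ z4
      obtain ⟨c1, c2, c3⟩ := belowP_norm T (haw _ w1) w.2 w3 σ w4
      simp only at hzw
      have e1 : z.1 = w.1 := by rw [← b3, ← c3, hzw]
      have e2 : z.2 = w.2 := le_antisymm (belowP_le σ _ _ w4 hzw) (belowP_le σ _ _ z4 hzw.symm)
      exact Sigma.ext e1 (heq_of_eq e2)
  have h3 : ((∑ σ ∈ fixQ L k N, (S.sigma (fun p => (conjs (P p)).filter
        (fun Q => Subgroup.zpowers σ = MulAction.stabilizer Gal(L/ℚ) Q))).card : ℕ) : ℝ)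
        ≤ (fixQ L k N).card * (400 * (x / Real.log x)) := by
    rw [Nat.cast_sum, ← nsmul_eq_mul, ← Finset.sum_const]
    refine Finset.sum_le_sum fun σ hσ => ?_
    exact le_trans (by exact_mod_cast hup σ hσ) (hX0 σ x (hxσ σ))
  rw [hswap] at hlow
  have h4 : ((S.card * Fintype.card Gal(L/ℚ) : ℕ) : ℝ) ≤ _ := Nat.cast_le.2 hlow
  push_cast at h4 h3
  linarith

end Count

theorem half_step (x : ℕ) (hx : 64 ≤ x) :
    3 * ((((x + 1) / 2 : ℕ) : ℝ) / Real.log ((x + 1) / 2 : ℕ)) ≤ 2 * ((x : ℝ) / Real.log x) := by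
  set y : ℕ := (x + 1) / 2 with hy
  have hy1 : (y : ℝ) ≤ (x + 1) / 2 := by
    have : 2 * y ≤ x + 1 := by omega
    have : (2 : ℝ) * y ≤ x + 1 := by exact_mod_cast this
    linarith
  have hy2 : (x : ℝ) / 2 ≤ y := by
    have : x ≤ 2 * y := by omega
    have : (x : ℝ) ≤ 2 * y := by exact_mod_cast this
    linarith
  have hxr : (64 : ℝ) ≤ x := by exact_mod_cast hx
  have hl : Real.log x - Real.log 2 ≤ Real.log y := by
    rw [← Real.log_div (by linarith) (by norm_num)]
    exact Real.log_le_log (by linarith) hy2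
  have hl2 : 6 * Real.log 2 ≤ Real.log x := by
    have : Real.log ((2 : ℝ) ^ 6) ≤ Real.log x := Real.log_le_log (by norm_num) (by linarith)
    rw [Real.log_pow] at this
    exact_mod_cast this
  have h2 : 0 < Real.log 2 := Real.log_pos (by norm_num)
  have hlx : 0 < Real.log x := by linarith
  have hly : 5 / 6 * Real.log x ≤ Real.log y := by linarith
  have hly0 : 0 < Real.log y := by linarith
  rw [← mul_div_assoc, ← mul_div_assoc, div_le_div_iff₀ hly0 hlx]
  have e1 : 3 * (y : ℝ) * Real.log x ≤ (5 / 3 * x) * Real.log x := by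
    apply mul_le_mul_of_nonneg_right _ hlx.le
    linarith
  have e2 : 2 * (x : ℝ) * (5 / 6 * Real.log x) ≤ 2 * x * Real.log y :=
    mul_le_mul_of_nonneg_left hly (by linarith)
  linarith

theorem dyadic_sum (c : ℕ → ℕ) (hmono : Monotone c) (ε : ℝ) (hε : 0 ≤ ε) (x0 : ℕ)
    (h : ∀ x, x0 ≤ x → (c (2 * x) : ℝ) ≤ c x + ε * (x / Real.log x)) :
    ∃ M : ℝ, ∀ x : ℕ, (c x : ℝ) ≤ M + 2 * ε * (x / Real.log x) := by
  refine ⟨c (2 * x0 + 64), fun x => ?_⟩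
  induction x using Nat.strong_induction_on with
  | _ x ih =>
    by_cases hx : x < 2 * x0 + 64
    · have h1 : (c x : ℝ) ≤ c (2 * x0 + 64) := by exact_mod_cast hmono hx.le
      have h2 : 0 ≤ (x : ℝ) / Real.log x := div_nonneg (by positivity) (Real.log_natCast_nonneg x)
      nlinarith [mul_nonneg hε h2]
    · push Not at hx
      have h1 := ih ((x + 1) / 2) (by omega)
      have h2 := h ((x + 1) / 2) (by omega)
      have h3 := half_step x (by omega)
      have h4 : (c x : ℝ) ≤ c (2 * ((x + 1) / 2)) := by
        exact_mod_cast hmono (by omega)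
      have h5 := mul_le_mul_of_nonneg_left h3 hε
      linarith

theorem primeCount_eq_pi (x : ℕ) : primeCount {p | p.Prime} x = Nat.primeCounting x := by
  classical
  rw [primeCount, Nat.primeCounting, Nat.primeCounting', Nat.count_eq_card_filter_range]
  congr 1
  ext p
  simp

theorem pi_lower (x : ℕ) (hx : 64 ≤ x) :
    (x : ℝ) / Real.log x ≤ 4 * primeCount {p | p.Prime} x := by
  rw [primeCount_eq_pi]
  have h := Chebyshev.pi_ge x
  have hxr : (64 : ℝ) ≤ x := by exact_mod_cast hx
  have hlx : 0 < Real.log x := Real.log_pos (by linarith)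
  have h2 := Real.log_two_gt_d9
  have h2' := Real.log_two_lt_d9
  have h3 : Real.log (x + 1) ≤ (x + 1) / 8 - 1 + 3 * Real.log 2 := by
    have e := Real.log_le_sub_one_of_pos (x := ((x : ℝ) + 1) / 8) (by linarith)
    rw [Real.log_div (by linarith) (by norm_num), show (8 : ℝ) = 2 ^ 3 by norm_num,
      Real.log_pow] at e
    push_cast at e
    linarith
  have h4 : (x : ℝ) / 4 ≤ x * Real.log 2 - Real.log (x + 1) := by
    have : (x : ℝ) * (1 / 2) ≤ x * Real.log 2 :=
      mul_le_mul_of_nonneg_left (by linarith) (by linarith)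
    linarith
  have h5 := div_le_div_of_nonneg_right h4 hlx.le
  have h6 : (x : ℝ) / 4 / Real.log x = x / Real.log x / 4 := by ring
  linarith

theorem density_of_windows (S : Set ℕ)
    (hS : ∀ ε : ℝ, 0 < ε → ∃ x0 : ℕ, ∀ x : ℕ, x0 ≤ x → ∀ F : Finset ℕ,
      (∀ p ∈ F, p ∈ S ∧ x < p ∧ p ≤ 2 * x) → (F.card : ℝ) ≤ ε * (x / Real.log x)) :
    HasPrimeDensityZero S := by
  classical
  have hmono : Monotone (primeCount S) := by
    intro a b hab
    unfold primeCount
    exact Finset.card_le_card (Finset.filter_subset_filter _ (Finset.range_mono (by omega)))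
  unfold HasPrimeDensityZero
  rw [Metric.tendsto_atTop]
  intro δ hδ
  obtain ⟨x0, hx0⟩ := hS (δ / 16) (by linarith)
  have hwin : ∀ x, x0 ≤ x →
      (primeCount S (2 * x) : ℝ) ≤ primeCount S x + δ / 16 * (x / Real.log x) := by
    intro x hx
    have h1 := hx0 x hx ((Finset.range (2 * x + 1)).filter (fun p => p ∈ S ∧ x < p)) (by
      intro p hp
      simp only [Finset.mem_filter, Finset.mem_range] at hp
      exact ⟨hp.2.1, hp.2.2, by omega⟩)
    have h2 : primeCount S (2 * x) ≤ primeCount S x +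
        ((Finset.range (2 * x + 1)).filter (fun p => p ∈ S ∧ x < p)).card := by
      unfold primeCount
      refine le_trans (Finset.card_le_card ?_) (Finset.card_union_le _ _)
      intro p hp
      simp only [Finset.mem_filter, Finset.mem_range, Finset.mem_union] at hp ⊢
      by_cases hpx : x < p
      · right; exact ⟨hp.1, hp.2, hpx⟩
      · left; exact ⟨by omega, hp.2⟩
    have h3 : (primeCount S (2 * x) : ℝ) ≤ primeCount S x +
        ((Finset.range (2 * x + 1)).filter (fun p => p ∈ S ∧ x < p)).card := by
      exact_mod_cast h2
    linarith
  obtain ⟨M, hM⟩ := dyadic_sum _ hmono (δ / 16) (by linarith) x0 hwin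
  have hlim : ∀ᶠ x : ℕ in atTop, 16 * (|M| + 1) * Real.log x ≤ δ * x := by
    have h := Real.isLittleO_log_id_atTop.def (c := δ / (16 * (|M| + 1))) (by positivity)
    have h' := tendsto_natCast_atTop_atTop (R := ℝ) |>.eventually h
    filter_upwards [h', eventually_ge_atTop 1] with x hx hx1
    have hl : 0 ≤ Real.log x := Real.log_natCast_nonneg x
    rw [id, Real.norm_of_nonneg hl, Real.norm_of_nonneg (by positivity), div_mul_eq_mul_div,
      le_div_iff₀ (by positivity)] at hx
    linarith
  obtain ⟨x1, hx1⟩ := eventually_atTop.1 hlim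
  refine ⟨x1 + 64, fun x hx => ?_⟩
  have hp := pi_lower x (by omega)
  have hxr : (64 : ℝ) ≤ x := by
    have : 64 ≤ x := by omega
    exact_mod_cast this
  have hlx : 0 < Real.log x := Real.log_pos (by linarith)
  have hq : 0 < (x : ℝ) / Real.log x := by positivity
  have hpi : (0 : ℝ) < primeCount {p | p.Prime} x := by linarith
  have hl := hx1 x (by omega)
  have hl' : 16 * (|M| + 1) ≤ δ * (x / Real.log x) := by
    rw [← mul_div_assoc, le_div_iff₀ hlx]; exact hl
  rw [Real.dist_eq, sub_zero, abs_of_nonneg (by positivity), div_lt_iff₀ hpi]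
  have hc := hM x
  have hMa := le_abs_self M
  have hδp := mul_le_mul_of_nonneg_left hp hδ.le
  have hδq : 0 < δ * (x / Real.log x) := by positivity
  linarith

theorem orbit_eval (k : ℤ) :
    (fun x => Polynomial.eval x (X ^ 2 - 2 * C k * X + C k : Polynomial ℤ)) = qF k := by
  funext x
  simp [qF]

theorem zero_case_dvd {p : ℕ} (hp : p.Prime) (a : ℤ) (n : ℕ) (h : (p : ℤ) ∣ (qF (0 : ℤ))^[n] a) :
    (p : ℤ) ∣ a := by
  induction n with
  | zero => exact h
  | succ n ih =>
    apply ih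
    rw [Function.iterate_succ_apply'] at h
    simp only [qF] at h
    have h' : (p : ℤ) ∣ ((qF (0 : ℤ))^[n] a) ^ 2 := by simpa using h
    exact (Nat.prime_iff_prime_int.1 hp).dvd_of_dvd_pow h'

theorem zero_case_zero (n : ℕ) : (qF (0 : ℤ))^[n] (0 : ℤ) = 0 := by
  apply Function.iterate_fixed
  simp [qF]

theorem nat_le_of_dvd {p : ℕ} {w : ℤ} (hw : w ≠ 0) (h : (p : ℤ) ∣ w) : p ≤ w.natAbs :=
  Nat.le_of_dvd (Int.natAbs_pos.2 hw) (Int.natCast_dvd.1 h)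

theorem windows_zero (a₀ : ℤ) (ε : ℝ) (hε : 0 < ε) :
    ∃ x0 : ℕ, ∀ x : ℕ, x0 ≤ x → ∀ F : Finset ℕ,
      (∀ p ∈ F, (p.Prime ∧ ∃ n : ℕ, (qF (0 : ℤ))^[n] a₀ ≠ 0 ∧ (p : ℤ) ∣ (qF (0 : ℤ))^[n] a₀)
        ∧ x < p ∧ p ≤ 2 * x) → (F.card : ℝ) ≤ ε * (x / Real.log x) := by
  refine ⟨a₀.natAbs, fun x hx F hF => ?_⟩
  have : F = ∅ := by
    rw [Finset.eq_empty_iff_forall_notMem]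
    intro p hp
    obtain ⟨⟨hpp, n, hn, hd⟩, hlt, _⟩ := hF p hp
    have h0 : a₀ ≠ 0 := by
      rintro rfl
      exact hn (zero_case_zero n)
    have := nat_le_of_dvd h0 (zero_case_dvd hpp a₀ n hd)
    omega
  rw [this, Finset.card_empty, Nat.cast_zero]
  exact mul_nonneg hε.le (div_nonneg (by positivity) (Real.log_natCast_nonneg x))

theorem windows_main (k : ℤ) (h0 : k ≠ 0) (h1 : k ≠ 1) (h2 : k ≠ -1) (a₀ : ℤ) (ε : ℝ)
    (hε : 0 < ε) :
    ∃ x0 : ℕ, ∀ x : ℕ, x0 ≤ x → ∀ F : Finset ℕ,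
      (∀ p ∈ F, (p.Prime ∧ ∃ n : ℕ, (qF k)^[n] a₀ ≠ 0 ∧ (p : ℤ) ∣ (qF k)^[n] a₀)
        ∧ x < p ∧ p ≤ 2 * x) → (F.card : ℝ) ≤ ε * (x / Real.log x) := by
  obtain ⟨N, hN⟩ := tree_small k h0 h1 h2 (ε / 800) (by positivity)
  obtain ⟨L, _, _, T⟩ := exists_treeField k N
  have hsmall := hN L T
  obtain ⟨x0, hx0⟩ := frob_bound T h0 h1 h2
  refine ⟨x0 + ∑ i ∈ Finset.range N, ((qF k)^[i] a₀).natAbs, fun x hx F hF => ?_⟩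
  have hb := hx0 x (by omega) F (by
    intro p hp
    obtain ⟨⟨hpp, n, hn, hd⟩, hlt, hle⟩ := hF p hp
    refine ⟨hpp, hlt, hle, ?_⟩
    by_cases hnN : n < N
    · exfalso
      have e1 := nat_le_of_dvd hn hd
      have e2 := Finset.single_le_sum (f := fun i => ((qF k)^[i] a₀).natAbs)
        (fun _ _ => Nat.zero_le _) (Finset.mem_range.2 hnN)
      omega
    · refine ⟨(qF k)^[n - N] a₀, ?_⟩
      rw [← Function.iterate_add_apply, Nat.add_sub_cancel' (by omega)]
      exact hd)
  have hG : (0 : ℝ) < Fintype.card Gal(L/ℚ) := by exact_mod_cast Fintype.card_pos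
  have hq : (0 : ℝ) ≤ 400 * ((x : ℝ) / Real.log x) :=
    mul_nonneg (by norm_num) (div_nonneg (by positivity) (Real.log_natCast_nonneg x))
  have h3 := mul_le_mul_of_nonneg_right hsmall hq
  have h4 : (F.card : ℝ) * Fintype.card Gal(L/ℚ)
      ≤ (ε * (x / Real.log x)) * Fintype.card Gal(L/ℚ) := by
    refine hb.trans ?_
    calc _ ≤ 2 * (ε / 800 * Fintype.card Gal(L/ℚ) * (400 * ((x : ℝ) / Real.log x))) := by
          linarith
      _ = _ := by ring
  exact le_of_mul_le_mul_right h4 hG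

theorem density_zero_of_X_sq_sub_two_kX_add_k (k : ℤ) (hk1 : k ≠ 1) (hk1' : k ≠ -1)
    (a₀ : ℤ) :
    HasPrimeDensityZero (orbitPrimes (X ^ 2 - 2 * C k * X + C k) a₀) := by
  apply density_of_windows
  intro ε hε
  simp only [orbitPrimes, orbit_eval, Set.mem_ofPred_eq]
  by_cases h0 : k = 0
  · subst h0
    exact windows_zero a₀ ε hε
  · exact windows_main k h0 hk1 hk1' a₀ ε hε
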